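/- Let f : S² → ℝ be a smooth nonzero function with ∫_{S²} f dv_{g₀} = 0, let g_t = (1+tf)²·g₀ be defined for |t| < a. Then there exists α ∈ (0,a) such that for all t with |t| < α, the systole satisfies sys(S², g_t) ≤ 2π. -/

import Mathlib

open scoped Manifold RealInnerProductSpace
open MeasureTheory Real

noncomputable section

/-- The ambient Euclidean space `ℝ³`. -/
abbrev E3 : Type := EuclideanSpace ℝ (Fin 3)

instance : Fact (Module.finrank ℝ E3 = 2 + 1) := ⟨finrank_euclideanSpace_fin⟩

/-- The unit 2-sphere `S² ⊂ ℝ³`. -/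
abbrev Sph : Type := Metric.sphere (0 : E3) 1

/-- A function on the sphere is smooth (as a map of smooth manifolds). -/
def SmoothSph (f : Sph → ℝ) : Prop := ContMDiff (𝓡 2) 𝓘(ℝ, ℝ) (⊤ : ℕ∞) f

/-- The round metric tensor `g₀` on `S²` (restriction of the ambient inner product). -/
def g0 : Sph → E3 → E3 → ℝ := fun _ u v => ⟪u, v⟫

/-- The conformal metric tensor `Φ · g₀` (length element `√Φ` times that of `g₀`). -/
def confMetric (Φ : Sph → ℝ) : Sph → E3 → E3 → ℝ := fun x u v => Φ x * ⟪u, v⟫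

/-- Velocity of a curve on the sphere, as a vector of the ambient `ℝ³`. -/
def cvel (c : ℝ → Sph) (t : ℝ) : E3 := deriv (fun s => (c s : E3)) t

/-- Speed of a curve at time `t` with respect to a metric tensor `g`. -/
def gspeed (g : Sph → E3 → E3 → ℝ) (c : ℝ → Sph) (t : ℝ) : ℝ :=
  Real.sqrt (g (c t) (cvel c t) (cvel c t))

/-- Length of the curve `c` over `[a, b]` with respect to `g`. -/
def glength (g : Sph → E3 → E3 → ℝ) (c : ℝ → Sph) (a b : ℝ) : ℝ :=
  ∫ t in a..b, gspeed g c t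

/-- A `C¹` curve on the sphere. -/
def IsC1Curve (c : ℝ → Sph) : Prop := ContDiff ℝ 1 (fun t => (c t : E3))

/-- The Riemannian distance associated with the metric tensor `g`: the infimum of
lengths of `C¹` curves joining the two points. -/
def gdist (g : Sph → E3 → E3 → ℝ) (x y : Sph) : ℝ :=
  sInf {L | ∃ c : ℝ → Sph, IsC1Curve c ∧ c 0 = x ∧ c 1 = y ∧ L = glength g c 0 1}

/-- A (complete, unit-speed) geodesic of `g`: a `C¹` curve with unit speed which is
locally distance-minimizing. -/
def IsGeodesic (g : Sph → E3 → E3 → ℝ) (c : ℝ → Sph) : Prop :=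
  IsC1Curve c ∧ (∀ t, gspeed g c t = 1) ∧
    ∀ t : ℝ, ∃ ε > 0, ∀ s₁ s₂ : ℝ, t - ε ≤ s₁ → s₁ ≤ s₂ → s₂ ≤ t + ε →
      gdist g (c s₁) (c s₂) = s₂ - s₁

/-- A closed geodesic of length `L` (not reduced to a point): a unit-speed geodesic,
periodic with period `L > 0`. -/
def IsClosedGeodesic (g : Sph → E3 → E3 → ℝ) (c : ℝ → Sph) (L : ℝ) : Prop :=
  0 < L ∧ Function.Periodic c L ∧ IsGeodesic g c

/-- The systole: the smallest length of a closed geodesic not reduced to a point. -/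
def systole (g : Sph → E3 → E3 → ℝ) : ℝ :=
  sInf {L | ∃ c : ℝ → Sph, IsClosedGeodesic g c L}

/-- Orthogonal projection of an ambient vector onto the tangent plane at `x ∈ S²`. -/
def tproj (x : Sph) (v : E3) : E3 := v - ⟪(x : E3), v⟫ • (x : E3)

/-- Auxiliary extension of `g` to all of `ℝ³`, equal to `g` on the tangent plane and to the
ambient inner product in the normal direction; its determinant computes the area density. -/
def ghat (g : Sph → E3 → E3 → ℝ) (x : Sph) (u v : E3) : ℝ :=
  g x (tproj x u) (tproj x v) + ⟪(x : E3), u⟫ * ⟪(x : E3), v⟫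

/-- The Riemannian area density of `g` with respect to the round metric:
`√det` of `g` on the tangent plane. -/
def areaDensity (g : Sph → E3 → E3 → ℝ) (x : Sph) : ℝ :=
  Real.sqrt (Matrix.det (Matrix.of fun i j : Fin 3 =>
    ghat g x (EuclideanSpace.single i 1) (EuclideanSpace.single j 1)))

/-- The Riemannian area of `(S², g)`, computed against the round area measure
(the 2-dimensional Hausdorff measure of the sphere). -/
def garea (g : Sph → E3 → E3 → ℝ) : ℝ :=
  ∫ x, areaDensity g x ∂(μH[2] : Measure Sph)

/-- The systolic area `𝔖(S², g) = Area(S², g) / sys(S², g)²`. -/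
def systolicArea (g : Sph → E3 → E3 → ℝ) : ℝ := garea g / (systole g) ^ 2

/-- `g` is a smooth Riemannian metric on `S²` (a smooth field of symmetric bilinear forms,
positive definite on tangent planes). -/
structure IsRiemannMetricS2 (g : Sph → E3 → E3 → ℝ) : Prop where
  symm : ∀ x u v, g x u v = g x v u
  add_left : ∀ x u v w, g x (u + v) w = g x u w + g x v w
  smul_left : ∀ (x : Sph) (r : ℝ) u v, g x (r • u) v = r * g x u v
  posdef : ∀ (x : Sph) (v : E3), ⟪(x : E3), v⟫ = 0 → v ≠ 0 → 0 < g x v v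
  smooth : ∀ u v : E3, ContMDiff (𝓡 2) 𝓘(ℝ, ℝ) (⊤ : ℕ∞) (fun x => g x u v)

/-- The circle `γ(u, s)`: intersection of `S²` with the plane orthogonal to `u` at distance `s`
from the origin (`s = 0` gives the great circle `γ(u)`). -/
def circleAt (u : Sph) (s : ℝ) : Set Sph := {x | ⟪(u : E3), (x : E3)⟫ = s}

/-- The great circle `γ(u)` orthogonal to `u`. -/
def greatCircle (u : Sph) : Set Sph := circleAt u 0

/-- The integral `∫_{γ(u)} h dl` of `h` along the great circle `γ(u)` with respect to
`g₀`-arc length (1-dimensional Hausdorff measure). -/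
def lineInt (h : Sph → ℝ) (u : Sph) : ℝ :=
  ∫ x in greatCircle u, h x ∂(μH[1] : Measure Sph)

/-- Length of the circle `γ(u, s)` with respect to the conformal metric `Φ · g₀`. -/
def circleLen (Φ : Sph → ℝ) (u : Sph) (s : ℝ) : ℝ :=
  ∫ x in circleAt u s, Real.sqrt (Φ x) ∂(μH[1] : Measure Sph)

/-- The antipodal map of `S²`. -/
def antip (x : Sph) : Sph :=
  ⟨-(x : E3), by
    rw [mem_sphere_zero_iff_norm, norm_neg, ← mem_sphere_zero_iff_norm]; exact x.2⟩

/-- A fundamental domain for the antipodal action on `S²` (an open hemisphere together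
with half of its boundary great circle): `ℝP²` is obtained by gluing. -/
def hemiDomain : Set Sph :=
  {x | 0 < (x : E3) 2 ∨ ((x : E3) 2 = 0 ∧ (0 < (x : E3) 1 ∨ ((x : E3) 1 = 0 ∧ 0 < (x : E3) 0)))}

/-- The area of `(ℝP², g̃)`, where `g̃` is induced by an antipodally invariant metric `g` on `S²`:
the area of a fundamental domain of the antipodal action. -/
def areaRP2 (g : Sph → E3 → E3 → ℝ) : ℝ :=
  ∫ x in hemiDomain, areaDensity g x ∂(μH[2] : Measure Sph)

/-- The systole of `(ℝP², g̃)`: the smallest length of a noncontractible closed curve of `ℝP²`,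
i.e. the infimum of `g`-lengths of curves of `S²` joining a point to its antipode
(such curves are exactly the lifts of noncontractible loops). -/
def sysRP2 (g : Sph → E3 → E3 → ℝ) : ℝ :=
  sInf {L | ∃ c : ℝ → Sph, IsC1Curve c ∧ c 1 = antip (c 0) ∧ L = glength g c 0 1}

/-- The systolic area of `(ℝP², g̃)`. -/
def systolicAreaRP2 (g : Sph → E3 → E3 → ℝ) : ℝ := areaRP2 g / (sysRP2 g) ^ 2

noncomputable section

open scoped ContDiff

theorem norm_inv_smul_mem (x : E3) (h : x ≠ 0) : (‖x‖⁻¹ • x) ∈ Metric.sphere (0 : E3) 1 := by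
  rw [mem_sphere_zero_iff_norm, norm_smul, norm_inv, norm_norm]
  exact inv_mul_cancel₀ (norm_ne_zero_iff.mpr h)

theorem sph_norm (x : Sph) : ‖(x : E3)‖ = 1 := mem_sphere_zero_iff_norm.mp x.2

/-- A base point of the sphere. -/
def sphBase : Sph := ⟨EuclideanSpace.single 0 1, by simp⟩

open Classical in
/-- Radial projection onto the sphere. -/
def toSph (x : E3) : Sph :=
  if h : x ≠ 0 then ⟨‖x‖⁻¹ • x, norm_inv_smul_mem x h⟩ else sphBase

theorem toSph_coe {x : E3} (h : x ≠ 0) : (toSph x : E3) = ‖x‖⁻¹ • x := by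
  simp [toSph, h]

theorem toSph_sph (x : Sph) : toSph (x : E3) = x := by
  have h : (x : E3) ≠ 0 := by
    intro h; have := sph_norm x; rw [h] at this; simp at this
  apply Subtype.ext
  rw [toSph_coe h, sph_norm]; simp

/-- Degree-zero homogeneous extension of a function on the sphere. -/
def fext (f : Sph → ℝ) (x : E3) : ℝ := f (toSph x)

theorem fext_sph (f : Sph → ℝ) (x : Sph) : fext f x = f x := by
  simp [fext, toSph_sph]

theorem fext_smul (f : Sph → ℝ) (r : ℝ) (hr : 0 < r) (x : E3) : fext f (r • x) = fext f x := by
  by_cases hx : x = 0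
  · simp [hx]
  · unfold fext
    congr 1
    apply Subtype.ext
    rw [toSph_coe hx, toSph_coe (smul_ne_zero hr.ne' hx), norm_smul, Real.norm_of_nonneg hr.le,
      smul_smul]
    congr 1
    field_simp

theorem fext_contDiffAt (f : Sph → ℝ) (hf : SmoothSph f) (x₀ : E3) (h : x₀ ≠ 0) :
    ContDiffAt ℝ ∞ (fext f) x₀ := by
  have hpos : 0 < ‖x₀‖ := norm_pos_iff.mpr h
  let b : ContDiffBump (x₀ : E3) := ⟨‖x₀‖ / 4, ‖x₀‖ / 2, by positivity, by linarith⟩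
  let y : E3 → E3 := fun x => x₀ + b x • (x - x₀)
  have hy : ∀ x, y x ≠ 0 := by
    intro x hx
    have h1 : ‖b x • (x - x₀)‖ < ‖x₀‖ := by
      rw [norm_smul, Real.norm_of_nonneg b.nonneg]
      by_cases hd : dist x x₀ < ‖x₀‖ / 2
      · have := b.le_one (x := x)
        rw [dist_eq_norm] at hd
        nlinarith [norm_nonneg (x - x₀), b.nonneg (x := x)]
      · have : b x = 0 := b.zero_of_le_dist (by push Not at hd; exact hd)
        rw [this]; simpa using hpos
    have h2 : b x • (x - x₀) = - x₀ := by
      have : x₀ + b x • (x - x₀) = 0 := hx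
      exact (neg_eq_of_add_eq_zero_right this).symm
    rw [h2, norm_neg] at h1
    exact lt_irrefl _ h1
  have hys : ContDiff ℝ ∞ y := by
    have : ContDiff ℝ ∞ (fun x => b x) := b.contDiff
    fun_prop
  have hns : ContDiff ℝ ∞ (fun x => ‖y x‖⁻¹ • y x) :=
    ((hys.norm ℝ hy).inv (fun x => norm_ne_zero_iff.mpr (hy x))).smul hys
  have hm := hns.contMDiff.codRestrict_sphere (n := 2)
    (fun x => norm_inv_smul_mem (y x) (hy x))
  have hc := (ContMDiff.comp (I := 𝓘(ℝ, E3)) (I' := 𝓡 2) hf hm).contDiff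
  have he : fext f =ᶠ[nhds x₀] (f ∘ fun x => (⟨‖y x‖⁻¹ • y x, norm_inv_smul_mem (y x) (hy x)⟩ : Sph)) := by
    filter_upwards [Metric.ball_mem_nhds x₀ (show 0 < ‖x₀‖ / 4 by positivity)] with x hx
    have hb : b x = 1 := b.one_of_mem_closedBall (Metric.ball_subset_closedBall hx)
    have hyx : y x = x := by simp [y, hb]
    have hx0 : x ≠ 0 := by rw [← hyx]; exact hy x
    simp only [fext, Function.comp]
    congr 1
    apply Subtype.ext
    rw [toSph_coe hx0]
    simp [hyx]
  exact hc.contDiffAt.congr_of_eventuallyEq he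

end

noncomputable section

open scoped ContDiff

theorem fderiv_lip_aux {W : Type*} [NormedAddCommGroup W] [NormedSpace ℝ W]
    (Q : W → ℝ) (hd1 : Differentiable ℝ (fderiv ℝ Q)) (C : ℝ)
    (h2 : ∀ x, ‖fderiv ℝ (fderiv ℝ Q) x‖ ≤ C) :
    ∀ x y, ‖fderiv ℝ Q x - fderiv ℝ Q y‖ ≤ C * ‖x - y‖ := fun _ _ =>
    Convex.norm_image_sub_le_of_norm_fderiv_le (𝕜 := ℝ) (s := Set.univ) (fun x _ => hd1 x)
      (fun x _ => (h2 x)) convex_univ (Set.mem_univ _) (Set.mem_univ _)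

theorem fderiv_bdd_aux {W F : Type*} [NormedAddCommGroup W] [NormedSpace ℝ W]
    [NormedAddCommGroup F] [NormedSpace ℝ F]
    (Q : W → F) (hQ : ContDiff ℝ ∞ Q) (hc : HasCompactSupport Q) :
    ∃ C : ℝ, ∀ x, ‖fderiv ℝ Q x‖ ≤ C :=
  (hQ.fderiv_right (m := ∞) (by simp)).continuous.bounded_above_of_compact_support
    (hc.fderiv (𝕜 := ℝ))

theorem taylor_aux {W : Type*} [NormedAddCommGroup W] [NormedSpace ℝ W]
    (Q : W → ℝ) (hd : Differentiable ℝ Q) (C : ℝ)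
    (hlip : ∀ x y, ‖fderiv ℝ Q x - fderiv ℝ Q y‖ ≤ C * ‖x - y‖) (hC : 0 ≤ C) (x y : W) :
    |Q y - Q x - fderiv ℝ Q x (y - x)| ≤ C * ‖y - x‖ ^ 2 := by
  have := Convex.norm_image_sub_le_of_norm_fderiv_le' (𝕜 := ℝ) (f := Q) (φ := fderiv ℝ Q x)
      (s := Metric.closedBall x ‖y - x‖) (C := C * ‖y - x‖) (x := x) (y := y)
      (fun z _ => hd z)
      (fun z hz => (hlip z x).trans (by
        have : ‖z - x‖ ≤ ‖y - x‖ := by simpa [dist_eq_norm] using hz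
        gcongr)) (convex_closedBall _ _) (by simp) (by simp [dist_eq_norm])
  rw [Real.norm_eq_abs] at this
  calc _ ≤ _ := this
    _ = _ := by ring

theorem lip_aux {W : Type*} [NormedAddCommGroup W] [NormedSpace ℝ W]
    (Q : W → ℝ) (hd1 : Differentiable ℝ Q) (C : ℝ)
    (h2 : ∀ x, ‖fderiv ℝ Q x‖ ≤ C) :
    ∀ x y, |Q y - Q x| ≤ C * ‖y - x‖ := fun _ _ =>
    Convex.norm_image_sub_le_of_norm_fderiv_le (𝕜 := ℝ) (s := Set.univ) (fun x _ => hd1 x)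
      (fun x _ => (h2 x)) convex_univ (Set.mem_univ _) (Set.mem_univ _)

/-- Uniform bounds for a smooth compactly supported function. -/
theorem nice_bounds {W : Type*} [NormedAddCommGroup W] [NormedSpace ℝ W]
    (Q : W → ℝ) (hQ : ContDiff ℝ ∞ Q) (hc : HasCompactSupport Q) :
    ∃ C : ℝ, 0 ≤ C ∧ (∀ x, |Q x| ≤ C) ∧ (∀ x, ‖fderiv ℝ Q x‖ ≤ C) ∧
      (∀ x y, ‖fderiv ℝ Q x - fderiv ℝ Q y‖ ≤ C * ‖x - y‖) ∧
      (∀ x y, |Q y - Q x - fderiv ℝ Q x (y - x)| ≤ C * ‖y - x‖ ^ 2) ∧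
      (∀ x y, |Q y - Q x| ≤ C * ‖y - x‖) := by
  obtain ⟨C0, h0⟩ := hQ.continuous.bounded_above_of_compact_support hc
  have hQ1 : ContDiff ℝ ∞ (fderiv ℝ Q) := hQ.fderiv_right (m := ∞) (by simp)
  obtain ⟨C1, h1⟩ := fderiv_bdd_aux Q hQ hc
  obtain ⟨C2, h2⟩ := fderiv_bdd_aux (fderiv ℝ Q) hQ1 (hc.fderiv (𝕜 := ℝ))
  obtain ⟨C, e0, e1, e2, eC⟩ : ∃ C : ℝ, C0 ≤ C ∧ C1 ≤ C ∧ C2 ≤ C ∧ 0 ≤ C :=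
    ⟨max (max C0 C1) (max C2 0), by simp, by simp, by simp, by simp⟩
  have hd : Differentiable ℝ Q := hQ.differentiable (by simp)
  have hd1 : Differentiable ℝ (fderiv ℝ Q) := hQ1.differentiable (by simp)
  have hlip := fderiv_lip_aux Q hd1 C (fun x => (h2 x).trans e2)
  exact ⟨C, eC, fun x => (h0 x).trans e0, fun x => (h1 x).trans e1, hlip,
    taylor_aux Q hd C hlip eC, lip_aux Q hd C (fun x => (h1 x).trans e1)⟩

/-- The energy comparison pointwise inequality. -/
theorem energy_pointwise (R : E3 → ℝ) (C r0 : ℝ) (hr0 : 0 < r0) (hC : 0 ≤ C)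
    (hT : ∀ x y, |R y - R x - fderiv ℝ R x (y - x)| ≤ C * ‖y - x‖ ^ 2)
    (hL : ∀ x y, |R y - R x| ≤ C * ‖y - x‖)
    (y s cv sv p' : E3) (w : ℝ) (hw : 0 < w)
    (hy : ‖y‖ = 1) (hs : ‖s‖ = 1) (hRs : r0 ≤ R s) (hRy : r0 ≤ R y)
    (hunit : R y * ‖cv‖ ^ 2 = 1)
    (hp' : ∀ v, ⟪p', v⟫ = 1 / 2 * ‖cv‖ ^ 2 * fderiv ℝ R y v - ⟪y, v⟫) :
    w + 2 * (⟪R y • cv, sv - w • cv⟫ + w * ⟪p', s - y⟫) + r0 * (‖sv - w • cv‖ ^ 2 / w)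
      - (3 * (C / r0) + 2 * C + 1) * (‖s - y‖ * ‖sv - w • cv‖ + w * ‖s - y‖ ^ 2) ≤
      R s * ‖sv‖ ^ 2 / w := by
  set η := s - y with hη
  set ν := sv - w • cv with hν
  have hsv : sv = ν + w • cv := by simp [hν]
  have hyη : ⟪y, η⟫ = - ‖η‖ ^ 2 / 2 := by
    have h1 : ‖s‖ ^ 2 = ‖y‖ ^ 2 + 2 * ⟪y, η⟫ + ‖η‖ ^ 2 := by
      rw [← norm_add_sq_real]; simp [hη]
    rw [hs, hy] at h1; linarith
  have hsq : ‖sv‖ ^ 2 = ‖ν‖ ^ 2 + 2 * (w * ⟪cv, ν⟫) + w ^ 2 * ‖cv‖ ^ 2 := by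
    rw [hsv, norm_add_sq_real, inner_smul_right, norm_smul, real_inner_comm, mul_pow]
    simp
  have hcv2 : ‖cv‖ ^ 2 ≤ 1 / r0 := by
    rw [le_div_iff₀ hr0]; nlinarith [sq_nonneg ‖cv‖]
  have hcvb : ‖cv‖ ≤ 1 / r0 + 1 := by nlinarith [sq_nonneg (‖cv‖ - 1)]
  have hR : R s * ‖sv‖ ^ 2 / w = R s * (‖ν‖ ^ 2 / w) + 2 * (R s * ⟪cv, ν⟫) + w * (R s * ‖cv‖ ^ 2) := by
    rw [hsq]; field_simp
  have hTs := abs_le.mp (hT y s)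
  have hLs := abs_le.mp (hL y s)
  rw [← hη] at hTs hLs
  have hin := abs_le.mp (abs_real_inner_le_norm cv ν)
  have i1 : R y * ⟪cv, ν⟫ - C * ‖η‖ * ((1 / r0 + 1) * ‖ν‖) ≤ R s * ⟪cv, ν⟫ := by
    have : |(R s - R y) * ⟪cv, ν⟫| ≤ C * ‖η‖ * ((1 / r0 + 1) * ‖ν‖) := by
      rw [abs_mul]
      apply mul_le_mul (hL y s) _ (abs_nonneg _) (by positivity)
      exact (abs_real_inner_le_norm cv ν).trans (by gcongr)
    have := (abs_le.mp this).1
    linarith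
  have i2 : r0 * (‖ν‖ ^ 2 / w) ≤ R s * (‖ν‖ ^ 2 / w) := by gcongr
  have i3 : 1 + 2 * ⟪p', η⟫ - (C / r0 + 1) * ‖η‖ ^ 2 ≤ R s * ‖cv‖ ^ 2 := by
    rw [hp' η, hyη]
    have h1 : ‖cv‖ ^ 2 * (R s - R y - fderiv ℝ R y η) ≥ - (1 / r0 * (C * ‖η‖ ^ 2)) := by
      have : ‖cv‖ ^ 2 * (C * ‖η‖ ^ 2) ≤ 1 / r0 * (C * ‖η‖ ^ 2) := by gcongr
      nlinarith [hTs.1, sq_nonneg ‖cv‖]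
    have h2 : 1 / r0 * (C * ‖η‖ ^ 2) = C / r0 * ‖η‖ ^ 2 := by ring
    rw [h2] at h1
    nlinarith
  have i4 := mul_le_mul_of_nonneg_left i3 hw.le
  rw [hR, inner_smul_left]
  simp only [conj_trivial]
  have e1 : C * ‖η‖ * ((1 / r0 + 1) * ‖ν‖) = (C / r0 + C) * (‖η‖ * ‖ν‖) := by ring
  rw [e1] at i1
  have q1 : 0 ≤ ‖η‖ * ‖ν‖ := by positivity
  have q2 : 0 ≤ w * ‖η‖ ^ 2 := by positivity
  have q3 : 0 ≤ C / r0 := by positivity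
  have q4 := mul_nonneg q3 q2
  have q5 := mul_nonneg q3 q1
  have q6 := mul_nonneg hC q2
  have q7 := mul_nonneg hC q1
  generalize C / r0 = k at *
  generalize ‖ν‖ ^ 2 / w = m at *
  linarith

end

noncomputable section

open scoped ContDiff

theorem local_min_eps (R : E3 → ℝ) (hRc : Continuous R) (C r0 : ℝ) (hr0 : 0 < r0) (hC : 0 ≤ C)
    (hT : ∀ x y, |R y - R x - fderiv ℝ R x (y - x)| ≤ C * ‖y - x‖ ^ 2)
    (hL : ∀ x y, |R y - R x| ≤ C * ‖y - x‖)
    (hR0 : ∀ x, ‖x‖ = 1 → r0 ≤ R x)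
    (c cv p' : ℝ → E3) (hc : ∀ s, HasDerivAt c (cv s) s) (hcv : Continuous cv)
    (hc1 : ∀ s, ‖c s‖ = 1) (hunit : ∀ s, R (c s) * ‖cv s‖ ^ 2 = 1)
    (hp : ∀ s, HasDerivAt (fun s => R (c s) • cv s) (p' s) s) (hp'c : Continuous p')
    (hp' : ∀ s v, ⟪p' s, v⟫ = 1 / 2 * ‖cv s‖ ^ 2 * fderiv ℝ R (c s) v - ⟪c s, v⟫)
    (s1 s2 : ℝ) (hs : s1 < s2)
    (hsmall : (3 * (C / r0) + 2 * C + 1) * ((s2 - s1) + (s2 - s1) ^ 2) ≤ r0)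
    (σ σ' : ℝ → E3) (hσ : ∀ τ, HasDerivAt σ (σ' τ) τ) (hσ' : Continuous σ')
    (hσ1 : ∀ τ, ‖σ τ‖ = 1) (h0 : σ 0 = c s1) (h1 : σ 1 = c s2) (ε : ℝ) (hε : 0 < ε) :
    (s2 - s1) ^ 2 ≤ (∫ τ in (0:ℝ)..1, √(R (σ τ)) * ‖σ' τ‖) *
      ((∫ τ in (0:ℝ)..1, √(R (σ τ)) * ‖σ' τ‖) + ε) := by
  set ℓ := s2 - s1 with hℓ
  have hℓp : 0 < ℓ := by simp [hℓ, hs]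
  set v : ℝ → ℝ := fun τ => √(R (σ τ)) * ‖σ' τ‖ with hv
  have hσc : Continuous σ := continuous_iff_continuousAt.mpr fun τ => (hσ τ).continuousAt
  have hcc : Continuous c := continuous_iff_continuousAt.mpr fun τ => (hc τ).continuousAt
  have hvc : Continuous v := by
    have := hRc.comp hσc
    exact (this.sqrt).mul hσ'.norm
  have hv0 : ∀ τ, 0 ≤ v τ := fun τ => by positivity
  set Λ := ∫ τ in (0:ℝ)..1, v τ with hΛ
  have hΛ0 : 0 ≤ Λ := intervalIntegral.integral_nonneg (by norm_num) fun τ _ => hv0 τ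
  set w : ℝ → ℝ := fun τ => ℓ * (v τ + ε) / (Λ + ε) with hw
  have hwc : Continuous w := by fun_prop
  have hwp : ∀ τ, 0 < w τ := fun τ => by have := hv0 τ; positivity
  have hwi : ∫ τ in (0:ℝ)..1, w τ = ℓ := by
    simp only [hw]
    rw [intervalIntegral.integral_div, intervalIntegral.integral_const_mul,
      intervalIntegral.integral_add (hvc.intervalIntegrable _ _) (by simp)]
    simp only [intervalIntegral.integral_const, ← hΛ]
    simp; field_simp
  set h : ℝ → ℝ := fun τ => s1 + ∫ x in (0:ℝ)..τ, w x with hh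
  have hhd : ∀ τ, HasDerivAt h (w τ) τ := fun τ =>
    (intervalIntegral.integral_hasDerivAt_right (hwc.intervalIntegrable _ _)
      (hwc.stronglyMeasurableAtFilter _ _) hwc.continuousAt).const_add s1
  have hhc : Continuous h := continuous_iff_continuousAt.mpr fun τ => (hhd τ).continuousAt
  have hh0 : h 0 = s1 := by simp [hh]
  have hh1 : h 1 = s2 := by simp [hh, hwi, hℓ]
  set η : ℝ → E3 := fun τ => σ τ - c (h τ) with hη
  set η' : ℝ → E3 := fun τ => σ' τ - w τ • cv (h τ) with hη'
  have hηd : ∀ τ, HasDerivAt η (η' τ) τ := fun τ =>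
    (hσ τ).sub ((hc (h τ)).scomp τ (hhd τ))
  have hη'c : Continuous η' := hσ'.sub (hwc.smul (hcv.comp hhc))
  have hη0 : η 0 = 0 := by simp [hη, hh0, h0]
  have hη1 : η 1 = 0 := by simp [hη, hh1, h1]
  have hηc : Continuous η := hσc.sub (hcc.comp hhc)
  set A := ∫ τ in (0:ℝ)..1, ‖η' τ‖ with hA
  set D := ∫ τ in (0:ℝ)..1, ‖η' τ‖ ^ 2 / w τ with hD
  have hDc : Continuous fun τ => ‖η' τ‖ ^ 2 / w τ :=
    (hη'c.norm.pow 2).div hwc (fun τ => (hwp τ).ne')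
  have hA0 : 0 ≤ A := intervalIntegral.integral_nonneg (by norm_num) fun τ _ => norm_nonneg _
  have hηA : ∀ τ ∈ Set.Icc (0:ℝ) 1, ‖η τ‖ ≤ A := by
    intro τ hτ
    have e : ∫ x in (0:ℝ)..τ, η' x = η τ := by
      rw [intervalIntegral.integral_eq_sub_of_hasDerivAt (fun x _ => hηd x)
        (hη'c.intervalIntegrable _ _), hη0, sub_zero]
    rw [← e]
    refine (intervalIntegral.norm_integral_le_integral_norm hτ.1).trans ?_
    exact intervalIntegral.integral_mono_interval le_rfl hτ.1 hτ.2
      (Filter.Eventually.of_forall fun x => norm_nonneg _) (hη'c.norm.intervalIntegrable _ _)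
  have hAD : A ^ 2 ≤ ℓ * D := by
    have : ∫ τ in (0:ℝ)..1, 2 * (A / ℓ) * ‖η' τ‖ ≤
        ∫ τ in (0:ℝ)..1, (‖η' τ‖ ^ 2 / w τ + (A / ℓ) ^ 2 * w τ) := by
      apply intervalIntegral.integral_mono_on (by norm_num)
      · exact (continuous_const.mul hη'c.norm).intervalIntegrable _ _
      · exact (hDc.add (continuous_const.mul hwc)).intervalIntegrable _ _
      · intro τ _
        have hwτ := hwp τ
        have : ‖η' τ‖ ^ 2 / w τ + (A / ℓ) ^ 2 * w τ - 2 * (A / ℓ) * ‖η' τ‖ =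
          (‖η' τ‖ - (A / ℓ) * w τ) ^ 2 / w τ := by field_simp; ring
        have h2 : 0 ≤ (‖η' τ‖ - (A / ℓ) * w τ) ^ 2 / w τ := by positivity
        linarith
    rw [intervalIntegral.integral_const_mul, intervalIntegral.integral_add
      (hDc.intervalIntegrable _ _) (Continuous.intervalIntegrable (by fun_prop) _ _),
      intervalIntegral.integral_const_mul, hwi, ← hA, ← hD] at this
    have e1 : 2 * (A / ℓ) * A = 2 * (A ^ 2 / ℓ) := by ring
    have e2 : (A / ℓ) ^ 2 * ℓ = A ^ 2 / ℓ := by field_simp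
    rw [e1, e2] at this
    have : A ^ 2 / ℓ ≤ D := by linarith
    rw [div_le_iff₀ hℓp] at this; linarith
  set m' : ℝ → ℝ := fun τ => ⟪R (c (h τ)) • cv (h τ), η' τ⟫ + w τ * ⟪p' (h τ), η τ⟫ with hm'
  have hm'c : Continuous m' := by
    have a1 : Continuous fun τ => R (c (h τ)) • cv (h τ) :=
      (hRc.comp (hcc.comp hhc)).smul (hcv.comp hhc)
    exact (a1.inner hη'c).add (hwc.mul ((hp'c.comp hhc).inner hηc))
  have hm'i : ∫ τ in (0:ℝ)..1, m' τ = 0 := by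
    have hd : ∀ τ, HasDerivAt (fun τ => ⟪R (c (h τ)) • cv (h τ), η τ⟫) (m' τ) τ := by
      intro τ
      have := ((hp (h τ)).scomp τ (hhd τ)).inner ℝ (hηd τ)
      simp only [inner_smul_left, conj_trivial, Function.comp_def] at this
      simpa [hm', inner_smul_left] using this
    rw [intervalIntegral.integral_eq_sub_of_hasDerivAt (fun x _ => hd x)
        (hm'c.intervalIntegrable _ _)]
    simp [hη0, hη1]
  set C1 := 3 * (C / r0) + 2 * C + 1 with hC1
  have hC1p : 0 ≤ C1 := by positivity
  set e : ℝ → ℝ := fun τ => R (σ τ) * ‖σ' τ‖ ^ 2 / w τ with he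
  have hec : Continuous e :=
    ((hRc.comp hσc).mul (hσ'.norm.pow 2)).div hwc (fun τ => (hwp τ).ne')
  have low : ℓ ≤ ∫ τ in (0:ℝ)..1, e τ := by
    have : ∫ τ in (0:ℝ)..1, ((w τ + 2 * m' τ) + (r0 * (‖η' τ‖ ^ 2 / w τ) -
        (C1 * A * ‖η' τ‖ + C1 * A ^ 2 * w τ))) ≤ ∫ τ in (0:ℝ)..1, e τ := by
      apply intervalIntegral.integral_mono_on (by norm_num)
      · exact Continuous.intervalIntegrable (by fun_prop) _ _
      · exact hec.intervalIntegrable _ _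
      · intro τ hτ
        have key := energy_pointwise R C r0 hr0 hC hT hL (c (h τ)) (σ τ) (cv (h τ)) (σ' τ)
          (p' (h τ)) (w τ) (hwp τ) (hc1 _) (hσ1 _) (hR0 _ (hσ1 _)) (hR0 _ (hc1 _)) (hunit _)
          (hp' _)
        refine le_trans ?_ key
        have b1 : ‖η τ‖ * ‖η' τ‖ ≤ A * ‖η' τ‖ :=
          mul_le_mul_of_nonneg_right (hηA τ hτ) (norm_nonneg _)
        have b2 : w τ * ‖η τ‖ ^ 2 ≤ w τ * A ^ 2 := by
          have := hηA τ hτ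
          have := (hwp τ).le
          gcongr
        have b3 := mul_le_mul_of_nonneg_left (add_le_add b1 b2) hC1p
        simp only [hm']
        simp only [hη, hη'] at b3 ⊢
        linarith
    rw [intervalIntegral.integral_add (Continuous.intervalIntegrable (by fun_prop) _ _)
        (Continuous.intervalIntegrable (by fun_prop) _ _),
      intervalIntegral.integral_add (Continuous.intervalIntegrable (by fun_prop) _ _)
        (Continuous.intervalIntegrable (by fun_prop) _ _),
      intervalIntegral.integral_sub (Continuous.intervalIntegrable (by fun_prop) _ _)
        (Continuous.intervalIntegrable (by fun_prop) _ _),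
      intervalIntegral.integral_add (Continuous.intervalIntegrable (by fun_prop) _ _)
        (Continuous.intervalIntegrable (by fun_prop) _ _)] at this
    simp only [intervalIntegral.integral_const_mul] at this
    rw [hwi, hm'i, ← hA, ← hD] at this
    have hD0 : 0 ≤ D := by
      apply intervalIntegral.integral_nonneg (by norm_num)
      intro τ _; have := hwp τ; positivity
    have z1 : C1 * (1 + ℓ) * A ^ 2 ≤ C1 * (1 + ℓ) * (ℓ * D) := by gcongr
    have z2 : C1 * (ℓ + ℓ ^ 2) * D ≤ r0 * D := by gcongr
    nlinarith
  have up : ∫ τ in (0:ℝ)..1, e τ ≤ Λ * ((Λ + ε) / ℓ) := by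
    rw [hΛ, ← intervalIntegral.integral_mul_const]
    apply intervalIntegral.integral_mono_on (by norm_num)
    · exact hec.intervalIntegrable _ _
    · exact (hvc.mul continuous_const).intervalIntegrable _ _
    · intro τ _
      have hvv : R (σ τ) * ‖σ' τ‖ ^ 2 = v τ ^ 2 := by
        simp only [hv, mul_pow]
        rw [Real.sq_sqrt (hr0.le.trans (hR0 _ (hσ1 _)))]
      simp only [he, hvv]
      rw [div_le_iff₀ (hwp τ)]
      have : v τ * ((Λ + ε) / ℓ) * w τ = v τ * (v τ + ε) := by
        simp only [hw]; field_simp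
      rw [← hΛ, this]
      nlinarith [hv0 τ]
  have fin := low.trans up
  rw [← mul_div_assoc, le_div_iff₀ hℓp] at fin
  linarith

theorem local_min (R : E3 → ℝ) (hRc : Continuous R) (C r0 : ℝ) (hr0 : 0 < r0) (hC : 0 ≤ C)
    (hT : ∀ x y, |R y - R x - fderiv ℝ R x (y - x)| ≤ C * ‖y - x‖ ^ 2)
    (hL : ∀ x y, |R y - R x| ≤ C * ‖y - x‖)
    (hR0 : ∀ x, ‖x‖ = 1 → r0 ≤ R x)
    (c cv p' : ℝ → E3) (hc : ∀ s, HasDerivAt c (cv s) s) (hcv : Continuous cv)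
    (hc1 : ∀ s, ‖c s‖ = 1) (hunit : ∀ s, R (c s) * ‖cv s‖ ^ 2 = 1)
    (hp : ∀ s, HasDerivAt (fun s => R (c s) • cv s) (p' s) s) (hp'c : Continuous p')
    (hp' : ∀ s v, ⟪p' s, v⟫ = 1 / 2 * ‖cv s‖ ^ 2 * fderiv ℝ R (c s) v - ⟪c s, v⟫)
    (s1 s2 : ℝ) (hs : s1 ≤ s2)
    (hsmall : (3 * (C / r0) + 2 * C + 1) * ((s2 - s1) + (s2 - s1) ^ 2) ≤ r0)
    (σ σ' : ℝ → E3) (hσ : ∀ τ, HasDerivAt σ (σ' τ) τ) (hσ' : Continuous σ')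
    (hσ1 : ∀ τ, ‖σ τ‖ = 1) (h0 : σ 0 = c s1) (h1 : σ 1 = c s2) :
    s2 - s1 ≤ ∫ τ in (0:ℝ)..1, √(R (σ τ)) * ‖σ' τ‖ := by
  have hΛ0 : 0 ≤ ∫ τ in (0:ℝ)..1, √(R (σ τ)) * ‖σ' τ‖ :=
    intervalIntegral.integral_nonneg (by norm_num) fun τ _ => by positivity
  rcases hs.eq_or_lt with h | h
  · rw [← h, sub_self]; exact hΛ0
  have key := local_min_eps R hRc C r0 hr0 hC hT hL hR0 c cv p' hc hcv hc1 hunit hp hp'c hp' s1 s2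
    h hsmall σ σ' hσ hσ' hσ1 h0 h1
  generalize (∫ τ in (0:ℝ)..1, √(R (σ τ)) * ‖σ' τ‖) = Λ at *
  by_contra hcon
  push Not at hcon
  have := key ((s2 - s1) - Λ) (by linarith)
  nlinarith

end

noncomputable section

open scoped ContDiff

section cutoff
variable {W : Type*} [NormedAddCommGroup W] [InnerProductSpace ℝ W] [FiniteDimensional ℝ W]

def bumpOut (W : Type*) [NormedAddCommGroup W] : ContDiffBump (0 : W) := ⟨2, 3, by norm_num, by norm_num⟩
def bumpIn (W : Type*) [NormedAddCommGroup W] : ContDiffBump (0 : W) :=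
  ⟨1/4, 1/2, by norm_num, by norm_num⟩

/-- smooth cutoff, `1` on the annulus `1/2 ≤ ‖x‖ ≤ 2`, zero near `0`, compact support -/
def ann (x : W) : ℝ := bumpOut W x * (1 - bumpIn W x)

theorem ann_contDiff : ContDiff ℝ ∞ (ann : W → ℝ) :=
  (bumpOut W).contDiff.mul (contDiff_const.sub (bumpIn W).contDiff)

theorem ann_compact : HasCompactSupport (ann : W → ℝ) :=
  (bumpOut W).hasCompactSupport.mul_right

theorem ann_one {x : W} (h1 : 1 / 2 ≤ ‖x‖) (h2 : ‖x‖ ≤ 2) : ann x = 1 := by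
  have e1 : bumpOut W x = 1 := (bumpOut W).one_of_mem_closedBall (by simpa [bumpOut] using h2)
  have e2 : bumpIn W x = 0 := (bumpIn W).zero_of_le_dist (by simpa [bumpIn] using h1)
  simp [ann, e1, e2]

theorem ann_zero {x : W} (h1 : ‖x‖ ≤ 1 / 4) : ann x = 0 := by
  have e2 : bumpIn W x = 1 := (bumpIn W).one_of_mem_closedBall (by simpa [bumpIn] using h1)
  simp [ann, e2]

theorem ann_mul_contDiff {X : Type*} [NormedAddCommGroup X] [NormedSpace ℝ X]
    (pr : X → W) (hpr : ContDiff ℝ ∞ pr) (G : X → ℝ)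
    (hG : ∀ x, pr x ≠ 0 → ContDiffAt ℝ ∞ G x) : ContDiff ℝ ∞ (fun x => ann (pr x) * G x) := by
  rw [contDiff_iff_contDiffAt]
  intro x
  by_cases h : pr x = 0
  · have : (fun x => ann (pr x) * G x) =ᶠ[nhds x] fun _ => 0 := by
      have : ∀ᶠ y in nhds x, ‖pr y‖ < 1 / 4 :=
        (hpr.continuous.norm.continuousAt).eventually_lt continuousAt_const (by simp [h])
      filter_upwards [this] with y hy
      rw [ann_zero hy.le, zero_mul]
    exact contDiffAt_const.congr_of_eventuallyEq this
  · exact (ann_contDiff.comp hpr).contDiffAt.mul (hG x h)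
end cutoff

theorem systole_le_of_closed (g : Sph → E3 → E3 → ℝ) (c : ℝ → Sph) (L : ℝ)
    (h : IsClosedGeodesic g c L) : systole g ≤ L :=
  csInf_le ⟨0, by rintro x ⟨c, hc⟩; exact hc.1.le⟩ ⟨c, h⟩

/-- The geodesic equations (Hamiltonian form) give a closed geodesic. -/
theorem systole_le_of_ode (f : Sph → ℝ) (hf : SmoothSph f) (t : ℝ)
    (hpos : ∀ x, 0 < 1 + t * f x) (c p p' : ℝ → E3) (hc1 : ∀ s, ‖c s‖ = 1)
    (hc : ∀ s, HasDerivAt c (((1 + t * fext f (c s)) ^ 2)⁻¹ • p s) s)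
    (hpn : ∀ s, ‖p s‖ = 1 + t * fext f (c s))
    (hp : ∀ s, HasDerivAt p (p' s) s) (hp'c : Continuous p')
    (hp' : ∀ s v, ⟪p' s, v⟫ = t / (1 + t * fext f (c s)) * fderiv ℝ (fext f) (c s) v - ⟪c s, v⟫)
    (L : ℝ) (hL : 0 < L) (hper : ∀ s, c (s + L) = c s) :
    systole (confMetric fun x => (1 + t * f x) ^ 2) ≤ L := by
  have hmem : ∀ s, c s ∈ Metric.sphere (0 : E3) 1 := fun s => by simp [hc1]
  have hne : ∀ s, c s ≠ 0 := fun s h => by have := hc1 s; simp [h] at this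
  set F := fext f with hF
  have hFs : ∀ (x : E3) (hx : ‖x‖ = 1), F x = f ⟨x, by simp [hx]⟩ := fun x hx =>
    fext_sph f ⟨x, by simp [hx]⟩
  have hρ : ∀ s, 0 < 1 + t * F (c s) := fun s => by rw [hFs _ (hc1 s)]; exact hpos _
  set Q : E3 → ℝ := fun x => ann x * F x with hQ
  have hQs : ContDiff ℝ ∞ Q := ann_mul_contDiff (fun x => x) contDiff_id F
    (fun x hx => fext_contDiffAt f hf x hx)
  have hQsupp : HasCompactSupport Q := ann_compact.mul_right
  set R : E3 → ℝ := fun x => (1 + t * Q x) ^ 2 with hR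
  set P : E3 → ℝ := fun x => Q x * (2 * t + t ^ 2 * Q x) with hP
  have hRP : ∀ x, R x = 1 + P x := fun x => by simp only [hR, hP]; ring
  have hPs : ContDiff ℝ ∞ P := hQs.mul (contDiff_const.add (contDiff_const.mul hQs))
  have hRs : ContDiff ℝ ∞ R := (contDiff_const.add (contDiff_const.mul hQs)).pow 2
  have hPsupp : HasCompactSupport P := hQsupp.mul_right
  obtain ⟨C, hC, -, -, -, hT, hLip⟩ := nice_bounds P hPs hPsupp
  have hfd : ∀ x, fderiv ℝ R x = fderiv ℝ P x := fun x => by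
    have : R = fun x => 1 + P x := funext hRP
    rw [this, fderiv_const_add]
  have hQ1 : ∀ x : E3, ‖x‖ = 1 → Q x = F x := fun x hx => by
    simp only [hQ]; rw [ann_one (by rw [hx]; norm_num) (by rw [hx]; norm_num), one_mul]
  have hR1 : ∀ x : E3, ‖x‖ = 1 → R x = (1 + t * F x) ^ 2 := fun x hx => by
    simp only [hR]; rw [hQ1 x hx]
  obtain ⟨r0, hr0, hR0⟩ : ∃ r0 > 0, ∀ x : E3, ‖x‖ = 1 → r0 ≤ R x := by
    have hne : (Metric.sphere (0 : E3) 1).Nonempty := ⟨c 0, hmem 0⟩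
    obtain ⟨x, hx, hmin⟩ := (isCompact_sphere (0 : E3) 1).exists_isMinOn hne hRs.continuous.continuousOn
    have hx1 : ‖x‖ = 1 := by simpa using hx
    refine ⟨R x, ?_, fun y hy => hmin (by simp [hy])⟩
    rw [hR1 x hx1, hFs x hx1]
    have := hpos ⟨x, by simp [hx1]⟩
    positivity
  have hfR : ∀ x : E3, ‖x‖ = 1 → ∀ v, fderiv ℝ R x v = 2 * (1 + t * F x) * t * fderiv ℝ F x v := by
    intro x hx v
    have hx0 : x ≠ 0 := fun h => by simp [h] at hx
    have hev : R =ᶠ[nhds x] fun x => (1 + t * F x) ^ 2 := by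
      have a1 : ∀ᶠ y in nhds x, 1 / 2 < ‖y‖ :=
        continuousAt_const.eventually_lt (continuous_norm.continuousAt) (by rw [hx]; norm_num)
      have a2 : ∀ᶠ y in nhds x, ‖y‖ < 2 :=
        (continuous_norm.continuousAt).eventually_lt continuousAt_const (by rw [hx]; norm_num)
      filter_upwards [a1, a2] with y h1 h2
      simp only [hR, hQ]; rw [ann_one h1.le h2.le, one_mul]
    rw [hev.fderiv_eq]
    have hFd : HasFDerivAt F (fderiv ℝ F x) x :=
      ((fext_contDiffAt f hf x hx0).differentiableAt (by simp)).hasFDerivAt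
    have := ((hFd.const_mul t).const_add 1).pow 2
    rw [this.fderiv]
    simp; ring
  set cv : ℝ → E3 := fun s => ((1 + t * F (c s)) ^ 2)⁻¹ • p s with hcvdef
  have hcc : Continuous c := continuous_iff_continuousAt.mpr fun τ => (hc τ).continuousAt
  have hpc : Continuous p := continuous_iff_continuousAt.mpr fun τ => (hp τ).continuousAt
  have hFc : Continuous fun s => F (c s) := by
    have : (fun s => F (c s)) = fun s => Q (c s) := funext fun s => (hQ1 _ (hc1 s)).symm
    rw [this]; exact hQs.continuous.comp hcc
  have hcv : Continuous cv := by
    refine Continuous.smul (Continuous.inv₀ (f := fun s => (1 + t * F (c s)) ^ 2)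
      ((continuous_const.add (continuous_const.mul hFc)).pow 2) fun s => ?_) hpc
    have := hρ s; positivity
  have hcvn : ∀ s, ‖cv s‖ = (1 + t * F (c s))⁻¹ := fun s => by
    have := hρ s
    simp only [hcvdef]
    rw [norm_smul, hpn s, Real.norm_eq_abs, abs_of_pos (by positivity)]
    field_simp
  have hunit : ∀ s, R (c s) * ‖cv s‖ ^ 2 = 1 := fun s => by
    have := hρ s
    rw [hcvn, hR1 _ (hc1 s)]; field_simp
  have hpe : (fun s => R (c s) • cv s) = p := funext fun s => by
    have := hρ s
    simp only [hcvdef]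
    rw [hR1 _ (hc1 s), smul_smul, mul_inv_cancel₀ (by positivity), one_smul]
  have hlm := local_min R hRs.continuous C r0 hr0 hC
    (fun x y => by rw [hfd, hRP, hRP, add_sub_add_left_eq_sub]; exact hT x y)
    (fun x y => by rw [hRP, hRP, add_sub_add_left_eq_sub]; exact hLip x y) hR0 c cv p' hc hcv hc1
    hunit (by rw [hpe]; exact hp) hp'c (fun s v => by
      have := hρ s
      rw [hp', hcvn, hfR _ (hc1 s)]; field_simp)
  set c' : ℝ → Sph := fun s => ⟨c s, hmem s⟩ with hc'
  set g := confMetric fun x => (1 + t * f x) ^ 2 with hg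
  have hgs : ∀ (σ : ℝ → Sph) τ, gspeed g σ τ = √(R (σ τ)) * ‖deriv (fun s => (σ s : E3)) τ‖ := by
    intro σ τ
    simp only [gspeed, hg, confMetric, cvel, real_inner_self_eq_norm_sq]
    rw [hR1 _ (sph_norm _), hF, fext_sph, Real.sqrt_mul (by positivity),
      Real.sqrt_sq (norm_nonneg _)]
  have hcd : ∀ s, deriv c s = cv s := fun s => (hc s).deriv
  have hspeed : ∀ s, √(R (c s)) * ‖cv s‖ = 1 := fun s => by
    have h1 := hunit s
    rw [← Real.sqrt_sq (norm_nonneg (cv s)), ← Real.sqrt_mul (hr0.le.trans (hR0 _ (hc1 s))), h1,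
      Real.sqrt_one]
  have hC1 : ContDiff ℝ 1 c := by
    rw [contDiff_one_iff_deriv]
    exact ⟨fun s => (hc s).differentiableAt, by rw [show deriv c = cv from funext hcd]; exact hcv⟩
  apply systole_le_of_closed g c' L
  refine ⟨hL, fun s => Subtype.ext (hper s), hC1, fun s => ?_, fun s => ?_⟩
  · rw [hgs]
    change √(R (c s)) * ‖deriv c s‖ = 1
    rw [hcd, hspeed]
  · set C1 := 3 * (C / r0) + 2 * C + 1 with hC1def
    have hC1p : 0 < C1 := by positivity
    refine ⟨min (1 / 2) (r0 / (4 * C1)), by positivity, fun s1 s2 h1 h2 h3 => ?_⟩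
    have hl1 : s2 - s1 ≤ 1 := by
      have := min_le_left (1 / 2) (r0 / (4 * C1)); linarith
    have hl2 : s2 - s1 ≤ r0 / (2 * C1) := by
      have := min_le_right (1 / 2) (r0 / (4 * C1))
      have e : r0 / (2 * C1) = r0 / (4 * C1) + r0 / (4 * C1) := by field_simp; norm_num
      linarith
    have hsm : C1 * ((s2 - s1) + (s2 - s1) ^ 2) ≤ r0 := by
      have h0 : 0 ≤ s2 - s1 := by linarith
      have : (s2 - s1) + (s2 - s1) ^ 2 ≤ 2 * (s2 - s1) := by nlinarith
      have e : r0 = C1 * (2 * (r0 / (2 * C1))) := by field_simp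
      rw [e]; gcongr; linarith
    have hmemset : (s2 - s1) ∈ {L | ∃ σ : ℝ → Sph, IsC1Curve σ ∧ σ 0 = c' s1 ∧ σ 1 = c' s2 ∧
        L = glength g σ 0 1} := by
      refine ⟨fun τ => c' (s1 + τ * (s2 - s1)), ?_, by simp, by simp, ?_⟩
      · exact hC1.comp (by fun_prop)
      · have hd : ∀ τ, HasDerivAt (fun τ => c (s1 + τ * (s2 - s1)))
            ((s2 - s1) • cv (s1 + τ * (s2 - s1))) τ := fun τ => by
          have : HasDerivAt (fun τ => s1 + τ * (s2 - s1)) (s2 - s1) τ := by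
            simpa using ((hasDerivAt_id τ).mul_const (s2 - s1)).const_add s1
          exact (hc _).scomp τ this
        have : ∀ τ, gspeed g (fun τ => c' (s1 + τ * (s2 - s1))) τ = s2 - s1 := fun τ => by
          rw [hgs]
          change √(R (c (s1 + τ * (s2 - s1)))) * ‖deriv (fun τ => c (s1 + τ * (s2 - s1))) τ‖ = _
          rw [(hd τ).deriv, norm_smul, Real.norm_eq_abs, abs_of_nonneg (by linarith)]
          have := hspeed (s1 + τ * (s2 - s1))
          linear_combination (s2 - s1) * this
        simp [glength, this]
    apply le_antisymm
    · refine csInf_le ⟨0, ?_⟩ hmemset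
      rintro x ⟨σ, -, -, -, rfl⟩
      exact intervalIntegral.integral_nonneg (by norm_num) fun τ _ => Real.sqrt_nonneg _
    · refine le_csInf ⟨_, hmemset⟩ ?_
      rintro x ⟨σ, hσ, h0, h1, rfl⟩
      have hσ' : ContDiff ℝ 1 (fun t => (σ t : E3)) := hσ
      rw [contDiff_one_iff_deriv] at hσ'
      have := hlm s1 s2 h2 hsm (fun τ => (σ τ : E3)) (deriv fun τ => (σ τ : E3))
        (fun τ => (hσ'.1 τ).hasDerivAt) hσ'.2 (fun τ => sph_norm _) (by rw [h0]) (by rw [h1])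
      refine this.trans_eq ?_
      unfold glength
      exact intervalIntegral.integral_congr fun τ _ => (hgs σ τ).symm

end

noncomputable section

open scoped ContDiff

section LS
variable {V : Type*} [NormedAddCommGroup V] [InnerProductSpace ℝ V] [FiniteDimensional ℝ V]

def avg (G : ℝ → V) : V := (2 * π)⁻¹ • ∫ τ in (0:ℝ)..(2 * π), G τ

theorem avg_norm_le (G : ℝ → V) (M : ℝ) (h : ∀ θ, ‖G θ‖ ≤ M) : ‖avg G‖ ≤ M := by
  unfold avg
  have := intervalIntegral.norm_integral_le_of_norm_le_const (a := 0) (b := 2 * π) (f := G)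
    (C := M) (fun x _ => h x)
  have hp := Real.pi_pos
  rw [norm_smul, norm_inv, Real.norm_eq_abs, abs_of_pos (by positivity)]
  rw [sub_zero, abs_of_pos (by positivity)] at this
  rw [inv_mul_le_iff₀ (by positivity)]; linarith

theorem avg_sub (G G' : ℝ → V) (h : Continuous G) (h' : Continuous G') :
    avg G - avg G' = avg (fun θ => G θ - G' θ) := by
  unfold avg
  rw [intervalIntegral.integral_sub (h.intervalIntegrable _ _) (h'.intervalIntegrable _ _), smul_sub]

theorem poincare (w w' : ℝ → V) (hd : ∀ θ, HasDerivAt w (w' θ) θ)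
    (hper : ∀ θ, w (θ + 2 * π) = w θ) (hm : ∫ τ in (0:ℝ)..(2 * π), w τ = 0) (M : ℝ)
    (hM : ∀ θ, ‖w' θ‖ ≤ M) (θ : ℝ) : ‖w θ‖ ≤ 2 * π * M := by
  have hp := Real.pi_pos
  have hM0 : 0 ≤ M := (norm_nonneg _).trans (hM 0)
  have hc : Continuous w := continuous_iff_continuousAt.mpr fun τ => (hd τ).continuousAt
  obtain ⟨y, hy, hwy⟩ := (show Function.Periodic w (2 * π) from hper).exists_mem_Ico₀
    (by positivity) θ
  rw [hwy]
  have e : (2 * π) • w y = ∫ τ in (0:ℝ)..(2 * π), (w y - w τ) := by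
    rw [intervalIntegral.integral_sub (by simp) (hc.intervalIntegrable _ _), hm]; simp
  have : ‖∫ τ in (0:ℝ)..(2 * π), (w y - w τ)‖ ≤ (2 * π * M) * |2 * π - 0| := by
    apply intervalIntegral.norm_integral_le_of_norm_le_const
    intro τ hτ
    rw [Set.uIoc_of_le (by positivity)] at hτ
    have := Convex.norm_image_sub_le_of_norm_hasDerivWithin_le (f := w) (f' := w') (s := Set.univ)
      (fun x _ => (hd x).hasDerivWithinAt) (fun x _ => hM x) convex_univ (Set.mem_univ τ)
      (Set.mem_univ y)
    refine this.trans ?_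
    rw [mul_comm (2 * π)]
    gcongr
    rw [Real.norm_eq_abs, abs_le]
    constructor <;> linarith [hy.1, hy.2, hτ.1, hτ.2]
  rw [← e, norm_smul, Real.norm_eq_abs, sub_zero, abs_of_pos (by positivity)] at this
  have h2 : 0 < 2 * π := by positivity
  nlinarith

def P0 (G : ℝ → V) (θ : ℝ) : V :=
  (∫ τ in (0:ℝ)..θ, (G τ - avg G)) - avg (fun θ => ∫ τ in (0:ℝ)..θ, (G τ - avg G))

theorem P0_deriv (G : ℝ → V) (hG : Continuous G) (θ : ℝ) : HasDerivAt (P0 G) (G θ - avg G) θ := by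
  have hc : Continuous fun τ => G τ - avg G := by fun_prop
  exact (intervalIntegral.integral_hasDerivAt_right (hc.intervalIntegrable _ _)
      (hc.stronglyMeasurableAtFilter _ _) hc.continuousAt).sub_const _

theorem int_sub_avg (G : ℝ → V) (hG : Continuous G) :
    ∫ τ in (0:ℝ)..(2 * π), (G τ - avg G) = 0 := by
  have hp := Real.pi_pos
  rw [intervalIntegral.integral_sub (hG.intervalIntegrable _ _) (by simp)]
  simp only [intervalIntegral.integral_const, avg, smul_smul]
  rw [sub_zero, mul_inv_cancel₀ (by positivity), one_smul, sub_self]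

theorem P0_per (G : ℝ → V) (hG : Continuous G) (hper : ∀ θ, G (θ + 2 * π) = G θ) (θ : ℝ) :
    P0 G (θ + 2 * π) = P0 G θ := by
  have hc : Continuous fun τ => G τ - avg G := by fun_prop
  unfold P0
  congr 1
  rw [← intervalIntegral.integral_add_adjacent_intervals (b := θ) (hc.intervalIntegrable _ _)
    (hc.intervalIntegrable _ _)]
  have : Function.Periodic (fun τ => G τ - avg G) (2 * π) := fun x => by simp [hper]
  rw [this.intervalIntegral_add_eq θ 0, zero_add, int_sub_avg G hG, add_zero]

theorem P0_mean (G : ℝ → V) (hG : Continuous G) : ∫ τ in (0:ℝ)..(2 * π), P0 G τ = 0 := by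
  have hc : Continuous fun τ => G τ - avg G := by fun_prop
  unfold P0
  refine int_sub_avg (fun θ => ∫ τ in (0:ℝ)..θ, (G τ - avg G)) ?_
  exact intervalIntegral.continuous_primitive (fun a b => hc.intervalIntegrable a b) 0

structure LSData (J : V →L[ℝ] V) (K : ℝ → V → ℝ) (g : ℝ → V → V) (κ M : ℝ) : Prop where
  Jn : ∀ v, ‖J v‖ = ‖v‖
  JJ : ∀ v w, ⟪J v, J w⟫ = ⟪v, w⟫
  Jskew : ∀ v w, ⟪J v, w⟫ = - ⟪v, J w⟫
  Kc : Continuous fun x : ℝ × V => K x.1 x.2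
  gc : Continuous fun x : ℝ × V => g x.1 x.2
  gper : ∀ θ x, g (θ + 2 * π) x = g θ x
  glip : ∀ θ x y, ‖g θ x - g θ y‖ ≤ κ * ‖x - y‖
  Kt : ∀ θ x y, |K θ y - K θ x - ⟪g θ x, y - x⟫| ≤ κ * ‖y - x‖ ^ 2
  gM : ∀ θ x, ‖g θ x‖ ≤ M
  κ0 : 0 ≤ κ
  κ1 : κ ≤ 1 / 100

/-- `w` is a periodic mean-zero curve with `w' = J (G - avg G)`. -/
structure IsLoop (J : V →L[ℝ] V) (w G : ℝ → V) : Prop where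
  per : ∀ θ, w (θ + 2 * π) = w θ
  mean : ∫ τ in (0:ℝ)..(2 * π), w τ = 0
  Gc : Continuous G
  deriv : ∀ θ, HasDerivAt w (J (G θ - avg G)) θ

theorem IsLoop.cont {J : V →L[ℝ] V} {w G : ℝ → V} (h : IsLoop J w G) : Continuous w :=
  continuous_iff_continuousAt.mpr fun τ => (h.deriv τ).continuousAt

theorem avg_J (J : V →L[ℝ] V) (G : ℝ → V) (hG : Continuous G) : avg (fun θ => J (G θ)) = J (avg G) := by
  unfold avg
  rw [J.intervalIntegral_comp_comm (hG.intervalIntegrable _ _), map_smul]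

theorem exists_sol {J : V →L[ℝ] V} {K : ℝ → V → ℝ} {g : ℝ → V → V} {κ M : ℝ}
    (D : LSData J K g κ M) (ζ : V) :
    ∃ w : ℝ → V, IsLoop J w (fun θ => g θ (ζ + w θ)) := by
  have hp := Real.pi_pos
  let X := {w : BoundedContinuousFunction ℝ V // ∀ θ, w (θ + 2 * π) = w θ}
  have hclosed : IsClosed {w : BoundedContinuousFunction ℝ V | ∀ θ, w (θ + 2 * π) = w θ} := by
    rw [Set.setOf_forall]
    refine isClosed_iInter fun θ => isClosed_eq ?_ ?_
    · exact (continuous_eval_const _)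
    · exact (continuous_eval_const _)
  have : CompleteSpace X := hclosed.completeSpace_coe
  have hGc : ∀ w : X, Continuous fun θ => J (g θ (ζ + w.1 θ)) := fun w =>
    J.continuous.comp (D.gc.comp (continuous_id.prodMk (continuous_const.add w.1.continuous)))
  have hGp : ∀ (w : X) θ, J (g (θ + 2 * π) (ζ + w.1 (θ + 2 * π))) = J (g θ (ζ + w.1 θ)) := by
    intro w θ; rw [D.gper, w.2]
  have hGb : ∀ (w : X) θ, ‖J (g θ (ζ + w.1 θ))‖ ≤ M := fun w θ => by rw [D.Jn]; exact D.gM _ _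
  let T : X → X := fun w => ⟨BoundedContinuousFunction.ofNormedAddCommGroup
    (P0 fun θ => J (g θ (ζ + w.1 θ)))
    (continuous_iff_continuousAt.mpr fun τ => (P0_deriv _ (hGc w) τ).continuousAt)
    (2 * π * (M + M)) (poincare _ _ (P0_deriv _ (hGc w)) (P0_per _ (hGc w) (hGp w))
      (P0_mean _ (hGc w)) _ (fun θ => (norm_sub_le _ _).trans
        (add_le_add (hGb w θ) (avg_norm_le _ _ (hGb w))))),
    fun θ => P0_per _ (hGc w) (hGp w) θ⟩
  have hT : ContractingWith (1 / 2) T := by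
    refine ⟨by rw [← NNReal.coe_lt_coe]; norm_num, LipschitzWith.of_dist_le_mul fun w w' => ?_⟩
    change dist (T w).1 (T w').1 ≤ _ * dist w.1 w'.1
    rw [BoundedContinuousFunction.dist_le (by positivity)]
    intro θ
    rw [dist_eq_norm]
    have hdw : ∀ τ, ‖w.1 τ - w'.1 τ‖ ≤ dist w.1 w'.1 := fun τ => by
      rw [← dist_eq_norm]; exact BoundedContinuousFunction.dist_coe_le_dist τ
    have hb : ∀ τ, ‖J (g τ (ζ + w.1 τ)) - J (g τ (ζ + w'.1 τ))‖ ≤ κ * dist w.1 w'.1 := by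
      intro τ
      rw [← map_sub, D.Jn]
      refine (D.glip _ _ _).trans ?_
      rw [add_sub_add_left_eq_sub]
      exact mul_le_mul_of_nonneg_left (hdw τ) D.κ0
    have := poincare (fun θ => P0 (fun θ => J (g θ (ζ + w.1 θ))) θ -
        P0 (fun θ => J (g θ (ζ + w'.1 θ))) θ) _
      (fun θ => (P0_deriv _ (hGc w) θ).sub (P0_deriv _ (hGc w') θ))
      (fun θ => by rw [P0_per _ (hGc w) (hGp w), P0_per _ (hGc w') (hGp w')])
      (by rw [intervalIntegral.integral_sub, P0_mean _ (hGc w), P0_mean _ (hGc w'), sub_zero]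
          · exact ((T w).1.continuous).intervalIntegrable _ _
          · exact ((T w').1.continuous).intervalIntegrable _ _)
      (κ * dist w.1 w'.1 + κ * dist w.1 w'.1)
      (fun τ => by
        rw [sub_sub_sub_comm, avg_sub _ _ (hGc w) (hGc w')]
        exact (norm_sub_le _ _).trans (add_le_add (hb τ) (avg_norm_le _ _ hb))) θ
    refine this.trans ?_
    have h1 := D.κ1
    have h0 := D.κ0
    have h2 := Real.pi_lt_four
    have h3 : 2 * π * (2 * κ) ≤ 1 / 2 := by nlinarith
    have h4 : (0:ℝ) ≤ dist w.1 w'.1 := dist_nonneg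
    push_cast
    nlinarith
  have : Nonempty X := ⟨⟨0, by simp⟩⟩
  have hfix := hT.fixedPoint_isFixedPt
  set w := hT.fixedPoint T
  have hwe : ∀ θ, w.1 θ = P0 (fun θ => J (g θ (ζ + w.1 θ))) θ := fun θ => by
    conv_lhs => rw [← hfix]
    rfl
  have hgc : Continuous fun θ => g θ (ζ + w.1 θ) :=
    D.gc.comp (continuous_id.prodMk (continuous_const.add w.1.continuous))
  refine ⟨w.1, w.2, ?_, hgc, ?_⟩
  · rw [funext hwe]; exact P0_mean _ (hGc w)
  · intro θ
    have := P0_deriv _ (hGc w) θ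
    rw [avg_J J _ hgc, ← map_sub] at this
    have he : (⇑w.1) = P0 (fun θ => J (g θ (ζ + w.1 θ))) := funext hwe
    rw [← he] at this; exact this

end LS
end

noncomputable section

open scoped ContDiff

section LS
variable {V : Type*} [NormedAddCommGroup V] [InnerProductSpace ℝ V] [FiniteDimensional ℝ V]

def act (K : ℝ → V → ℝ) (ζ : V) (w G : ℝ → V) : ℝ :=
  ∫ θ in (0:ℝ)..(2 * π), (1 / 2 * ⟪G θ, w θ⟫ - K θ (ζ + w θ))

theorem int_inner_const (v : V) (w : ℝ → V) (hw : Continuous w) :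
    ∫ θ in (0:ℝ)..(2 * π), ⟪v, w θ⟫ = ⟪v, ∫ θ in (0:ℝ)..(2 * π), w θ⟫ :=
  (innerSL ℝ v).intervalIntegral_comp_comm (hw.intervalIntegrable _ _)

theorem loop_symm {J : V →L[ℝ] V} {K : ℝ → V → ℝ} {g : ℝ → V → V} {κ M : ℝ}
    (D : LSData J K g κ M) {w G w' G' : ℝ → V} (h : IsLoop J w G) (h' : IsLoop J w' G') :
    ∫ θ in (0:ℝ)..(2 * π), ⟪G' θ, w θ⟫ = ∫ θ in (0:ℝ)..(2 * π), ⟪G θ, w' θ⟫ := by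
  have c1 := h.Gc; have c2 := h'.Gc; have c3 := h.cont; have c4 := h'.cont
  have hd : ∀ θ, HasDerivAt (fun θ => ⟪w' θ, J (w θ)⟫)
      (⟪w' θ, J (J (G θ - avg G))⟫ + ⟪J (G' θ - avg G'), J (w θ)⟫) θ := fun θ =>
    (h'.deriv θ).inner ℝ (J.hasFDerivAt.comp_hasDerivAt θ (h.deriv θ))
  have e : ∀ θ, ⟪w' θ, J (J (G θ - avg G))⟫ + ⟪J (G' θ - avg G'), J (w θ)⟫ =
      (⟪G' θ, w θ⟫ - ⟪avg G', w θ⟫) - (⟪G θ, w' θ⟫ - ⟪avg G, w' θ⟫) := by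
    intro θ
    have := D.Jskew (w' θ) (J (G θ - avg G))
    rw [D.JJ] at this
    rw [D.JJ, ← inner_sub_left, ← inner_sub_left, real_inner_comm (w' θ) (G θ - avg G)]
    linarith
  have := intervalIntegral.integral_eq_sub_of_hasDerivAt (a := 0) (b := 2 * π) (fun θ _ => hd θ)
    (by simp_rw [e]; exact Continuous.intervalIntegrable (by fun_prop) _ _)
  have p1 := h.per 0
  have p2 := h'.per 0
  rw [zero_add] at p1 p2
  rw [p1, p2, sub_self] at this
  simp_rw [e] at this
  rw [intervalIntegral.integral_sub (Continuous.intervalIntegrable (by fun_prop) _ _)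
    (Continuous.intervalIntegrable (by fun_prop) _ _),
    intervalIntegral.integral_sub (Continuous.intervalIntegrable (by fun_prop) _ _)
    (Continuous.intervalIntegrable (by fun_prop) _ _),
    intervalIntegral.integral_sub (Continuous.intervalIntegrable (by fun_prop) _ _)
    (Continuous.intervalIntegrable (by fun_prop) _ _),
    int_inner_const _ _ c3, int_inner_const _ _ c4, h.mean, h'.mean] at this
  simp at this
  linarith

theorem loop_diff {J : V →L[ℝ] V} {K : ℝ → V → ℝ} {g : ℝ → V → V} {κ M : ℝ}
    (D : LSData J K g κ M) {ζ : V} {w w' G' : ℝ → V}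
    (h : IsLoop J w (fun θ => g θ (ζ + w θ))) (h' : IsLoop J w' G') {e : ℝ}
    (he : ∀ θ, ‖G' θ - g θ (ζ + w' θ)‖ ≤ e) (θ : ℝ) : ‖w' θ - w θ‖ ≤ 26 * e := by
  have hp := Real.pi_pos
  have c3 := h.cont; have c4 := h'.cont
  have hc : Continuous fun θ => w' θ - w θ := c4.sub c3
  have hper : Function.Periodic (fun θ => w' θ - w θ) (2 * π) := fun θ => by
    simp only [h.per, h'.per]
  obtain ⟨x, hx, hmax⟩ := (isCompact_Icc (a := (0:ℝ)) (b := 2 * π)).exists_isMaxOn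
    ⟨0, by constructor <;> positivity⟩ hc.norm.continuousOn
  have hall : ∀ θ, ‖w' θ - w θ‖ ≤ ‖w' x - w x‖ := fun θ => by
    obtain ⟨y, hy, hwy⟩ := hper.exists_mem_Ico₀ (by positivity) θ
    rw [hwy]; exact hmax ⟨hy.1, hy.2.le⟩
  set Δ := ‖w' x - w x‖
  have hb : ∀ τ, ‖G' τ - g τ (ζ + w τ)‖ ≤ e + κ * Δ := by
    intro τ
    have h1 := D.glip τ (ζ + w' τ) (ζ + w τ)
    rw [add_sub_add_left_eq_sub] at h1
    calc ‖G' τ - g τ (ζ + w τ)‖ = ‖(G' τ - g τ (ζ + w' τ)) + (g τ (ζ + w' τ) - g τ (ζ + w τ))‖ := by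
          congr 1; abel
      _ ≤ _ := (norm_add_le _ _).trans (add_le_add (he τ)
          (h1.trans (mul_le_mul_of_nonneg_left (hall τ) D.κ0)))
  have := poincare (fun θ => w' θ - w θ) _ (fun θ => (h'.deriv θ).sub (h.deriv θ))
    hper (by rw [intervalIntegral.integral_sub (c4.intervalIntegrable _ _)
      (c3.intervalIntegrable _ _), h.mean, h'.mean, sub_zero])
      ((e + κ * Δ) + (e + κ * Δ)) (fun τ => by
        rw [← map_sub, D.Jn, sub_sub_sub_comm, avg_sub _ _ h'.Gc h.Gc]
        exact (norm_sub_le _ _).trans (add_le_add (hb τ) (avg_norm_le _ _ hb))) x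
  change Δ ≤ _ at this
  refine (hall θ).trans ?_
  have h1 := D.κ1
  have h0 := D.κ0
  have h2 := Real.pi_lt_d2
  have hΔ : 0 ≤ Δ := norm_nonneg _
  have he0 : 0 ≤ e := (norm_nonneg _).trans (he 0)
  have h3 : 4 * π * κ ≤ 1 / 2 := by nlinarith
  have h4 : 4 * π * κ * Δ ≤ 1 / 2 * Δ := by gcongr
  nlinarith

theorem act_compare {J : V →L[ℝ] V} {K : ℝ → V → ℝ} {g : ℝ → V → V} {κ M : ℝ}
    (D : LSData J K g κ M) {ζ h : V} {w w' G' : ℝ → V}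
    (hw : IsLoop J w (fun θ => g θ (ζ + w θ))) (hw' : IsLoop J w' G') {e : ℝ}
    (he : ∀ θ, ‖G' θ - g θ (ζ + w' θ)‖ ≤ e) :
    |act K (ζ + h) w' G' - act K ζ w (fun θ => g θ (ζ + w θ)) +
      2 * π * ⟪avg (fun θ => g θ (ζ + w θ)), h⟫| ≤ 300 * e ^ 2 + ‖h‖ ^ 2 := by
  have hp := Real.pi_pos
  have h2 := Real.pi_lt_d2
  have c1 := hw.Gc; have c2 := hw'.Gc; have c3 := hw.cont; have c4 := hw'.cont
  set G := fun θ => g θ (ζ + w θ) with hG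
  have hsym := loop_symm D hw hw'
  have hΔ := loop_diff D hw hw' he
  have he0 : 0 ≤ e := (norm_nonneg _).trans (he 0)
  have hκ0 := D.κ0
  have hκ1 := D.κ1
  have k1 : Continuous fun θ => K θ (ζ + h + w' θ) :=
    D.Kc.comp (continuous_id.prodMk (continuous_const.add c4))
  have k2 : Continuous fun θ => K θ (ζ + w θ) :=
    D.Kc.comp (continuous_id.prodMk (continuous_const.add c3))
  have key : act K (ζ + h) w' G' - act K ζ w G + 2 * π * ⟪avg G, h⟫ =
      ∫ θ in (0:ℝ)..(2 * π), (1 / 2 * ⟪G' θ - G θ, w' θ - w θ⟫ -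
        (K θ (ζ + h + w' θ) - K θ (ζ + w θ) - ⟪G θ, h + (w' θ - w θ)⟫)) := by
    have i1 : 2 * π * ⟪avg G, h⟫ = ∫ θ in (0:ℝ)..(2 * π), ⟪G θ, h⟫ := by
      simp_rw [real_inner_comm h]
      rw [int_inner_const _ _ c1]
      unfold avg
      rw [inner_smul_right]; field_simp
    have i2 : ∀ θ, (1 / 2 * ⟪G' θ - G θ, w' θ - w θ⟫ -
        (K θ (ζ + h + w' θ) - K θ (ζ + w θ) - ⟪G θ, h + (w' θ - w θ)⟫)) =
        ((1 / 2 * ⟪G' θ, w' θ⟫ - K θ (ζ + h + w' θ)) - (1 / 2 * ⟪G θ, w θ⟫ - K θ (ζ + w θ)))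
          + ⟪G θ, h⟫ + 1 / 2 * (⟪G θ, w' θ⟫ - ⟪G' θ, w θ⟫) := by
      intro θ
      simp only [inner_sub_left, inner_sub_right, inner_add_right]
      ring
    simp_rw [i2]
    have a1 : Continuous fun θ => 1 / 2 * ⟪G' θ, w' θ⟫ - K θ (ζ + h + w' θ) :=
      (by fun_prop : Continuous fun θ => 1 / 2 * ⟪G' θ, w' θ⟫).sub k1
    have a2 : Continuous fun θ => 1 / 2 * ⟪G θ, w θ⟫ - K θ (ζ + w θ) :=
      (by fun_prop : Continuous fun θ => 1 / 2 * ⟪G θ, w θ⟫).sub k2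
    have a3 : Continuous fun θ => ⟪G θ, h⟫ := by fun_prop
    have a4 : Continuous fun θ => ⟪G θ, w' θ⟫ := by fun_prop
    have a5 : Continuous fun θ => ⟪G' θ, w θ⟫ := by fun_prop
    have a6 : Continuous fun θ => 1 / 2 * (⟪G θ, w' θ⟫ - ⟪G' θ, w θ⟫) := by fun_prop
    have a12 : Continuous fun θ => (1 / 2 * ⟪G' θ, w' θ⟫ - K θ (ζ + h + w' θ)) -
      (1 / 2 * ⟪G θ, w θ⟫ - K θ (ζ + w θ)) := a1.sub a2
    have a123 : Continuous fun θ => (1 / 2 * ⟪G' θ, w' θ⟫ - K θ (ζ + h + w' θ)) -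
      (1 / 2 * ⟪G θ, w θ⟫ - K θ (ζ + w θ)) + ⟪G θ, h⟫ := a12.add a3
    rw [i1, intervalIntegral.integral_add (a123.intervalIntegrable _ _)
        (a6.intervalIntegrable _ _),
      intervalIntegral.integral_add (a12.intervalIntegrable _ _)
        (a3.intervalIntegrable _ _),
      intervalIntegral.integral_sub (a1.intervalIntegrable _ _) (a2.intervalIntegrable _ _),
      intervalIntegral.integral_const_mul, intervalIntegral.integral_sub
        (a4.intervalIntegrable _ _) (a5.intervalIntegrable _ _), hsym]
    unfold act
    ring
  rw [key]
  have bd : ∀ θ, ‖(1 / 2 * ⟪G' θ - G θ, w' θ - w θ⟫ -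
        (K θ (ζ + h + w' θ) - K θ (ζ + w θ) - ⟪G θ, h + (w' θ - w θ)⟫))‖ ≤
        1 / 2 * ((2 * e) * (26 * e)) + κ * (‖h‖ + 26 * e) ^ 2 := by
    intro θ
    rw [Real.norm_eq_abs]
    refine (abs_sub _ _).trans (add_le_add ?_ ?_)
    · rw [abs_mul, abs_of_pos (by norm_num : (0:ℝ) < 1 / 2)]
      gcongr
      refine (abs_real_inner_le_norm _ _).trans ?_
      have : ‖G' θ - G θ‖ ≤ 2 * e := by
        have h1 := D.glip θ (ζ + w' θ) (ζ + w θ)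
        rw [add_sub_add_left_eq_sub] at h1
        have : ‖G' θ - G θ‖ ≤ e + κ * (26 * e) := calc
          ‖G' θ - G θ‖ = ‖(G' θ - g θ (ζ + w' θ)) + (g θ (ζ + w' θ) - g θ (ζ + w θ))‖ := by
            congr 1; simp only [hG]; abel
          _ ≤ _ := (norm_add_le _ _).trans (add_le_add (he θ)
            (h1.trans (mul_le_mul_of_nonneg_left (hΔ θ) D.κ0)))
        nlinarith
      exact mul_le_mul this (hΔ θ) (norm_nonneg _) (by positivity)
    · have h1 := D.Kt θ (ζ + w θ) (ζ + h + w' θ)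
      have e1 : ζ + h + w' θ - (ζ + w θ) = h + (w' θ - w θ) := by abel
      rw [e1] at h1
      refine h1.trans ?_
      gcongr
      exact (norm_add_le _ _).trans (add_le_add le_rfl (hΔ θ))
  have := intervalIntegral.norm_integral_le_of_norm_le_const (a := 0) (b := 2 * π)
    (fun θ _ => bd θ)
  rw [Real.norm_eq_abs] at this
  refine this.trans ?_
  rw [sub_zero, abs_of_pos (by positivity)]
  have q1 : (‖h‖ + 26 * e) ^ 2 ≤ 2 * ‖h‖ ^ 2 + 1352 * e ^ 2 := by nlinarith [sq_nonneg (‖h‖ - 26 * e)]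
  have q2 : κ * (‖h‖ + 26 * e) ^ 2 ≤ 1 / 100 * (2 * ‖h‖ ^ 2 + 1352 * e ^ 2) := by gcongr
  have q3 : 2 * π ≤ 6.3 := by linarith
  have q4 : 0 ≤ e ^ 2 := by positivity
  have q5 : 0 ≤ ‖h‖ ^ 2 := by positivity
  have q6 : 1 / 2 * ((2 * e) * (26 * e)) + κ * (‖h‖ + 26 * e) ^ 2 ≤
    40 * e ^ 2 + 1 / 10 * ‖h‖ ^ 2 := by nlinarith
  calc _ ≤ (40 * e ^ 2 + 1 / 10 * ‖h‖ ^ 2) * 6.3 := by gcongr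
    _ ≤ _ := by nlinarith

/-- The Lyapunov-Schmidt reduction together with minimisation. -/
theorem LS_main {J : V →L[ℝ] V} {K : ℝ → V → ℝ} {g : ℝ → V → V} {κ M : ℝ}
    (D : LSData J K g κ M)
    (hbd : ∀ ζ, ‖ζ‖ = 3 / 4 ∨ ‖ζ‖ = 5 / 4 →
      300 * M ^ 2 < - ∫ θ in (0:ℝ)..(2 * π), K θ ζ)
    (ζ1 : V) (hζ1 : ‖ζ1‖ = 1) (w1 G1 : ℝ → V) (hw1 : IsLoop J w1 G1) (e : ℝ)
    (he : ∀ θ, ‖G1 θ - g θ (ζ1 + w1 θ)‖ ≤ e) (hneg : act K ζ1 w1 G1 + 300 * e ^ 2 ≤ 0) :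
    ∃ (ζ : V) (w : ℝ → V), 3 / 4 < ‖ζ‖ ∧ ‖ζ‖ < 5 / 4 ∧
      (∀ θ, w (θ + 2 * π) = w θ) ∧ (∀ θ, HasDerivAt w (J (g θ (ζ + w θ))) θ) ∧
      (∀ θ, ‖w θ‖ ≤ 26 * M) ∧ act K ζ w (fun θ => g θ (ζ + w θ)) ≤ 0 := by
  choose w hw using exists_sol D
  set Ψ : V → ℝ := fun ζ => act K ζ (w ζ) (fun θ => g θ (ζ + w ζ θ)) with hΨ
  have hq : ∀ ζ h, |Ψ (ζ + h) - Ψ ζ + 2 * π * ⟪avg (fun θ => g θ (ζ + w ζ θ)), h⟫| ≤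
      2 * ‖h‖ ^ 2 := by
    intro ζ h
    have := act_compare D (h := h) (hw ζ) (hw (ζ + h)) (e := κ * ‖h‖) (fun θ => by
      refine (D.glip _ _ _).trans (le_of_eq ?_)
      congr 2; abel)
    refine this.trans ?_
    have h0 := D.κ0
    have h1 := D.κ1
    have : (κ * ‖h‖) ^ 2 ≤ (1 / 100 * ‖h‖) ^ 2 := by gcongr
    nlinarith [sq_nonneg ‖h‖]
  have hzero : IsLoop J (fun _ => (0 : V)) (fun _ => (0 : V)) :=
    ⟨fun _ => rfl, by simp, continuous_const, fun θ => by
      have : avg (fun _ : ℝ => (0 : V)) = 0 := by simp [avg]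
      simpa [this] using hasDerivAt_const θ (0 : V)⟩
  have hcmp : ∀ ζ w' G' e, IsLoop J w' G' → (∀ θ, ‖G' θ - g θ (ζ + w' θ)‖ ≤ e) →
      |act K ζ w' G' - Ψ ζ| ≤ 300 * e ^ 2 := by
    intro ζ w' G' e h1 h2
    have := act_compare D (h := 0) (hw ζ) h1 h2
    simpa using this
  have hcont : Continuous Ψ := by
    rw [continuous_iff_continuousAt]
    intro ζ
    have hl : Filter.Tendsto (fun y => Ψ ζ - 2 * π * ⟪avg (fun θ => g θ (ζ + w ζ θ)), y - ζ⟫ -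
        2 * ‖y - ζ‖ ^ 2) (nhds ζ) (nhds (Ψ ζ)) := by
      have : Continuous fun y => Ψ ζ - 2 * π * ⟪avg (fun θ => g θ (ζ + w ζ θ)), y - ζ⟫ -
        2 * ‖y - ζ‖ ^ 2 := by fun_prop
      simpa using this.tendsto ζ
    have hu : Filter.Tendsto (fun y => Ψ ζ - 2 * π * ⟪avg (fun θ => g θ (ζ + w ζ θ)), y - ζ⟫ +
        2 * ‖y - ζ‖ ^ 2) (nhds ζ) (nhds (Ψ ζ)) := by
      have : Continuous fun y => Ψ ζ - 2 * π * ⟪avg (fun θ => g θ (ζ + w ζ θ)), y - ζ⟫ +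
        2 * ‖y - ζ‖ ^ 2 := by fun_prop
      simpa using this.tendsto ζ
    refine tendsto_of_tendsto_of_tendsto_of_le_of_le hl hu (fun y => ?_) (fun y => ?_)
    · have := abs_le.mp (hq ζ (y - ζ))
      rw [add_sub_cancel] at this
      simp only; linarith
    · have := abs_le.mp (hq ζ (y - ζ))
      rw [add_sub_cancel] at this
      simp only; linarith
  have hbdΨ : ∀ ζ, ‖ζ‖ = 3 / 4 ∨ ‖ζ‖ = 5 / 4 → 0 < Ψ ζ := by
    intro ζ hζ
    have h1 := hbd ζ hζ
    have h2 := hcmp ζ _ _ M hzero (fun θ => by simpa using D.gM _ _)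
    have h3 := abs_le.mp h2
    have : act K ζ (fun _ => (0 : V)) (fun _ => 0) = - ∫ θ in (0:ℝ)..(2 * π), K θ ζ := by
      simp [act]
    rw [this] at h3
    linarith
  have hΨ1 : Ψ ζ1 ≤ 0 := by
    have := abs_le.mp (hcmp ζ1 w1 G1 e hw1 he)
    linarith
  have hcomp : IsCompact {ζ : V | 3 / 4 ≤ ‖ζ‖ ∧ ‖ζ‖ ≤ 5 / 4} := by
    refine (isCompact_closedBall (0 : V) (5 / 4)).of_isClosed_subset ?_ ?_
    · exact (isClosed_le continuous_const continuous_norm).inter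
        (isClosed_le continuous_norm continuous_const)
    · intro x hx; simpa using hx.2
  obtain ⟨ζ, hζ, hmin⟩ := hcomp.exists_isMinOn ⟨ζ1, by simp [hζ1]; norm_num⟩ hcont.continuousOn
  have hle : Ψ ζ ≤ 0 := (hmin (show ζ1 ∈ _ by simp [hζ1]; norm_num)).trans hΨ1
  have hlt1 : 3 / 4 < ‖ζ‖ := lt_of_le_of_ne hζ.1 fun h => by
    have := hbdΨ ζ (Or.inl h.symm); linarith
  have hlt2 : ‖ζ‖ < 5 / 4 := lt_of_le_of_ne hζ.2 fun h => by
    have := hbdΨ ζ (Or.inr h); linarith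
  have hloc : IsLocalMin Ψ ζ := by
    have : ∀ᶠ y in nhds ζ, 3 / 4 < ‖y‖ ∧ ‖y‖ < 5 / 4 :=
      (continuousAt_const.eventually_lt continuous_norm.continuousAt hlt1).and
        (continuous_norm.continuousAt.eventually_lt continuousAt_const hlt2)
    filter_upwards [this] with y hy
    exact hmin ⟨hy.1.le, hy.2.le⟩
  have havg : avg (fun θ => g θ (ζ + w ζ θ)) = 0 := by
    set a := avg (fun θ => g θ (ζ + w ζ θ)) with ha
    by_contra hne
    have hpos : 0 < ‖a‖ := norm_pos_iff.mpr hne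
    have htend : Filter.Tendsto (fun s : ℝ => ζ + s • a) (nhdsWithin 0 (Set.Ioi 0)) (nhds ζ) := by
      have : Continuous fun s : ℝ => ζ + s • a := by fun_prop
      have := this.tendsto 0
      simp only [zero_smul, add_zero] at this
      exact this.mono_left nhdsWithin_le_nhds
    have e1 := htend.eventually hloc
    have e2 : ∀ᶠ s : ℝ in nhdsWithin 0 (Set.Ioi 0), s ∈ Set.Ioo (0:ℝ) 1 :=
      Ioo_mem_nhdsGT (by norm_num)
    obtain ⟨s, h1, h2⟩ := (e1.and e2).exists
    have := abs_le.mp (hq ζ (s • a))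
    rw [inner_smul_right, real_inner_self_eq_norm_sq, norm_smul, Real.norm_eq_abs,
      abs_of_pos h2.1] at this
    have hpi := Real.pi_gt_three
    have h3 : 0 < s * ‖a‖ ^ 2 := by have := h2.1; positivity
    have h4 : (s * ‖a‖) ^ 2 ≤ s * ‖a‖ ^ 2 := by
      have : (s * ‖a‖) ^ 2 = s * (s * ‖a‖ ^ 2) := by ring
      rw [this]; nlinarith [h2.1, h2.2]
    nlinarith
  refine ⟨ζ, w ζ, hlt1, hlt2, (hw ζ).per, fun θ => ?_, fun θ => ?_, hle⟩
  · have := (hw ζ).deriv θ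
    rwa [havg, sub_zero] at this
  · have := loop_diff D (hw ζ) hzero (e := M) (fun θ => by simpa using D.gM _ _) θ
    simpa using this

end LS
end

noncomputable section

open scoped ContDiff

abbrev Vq : Type := EuclideanSpace ℝ (Fin 4)

theorem inner_E3 (x y : E3) : ⟪x, y⟫ = x 0 * y 0 + x 1 * y 1 + x 2 * y 2 := by
  simp [PiLp.inner_apply, Fin.sum_univ_three, mul_comm]

theorem inner_Vq (x y : Vq) : ⟪x, y⟫ = x 0 * y 0 + x 1 * y 1 + x 2 * y 2 + x 3 * y 3 := by
  simp [PiLp.inner_apply, Fin.sum_univ_four, mul_comm]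

theorem nsq_E3 (x : E3) : ‖x‖ ^ 2 = x 0 ^ 2 + x 1 ^ 2 + x 2 ^ 2 := by
  rw [← real_inner_self_eq_norm_sq, inner_E3]; ring

theorem nsq_Vq (x : Vq) : ‖x‖ ^ 2 = x 0 ^ 2 + x 1 ^ 2 + x 2 ^ 2 + x 3 ^ 2 := by
  rw [← real_inner_self_eq_norm_sq, inner_Vq]; ring

/-- `z i z̄` -/
def qm (z : Vq) : E3 := !₂[z 0 ^ 2 + z 1 ^ 2 - z 2 ^ 2 - z 3 ^ 2, 2 * (z 1 * z 2 + z 0 * z 3),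
  2 * (z 1 * z 3 - z 0 * z 2)]
/-- `z j z̄` -/
def Tm (z : Vq) : E3 := !₂[2 * (z 1 * z 2 - z 0 * z 3), z 0 ^ 2 - z 1 ^ 2 + z 2 ^ 2 - z 3 ^ 2,
  2 * (z 0 * z 1 + z 2 * z 3)]
/-- `z k z̄` -/
def Nm (z : Vq) : E3 := !₂[2 * (z 0 * z 2 + z 1 * z 3), 2 * (z 2 * z 3 - z 0 * z 1),
  z 0 ^ 2 - z 1 ^ 2 - z 2 ^ 2 + z 3 ^ 2]
/-- polarisation: `z i v̄ + v i z̄` -/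
def qB (z v : Vq) : E3 := !₂[2 * (z 0 * v 0 + z 1 * v 1 - z 2 * v 2 - z 3 * v 3),
  2 * (z 1 * v 2 + v 1 * z 2 + z 0 * v 3 + v 0 * z 3),
  2 * (z 1 * v 3 + v 1 * z 3 - z 0 * v 2 - v 0 * z 2)]
def TB (z v : Vq) : E3 := !₂[2 * (z 1 * v 2 + v 1 * z 2 - z 0 * v 3 - v 0 * z 3),
  2 * (z 0 * v 0 - z 1 * v 1 + z 2 * v 2 - z 3 * v 3),
  2 * (z 0 * v 1 + v 0 * z 1 + z 2 * v 3 + v 2 * z 3)]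
/-- right multiplication by `k` -/
def Jm : Vq →L[ℝ] Vq := LinearMap.toContinuousLinearMap
  { toFun := fun z => !₂[-z 3, z 2, -z 1, z 0]
    map_add' := fun x y => by ext i; fin_cases i <;> simp <;> ring
    map_smul' := fun r x => by ext i; fin_cases i <;> simp }

theorem Jm_apply (z : Vq) : Jm z = !₂[-z 3, z 2, -z 1, z 0] := rfl

/-- `n z j` -/
def Xm (n : E3) (z : Vq) : Vq :=
  !₂[-(n 1 * z 0 + n 2 * z 1 - n 0 * z 3), -(n 2 * z 0 + n 0 * z 2 - n 1 * z 1),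
     -n 0 * z 1 - n 1 * z 2 - n 2 * z 3, n 0 * z 0 + n 1 * z 3 - n 2 * z 2]

theorem hasDerivAt_eucl {n : ℕ} {x : ℝ → EuclideanSpace ℝ (Fin n)} {x' : EuclideanSpace ℝ (Fin n)}
    {t : ℝ} : HasDerivAt x x' t ↔ ∀ i, HasDerivAt (fun s => x s i) (x' i) t := by
  constructor
  · intro h i
    exact (EuclideanSpace.proj (𝕜 := ℝ) i).hasFDerivAt.comp_hasDerivAt t h
  · intro h
    have h1 : HasDerivAt (fun s => (fun i => x s i)) (fun i => x' i) t := hasDerivAt_pi.mpr h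
    exact (EuclideanSpace.equiv (Fin n) ℝ).symm.toContinuousLinearMap.hasFDerivAt.comp_hasDerivAt t h1

theorem qm_deriv {z : ℝ → Vq} {z' : Vq} {t : ℝ} (h : HasDerivAt z z' t) :
    HasDerivAt (fun s => qm (z s)) (qB (z t) z') t := by
  have h := hasDerivAt_eucl.mp h
  rw [hasDerivAt_eucl]
  intro i
  fin_cases i
  · have := ((((h 0).pow 2).add ((h 1).pow 2)).sub ((h 2).pow 2)).sub ((h 3).pow 2)
    refine (this.congr_deriv ?_)
    simp [qB]; ring
  · have := (((h 1).mul (h 2)).add ((h 0).mul (h 3))).const_mul 2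
    refine (this.congr_deriv ?_)
    simp [qB]; ring
  · have := (((h 1).mul (h 3)).sub ((h 0).mul (h 2))).const_mul 2
    refine (this.congr_deriv ?_)
    simp [qB]; ring

theorem Tm_deriv {z : ℝ → Vq} {z' : Vq} {t : ℝ} (h : HasDerivAt z z' t) :
    HasDerivAt (fun s => Tm (z s)) (TB (z t) z') t := by
  have h := hasDerivAt_eucl.mp h
  rw [hasDerivAt_eucl]
  intro i
  fin_cases i
  · have := (((h 1).mul (h 2)).sub ((h 0).mul (h 3))).const_mul 2
    refine (this.congr_deriv ?_)
    simp [TB]; ring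
  · have := ((((h 0).pow 2).sub ((h 1).pow 2)).add ((h 2).pow 2)).sub ((h 3).pow 2)
    refine (this.congr_deriv ?_)
    simp [TB]; ring
  · have := (((h 0).mul (h 1)).add ((h 2).mul (h 3))).const_mul 2
    refine (this.congr_deriv ?_)
    simp [TB]; ring

theorem nsq_deriv {z : ℝ → Vq} {z' : Vq} {t : ℝ} (h : HasDerivAt z z' t) :
    HasDerivAt (fun s => ‖z s‖ ^ 2) (2 * ⟪z t, z'⟫) t := h.norm_sq

theorem qm_smooth : ContDiff ℝ ∞ qm := by
  rw [contDiff_euclidean]; intro i; fin_cases i <;> simp [qm] <;> fun_prop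
theorem Tm_smooth : ContDiff ℝ ∞ Tm := by
  rw [contDiff_euclidean]; intro i; fin_cases i <;> simp [Tm] <;> fun_prop
theorem Nm_smooth : ContDiff ℝ ∞ Nm := by
  rw [contDiff_euclidean]; intro i; fin_cases i <;> simp [Nm] <;> fun_prop

theorem qm_norm (z : Vq) : ‖qm z‖ = ‖z‖ ^ 2 := by
  have : ‖qm z‖ ^ 2 = (‖z‖ ^ 2) ^ 2 := by rw [nsq_E3, nsq_Vq]; simp [qm]; ring
  exact (sq_eq_sq₀ (norm_nonneg _) (by positivity)).mp this
theorem Tm_norm (z : Vq) : ‖Tm z‖ = ‖z‖ ^ 2 := by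
  have : ‖Tm z‖ ^ 2 = (‖z‖ ^ 2) ^ 2 := by rw [nsq_E3, nsq_Vq]; simp [Tm]; ring
  exact (sq_eq_sq₀ (norm_nonneg _) (by positivity)).mp this
theorem Nm_norm (z : Vq) : ‖Nm z‖ = ‖z‖ ^ 2 := by
  have : ‖Nm z‖ ^ 2 = (‖z‖ ^ 2) ^ 2 := by rw [nsq_E3, nsq_Vq]; simp [Nm]; ring
  exact (sq_eq_sq₀ (norm_nonneg _) (by positivity)).mp this

theorem qm_neg (z : Vq) : qm (-z) = qm z := by ext i; fin_cases i <;> simp [qm]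
theorem qm_ne {z : Vq} (h : z ≠ 0) : qm z ≠ 0 := by
  rw [← norm_pos_iff, qm_norm]; positivity

theorem Jm_norm (z : Vq) : ‖Jm z‖ = ‖z‖ := by
  have : ‖Jm z‖ ^ 2 = (‖z‖) ^ 2 := by rw [nsq_Vq, nsq_Vq]; simp [Jm_apply]; ring
  exact (sq_eq_sq₀ (norm_nonneg _) (by positivity)).mp this
theorem Jm_JJ (v w : Vq) : ⟪Jm v, Jm w⟫ = ⟪v, w⟫ := by
  rw [inner_Vq, inner_Vq]; simp [Jm_apply]; ring
theorem Jm_skew (v w : Vq) : ⟪Jm v, w⟫ = - ⟪v, Jm w⟫ := by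
  rw [inner_Vq, inner_Vq]; simp [Jm_apply]; ring
theorem Jm_sq (v : Vq) : Jm (Jm v) = -v := by
  ext i; fin_cases i <;> simp [Jm_apply]

/-- rotation in the domain -/
def rot (θ : ℝ) (z : Vq) : Vq := cos (θ / 2) • z + sin (θ / 2) • Jm z

theorem rot_norm (θ : ℝ) (z : Vq) : ‖rot θ z‖ = ‖z‖ := by
  have : ‖rot θ z‖ ^ 2 = (‖z‖) ^ 2 := by
    rw [nsq_Vq, nsq_Vq]; simp [Jm_apply, rot]
    linear_combination (z 0 ^ 2 + z 1 ^ 2 + z 2 ^ 2 + z 3 ^ 2) * (sin_sq_add_cos_sq (θ / 2))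
  exact (sq_eq_sq₀ (norm_nonneg _) (by positivity)).mp this

theorem rot_qm (θ : ℝ) (z : Vq) : qm (rot θ z) = cos θ • qm z + sin θ • Tm z := by
  have e : θ = 2 * (θ / 2) := by ring
  have hc : cos θ = cos (θ / 2) ^ 2 - sin (θ / 2) ^ 2 := by
    conv_lhs => rw [e, cos_two_mul']
  have hs : sin θ = 2 * sin (θ / 2) * cos (θ / 2) := by conv_lhs => rw [e, sin_two_mul]
  rw [hc, hs]
  ext i; fin_cases i <;> simp [qm, Tm, rot, Jm_apply] <;> ring

theorem rot_Tm (θ : ℝ) (z : Vq) : Tm (rot θ z) = cos θ • Tm z - sin θ • qm z := by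
  have e : θ = 2 * (θ / 2) := by ring
  have hc : cos θ = cos (θ / 2) ^ 2 - sin (θ / 2) ^ 2 := by
    conv_lhs => rw [e, cos_two_mul']
  have hs : sin θ = 2 * sin (θ / 2) * cos (θ / 2) := by conv_lhs => rw [e, sin_two_mul]
  rw [hc, hs]
  ext i; fin_cases i <;> simp [qm, Tm, rot, Jm_apply] <;> ring

theorem rot_add (θ : ℝ) (x y : Vq) : rot θ (x + y) = rot θ x + rot θ y := by
  simp only [rot, map_add, smul_add]; abel
theorem rot_sub (θ : ℝ) (x y : Vq) : rot θ (x - y) = rot θ x - rot θ y := by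
  simp only [rot, map_sub, smul_sub]; abel
theorem rot_smul (θ r : ℝ) (x : Vq) : rot θ (r • x) = r • rot θ x := by
  simp only [rot, map_smul, smul_add]; simp only [smul_smul, mul_comm]
theorem rot_Jm (θ : ℝ) (x : Vq) : rot θ (Jm x) = Jm (rot θ x) := by
  simp only [rot, map_add, map_smul]
theorem rot_neg_rot (θ : ℝ) (x : Vq) : rot θ (rot (-θ) x) = x := by
  have h := sin_sq_add_cos_sq (θ / 2)
  have e : -θ / 2 = -(θ / 2) := by ring
  ext i; fin_cases i <;> simp [rot, Jm_apply, e]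
  · linear_combination x 0 * h
  · linear_combination x 1 * h
  · linear_combination x 2 * h
  · linear_combination x 3 * h
theorem rot_inner (θ : ℝ) (x y : Vq) : ⟪rot (-θ) x, y⟫ = ⟪x, rot θ y⟫ := by
  have e : -θ / 2 = -(θ / 2) := by ring
  simp only [rot, e, cos_neg, sin_neg, inner_add_left, inner_add_right, inner_smul_left,
    inner_smul_right, conj_trivial, Jm_skew]
  ring
theorem rot_two_pi (θ : ℝ) (x : Vq) : rot (θ + 2 * π) x = - rot θ x := by
  have e : (θ + 2 * π) / 2 = θ / 2 + π := by ring
  simp only [rot, e, cos_add_pi, sin_add_pi, neg_smul]; abel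
theorem rot_cont : Continuous fun x : ℝ × Vq => rot x.1 x.2 := by
  unfold rot; fun_prop

theorem rot_deriv {u : ℝ → Vq} {u' : Vq} {θ : ℝ} (h : HasDerivAt u u' θ) :
    HasDerivAt (fun s => rot s (u s)) (rot θ u' + (1 / 2 : ℝ) • Jm (rot θ (u θ))) θ := by
  have hh : HasDerivAt (fun s : ℝ => s / 2) (1 / 2) θ := (hasDerivAt_id θ).div_const 2
  have hJ := Jm.hasFDerivAt.comp_hasDerivAt θ h
  have := ((hh.cos).smul h).add ((hh.sin).smul hJ)
  refine this.congr_deriv ?_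
  ext i
  simp [rot, Jm_sq]
  ring

/- algebraic identities for `X = n z j` -/
theorem Xm_grad (n : E3) (z v : Vq) : 2 * ⟪Xm n z, v⟫ = - ⟪n, qB z (Jm v)⟫ := by
  rw [inner_Vq, inner_E3]; simp [Xm, qB, Jm_apply]; ring
theorem TB_Xm (n : E3) (z : Vq) : TB z (Xm n z) = -(2 * ‖z‖ ^ 2) • n := by
  rw [nsq_Vq]; ext i; fin_cases i <;> simp [TB, Xm] <;> ring
theorem inner_Xm (n : E3) (z : Vq) : ⟪z, Xm n z⟫ = - ⟪Tm z, n⟫ := by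
  rw [inner_Vq, inner_E3]; simp [Xm, Tm]; ring
theorem qB_Xm (n : E3) (z : Vq) :
    ‖z‖ ^ 2 • qB z (Xm n z) = (2 * ⟪n, qm z⟫) • Tm z - (2 * ⟪n, Tm z⟫) • qm z := by
  rw [nsq_Vq, inner_E3, inner_E3]; ext i; fin_cases i <;> simp [qB, Xm, qm, Tm] <;> ring
theorem inner_qm_qB (z v : Vq) : ⟪qm z, qB z v⟫ = 2 * ‖z‖ ^ 2 * ⟪z, v⟫ := by
  rw [nsq_Vq, inner_E3, inner_Vq]; simp [qB, qm]; ring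
theorem qB_self (z : Vq) : qB z z = (2 : ℝ) • qm z := by
  ext i; fin_cases i <;> simp [qB, qm] <;> ring

end

noncomputable section
open scoped ContDiff

/-- partial gradient in the second variable -/
def gz (Q : ℝ × Vq → ℝ) (t : ℝ) (z : Vq) : Vq :=
  (InnerProductSpace.toDual ℝ Vq).symm
    ((fderiv ℝ Q (t, z)).comp (ContinuousLinearMap.inr ℝ ℝ Vq))

theorem gz_inner (Q : ℝ × Vq → ℝ) (t : ℝ) (z v : Vq) :
    ⟪gz Q t z, v⟫ = fderiv ℝ Q (t, z) (0, v) := by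
  unfold gz
  rw [InnerProductSpace.toDual_symm_apply]
  simp

theorem gz_sub_norm (Q : ℝ × Vq → ℝ) (t s : ℝ) (z y : Vq) :
    ‖gz Q t z - gz Q s y‖ ≤ ‖fderiv ℝ Q (t, z) - fderiv ℝ Q (s, y)‖ := by
  unfold gz
  rw [← map_sub, LinearIsometryEquiv.norm_map, ← ContinuousLinearMap.sub_comp]
  refine (ContinuousLinearMap.opNorm_comp_le _ _).trans ?_
  exact mul_le_of_le_one_right (norm_nonneg _) (ContinuousLinearMap.norm_inr_le_one ℝ ℝ Vq)

theorem gz_norm (Q : ℝ × Vq → ℝ) (t : ℝ) (z : Vq) :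
    ‖gz Q t z‖ ≤ ‖fderiv ℝ Q (t, z)‖ := by
  unfold gz
  rw [LinearIsometryEquiv.norm_map]
  refine (ContinuousLinearMap.opNorm_comp_le _ _).trans ?_
  exact mul_le_of_le_one_right (norm_nonneg _) (ContinuousLinearMap.norm_inr_le_one ℝ ℝ Vq)

structure PB (Q : ℝ × Vq → ℝ) (C : ℝ) : Prop where
  c0 : 0 ≤ C
  b : ∀ t z, |Q (t, z)| ≤ C
  g : ∀ t z, ‖gz Q t z‖ ≤ C
  gl : ∀ t z y, ‖gz Q t z - gz Q t y‖ ≤ C * ‖z - y‖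
  ty : ∀ t z y, |Q (t, y) - Q (t, z) - ⟪gz Q t z, y - z⟫| ≤ C * ‖y - z‖ ^ 2
  t0 : ∀ t z, |Q (t, z) - Q (0, z)| ≤ C * |t|
  g0 : ∀ t z, ‖gz Q t z - gz Q 0 z‖ ≤ C * |t|
  cont : Continuous Q
  gcont : ∀ t, Continuous (gz Q t)
  curve : ∀ t z v, HasDerivAt (fun s : ℝ => Q (t, z + s • v)) ⟪gz Q t z, v⟫ 0

theorem PB.mono {Q : ℝ × Vq → ℝ} {C C' : ℝ} (h : PB Q C) (hC : C ≤ C') : PB Q C' where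
  c0 := h.c0.trans hC
  b t z := (h.b t z).trans hC
  g t z := (h.g t z).trans hC
  gl t z y := (h.gl t z y).trans (by gcongr)
  ty t z y := (h.ty t z y).trans (by gcongr)
  t0 t z := (h.t0 t z).trans (by gcongr)
  g0 t z := (h.g0 t z).trans (by gcongr)
  cont := h.cont
  gcont := h.gcont
  curve := h.curve

theorem exists_PB (Q : ℝ × Vq → ℝ) (hQ : ContDiff ℝ ∞ Q) (hc : HasCompactSupport Q) :
    ∃ C, PB Q C := by
  obtain ⟨C, h0, h1, h2, h3, h4, h5⟩ := nice_bounds Q hQ hc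
  have e1 : ∀ (t : ℝ) (z y : Vq), ‖((t, z) : ℝ × Vq) - (t, y)‖ = ‖z - y‖ := by
    intro t z y; simp [Prod.norm_def]
  have e2 : ∀ (t s : ℝ) (z : Vq), ‖((t, z) : ℝ × Vq) - (s, z)‖ = |t - s| := by
    intro t z y; simp [Prod.norm_def]
  have hgl : ∀ t z y, ‖gz Q t z - gz Q t y‖ ≤ C * ‖z - y‖ := fun t z y => by
    have := (gz_sub_norm Q t t z y).trans (h3 _ _)
    rwa [e1] at this
  refine ⟨C, h0, fun t z => h1 _, fun t z => (gz_norm Q t z).trans (h2 _), hgl, ?_, ?_, ?_,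
    hQ.continuous, ?_, ?_⟩
  · intro t z y
    have := h4 (t, z) (t, y)
    rw [e1] at this
    rw [gz_inner]
    simpa using this
  · intro t z
    have := h5 (0, z) (t, z)
    rwa [e2, sub_zero] at this
  · intro t z
    have := (gz_sub_norm Q t 0 z z).trans (h3 _ _)
    rwa [e2, sub_zero] at this
  · intro t
    have : LipschitzWith (Real.toNNReal C) (gz Q t) :=
      LipschitzWith.of_dist_le_mul fun x y => by
        rw [dist_eq_norm, dist_eq_norm, Real.coe_toNNReal _ h0]; exact hgl t x y
    exact this.continuous
  · intro t z v
    rw [gz_inner]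
    have hd : HasFDerivAt Q (fderiv ℝ Q (t, z)) (t, z + (0:ℝ) • v) := by
      simpa using (hQ.differentiable (by simp) (t, z)).hasFDerivAt
    have hl : HasDerivAt (fun s : ℝ => ((t, z + s • v) : ℝ × Vq)) (0, v) 0 := by
      refine (hasDerivAt_const _ _).prodMk ?_
      simpa using ((hasDerivAt_id (0:ℝ)).smul_const v).const_add z
    exact hd.comp_hasDerivAt (0:ℝ) hl

variable (f : Sph → ℝ) (bb : ContDiffBump (0:ℝ))

/-- denominators -/
def rh (t : ℝ) (z : Vq) : ℝ := 1 + t * bb t * fext f (qm z)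

def BQ (x : ℝ × Vq) : ℝ :=
  ann x.2 * (bb x.1 * (‖x.2‖ ^ 2 * fext f (qm x.2) / rh f bb x.1 x.2))
def DQ (x : ℝ × Vq) : ℝ :=
  ann x.2 * (bb x.1 * (‖x.2‖ ^ 2 / rh f bb x.1 x.2 - 1) ^ 2)

variable {f bb}

theorem rh_half (hb : ∀ x, bb.rOut * |f x| ≤ 1 / 2) (t : ℝ) (z : Vq) : 1 / 2 ≤ rh f bb t z := by
  have h1 : |t * bb t| ≤ bb.rOut := by
    by_cases h : |t| < bb.rOut
    · rw [abs_mul, abs_of_nonneg bb.nonneg]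
      exact (mul_le_of_le_one_right (abs_nonneg _) bb.le_one).trans h.le
    · rw [bb.zero_of_le_dist (by simpa using h)]; simpa using bb.rOut_pos.le
  have h2 : |t * bb t * fext f (qm z)| ≤ 1 / 2 := by
    rw [abs_mul]
    exact (mul_le_mul_of_nonneg_right h1 (abs_nonneg _)).trans (hb _)
  have := neg_le_of_abs_le h2
  unfold rh; linarith

theorem rh_contDiffAt (hf : SmoothSph f) (x : ℝ × Vq) (hx : x.2 ≠ 0) :
    ContDiffAt ℝ ∞ (fun x : ℝ × Vq => fext f (qm x.2)) x ∧
    ContDiffAt ℝ ∞ (fun x : ℝ × Vq => rh f bb x.1 x.2) x := by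
  have h1 : ContDiffAt ℝ ∞ (fun x : ℝ × Vq => fext f (qm x.2)) x :=
    ContDiffAt.comp (g := fext f) (f := fun x : ℝ × Vq => qm x.2) x
      (fext_contDiffAt f hf (qm x.2) (qm_ne hx))
      (qm_smooth.contDiffAt.comp x contDiffAt_snd)
  refine ⟨h1, ?_⟩
  unfold rh
  have h2 : ContDiffAt ℝ ∞ (fun x : ℝ × Vq => bb x.1) x :=
    (bb.contDiff (n := ⊤)).contDiffAt.comp x contDiffAt_fst
  exact contDiffAt_const.add ((contDiffAt_fst.mul h2).mul h1)

theorem BQ_smooth (hf : SmoothSph f) (hb : ∀ x, bb.rOut * |f x| ≤ 1 / 2) :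
    ContDiff ℝ ∞ (BQ f bb) := by
  refine ann_mul_contDiff (fun x : ℝ × Vq => x.2) contDiff_snd _ fun x hx => ?_
  obtain ⟨h1, h2⟩ := rh_contDiffAt (bb := bb) hf x hx
  have h3 : ContDiffAt ℝ ∞ (fun x : ℝ × Vq => bb x.1) x :=
    (bb.contDiff (n := ⊤)).contDiffAt.comp x contDiffAt_fst
  have h4 : ContDiffAt ℝ ∞ (fun x : ℝ × Vq => ‖x.2‖ ^ 2) x :=
    (contDiff_snd.norm_sq ℝ).contDiffAt
  exact h3.mul ((h4.mul h1).div h2 (by linarith [rh_half hb x.1 x.2]))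

theorem DQ_smooth (hf : SmoothSph f) (hb : ∀ x, bb.rOut * |f x| ≤ 1 / 2) :
    ContDiff ℝ ∞ (DQ f bb) := by
  refine ann_mul_contDiff (fun x : ℝ × Vq => x.2) contDiff_snd _ fun x hx => ?_
  obtain ⟨h1, h2⟩ := rh_contDiffAt (bb := bb) hf x hx
  have h3 : ContDiffAt ℝ ∞ (fun x : ℝ × Vq => bb x.1) x :=
    (bb.contDiff (n := ⊤)).contDiffAt.comp x contDiffAt_fst
  have h4 : ContDiffAt ℝ ∞ (fun x : ℝ × Vq => ‖x.2‖ ^ 2) x :=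
    (contDiff_snd.norm_sq ℝ).contDiffAt
  exact h3.mul (((h4.div h2 (by linarith [rh_half hb x.1 x.2])).sub contDiffAt_const).pow 2)

theorem supp_aux (G : ℝ × Vq → ℝ) :
    HasCompactSupport (fun x : ℝ × Vq => ann x.2 * (bb x.1 * G x)) := by
  have hK : IsCompact (tsupport bb ×ˢ tsupport (ann : Vq → ℝ)) :=
    bb.hasCompactSupport.isCompact.prod (ann_compact (W := Vq)).isCompact
  refine HasCompactSupport.intro hK fun x hx => ?_
  by_cases h1 : x.1 ∈ tsupport bb
  · have h2 : x.2 ∉ tsupport (ann : Vq → ℝ) := fun h => hx ⟨h1, h⟩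
    rw [image_eq_zero_of_notMem_tsupport h2, zero_mul]
  · rw [image_eq_zero_of_notMem_tsupport h1]; simp

theorem exists_PB2 (hf : SmoothSph f) (hb : ∀ x, bb.rOut * |f x| ≤ 1 / 2) :
    ∃ C, 1 ≤ C ∧ PB (BQ f bb) C ∧ PB (DQ f bb) C := by
  obtain ⟨C1, h1⟩ := exists_PB (BQ f bb) (BQ_smooth hf hb) (supp_aux _)
  obtain ⟨C2, h2⟩ := exists_PB (DQ f bb) (DQ_smooth hf hb) (supp_aux _)
  exact ⟨max 1 (max C1 C2), le_max_left _ _,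
    h1.mono ((le_max_left _ _).trans (le_max_right _ _)),
    h2.mono ((le_max_right _ _).trans (le_max_right _ _))⟩

theorem BQ_neg (t : ℝ) (z : Vq) : BQ f bb (t, -z) = BQ f bb (t, z) := by
  have : ann (-z) = ann z := by simp [ann, ContDiffBump.neg]
  simp [BQ, rh, qm_neg, this]
theorem DQ_neg (t : ℝ) (z : Vq) : DQ f bb (t, -z) = DQ f bb (t, z) := by
  have : ann (-z) = ann z := by simp [ann, ContDiffBump.neg]
  simp [DQ, rh, qm_neg, this]

theorem gz_neg {Q : ℝ × Vq → ℝ} {C : ℝ} (h : PB Q C) (he : ∀ t z, Q (t, -z) = Q (t, z)) (t : ℝ)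
    (z : Vq) : gz Q t (-z) = - gz Q t z := by
  refine ext_inner_right ℝ fun v => ?_
  have h1 := h.curve t (-z) v
  have h2 := h.curve t z (-v)
  have : (fun s : ℝ => Q (t, -z + s • v)) = fun s : ℝ => Q (t, z + s • (-v)) := by
    funext s; rw [← he]; congr 2; simp [add_comm]
  rw [this] at h1
  rw [h1.unique h2]; simp

end

noncomputable section
open scoped ContDiff

structure Ctx (f : Sph → ℝ) (bb : ContDiffBump (0:ℝ)) (C : ℝ) : Prop where
  hf : SmoothSph f
  hb : ∀ x, bb.rOut * |f x| ≤ 1 / 2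
  C1 : 1 ≤ C
  B : PB (BQ f bb) C
  D : PB (DQ f bb) C

structure Sm (bb : ContDiffBump (0:ℝ)) (C t : ℝ) : Prop where
  t0 : t ≠ 0
  e : √|t| * (10 ^ 4 * C ^ 2) ≤ 1
  r : |t| ≤ bb.rIn

def ph (f : Sph → ℝ) (bb : ContDiffBump (0:ℝ)) (t : ℝ) (z : Vq) : ℝ :=
  -(t / 4) * BQ f bb (t, z) - √|t| / 8 * DQ f bb (t, z)
def gp (f : Sph → ℝ) (bb : ContDiffBump (0:ℝ)) (t : ℝ) (z : Vq) : Vq :=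
  (-(t / 4)) • gz (BQ f bb) t z - (√|t| / 8) • gz (DQ f bb) t z
def Kp (f : Sph → ℝ) (bb : ContDiffBump (0:ℝ)) (t θ : ℝ) (ζ : Vq) : ℝ := ph f bb t (rot θ ζ)
def gk (f : Sph → ℝ) (bb : ContDiffBump (0:ℝ)) (t θ : ℝ) (ζ : Vq) : Vq :=
  rot (-θ) (gp f bb t (rot θ ζ))

variable {f : Sph → ℝ} {bb : ContDiffBump (0:ℝ)} {C t : ℝ}

theorem Sm.bt (h : Sm bb C t) : bb t = 1 :=
  bb.one_of_mem_closedBall (by simpa using h.r)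
theorem bb_zero : bb 0 = 1 :=
  bb.one_of_mem_closedBall (by simpa using bb.rIn_pos.le)
theorem Sm.epos (h : Sm bb C t) : 0 < √|t| := Real.sqrt_pos.mpr (abs_pos.mpr h.t0)
theorem tabs (t : ℝ) : |t| = √|t| ^ 2 := (Real.sq_sqrt (abs_nonneg t)).symm

theorem Sm.eC (h : Sm bb C t) (hC : 1 ≤ C) : √|t| * C ≤ 1 / 10 ^ 4 := by
  have := h.e; have := h.epos
  rw [le_div_iff₀ (by norm_num)]
  nlinarith [mul_le_mul_of_nonneg_left hC (mul_nonneg h.epos.le (by linarith : (0:ℝ) ≤ C))]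
theorem Sm.e1 (h : Sm bb C t) (hC : 1 ≤ C) : √|t| ≤ 1 / 10 ^ 4 := by
  have := h.eC hC; nlinarith [h.epos]

theorem comb_le (h : Sm bb C t) (hC : 1 ≤ C) {x : ℝ} (hx : 0 ≤ x) :
    |t| / 4 * (C * x) + √|t| / 8 * (C * x) ≤ √|t| * C * x := by
  have h1 := h.e1 hC
  have h2 := h.epos
  have h3 := tabs t
  generalize √|t| = ε at *
  generalize |t| = T at *
  subst h3
  have : ε ^ 2 / 4 + ε / 8 ≤ ε := by nlinarith
  nlinarith [mul_le_mul_of_nonneg_right this (by positivity : 0 ≤ C * x)]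

theorem gp_bd (X : Ctx f bb C) (h : Sm bb C t) (z : Vq) : ‖gp f bb t z‖ ≤ √|t| * C := by
  have := comb_le h X.C1 (zero_le_one)
  unfold gp
  refine (norm_sub_le _ _).trans ?_
  rw [norm_smul, norm_smul, norm_neg, Real.norm_eq_abs, Real.norm_eq_abs, abs_div,
    abs_of_nonneg (by positivity : 0 ≤ √|t| / 8), abs_of_nonneg (by positivity : (0:ℝ) ≤ 4)]
  have h1 := mul_le_mul_of_nonneg_left (X.B.g t z) (by positivity : 0 ≤ |t| / 4)
  have h2 := mul_le_mul_of_nonneg_left (X.D.g t z) (by positivity : 0 ≤ √|t| / 8)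
  linarith

theorem gp_lip (X : Ctx f bb C) (h : Sm bb C t) (z y : Vq) :
    ‖gp f bb t z - gp f bb t y‖ ≤ √|t| * C * ‖z - y‖ := by
  have := comb_le h X.C1 (norm_nonneg (z - y))
  have e : gp f bb t z - gp f bb t y = (-(t / 4)) • (gz (BQ f bb) t z - gz (BQ f bb) t y)
    - (√|t| / 8) • (gz (DQ f bb) t z - gz (DQ f bb) t y) := by
    unfold gp; simp only [smul_sub]; abel
  rw [e]
  refine (norm_sub_le _ _).trans ?_
  rw [norm_smul, norm_smul, norm_neg, Real.norm_eq_abs, Real.norm_eq_abs, abs_div,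
    abs_of_nonneg (by positivity : 0 ≤ √|t| / 8), abs_of_nonneg (by positivity : (0:ℝ) ≤ 4)]
  have h1 := mul_le_mul_of_nonneg_left (X.B.gl t z y) (by positivity : 0 ≤ |t| / 4)
  have h2 := mul_le_mul_of_nonneg_left (X.D.gl t z y) (by positivity : 0 ≤ √|t| / 8)
  linarith

theorem ph_ty (X : Ctx f bb C) (h : Sm bb C t) (z y : Vq) :
    |ph f bb t y - ph f bb t z - ⟪gp f bb t z, y - z⟫| ≤ √|t| * C * ‖y - z‖ ^ 2 := by
  have := comb_le h X.C1 (sq_nonneg ‖y - z‖)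
  have e : ph f bb t y - ph f bb t z - ⟪gp f bb t z, y - z⟫ =
    (-(t / 4)) * (BQ f bb (t, y) - BQ f bb (t, z) - ⟪gz (BQ f bb) t z, y - z⟫)
    - (√|t| / 8) * (DQ f bb (t, y) - DQ f bb (t, z) - ⟪gz (DQ f bb) t z, y - z⟫) := by
    unfold ph gp; rw [inner_sub_left, real_inner_smul_left, real_inner_smul_left]; ring
  rw [e]
  refine (abs_sub _ _).trans ?_
  rw [abs_mul, abs_mul, abs_neg, abs_div,
    abs_of_nonneg (by positivity : 0 ≤ √|t| / 8), abs_of_nonneg (by positivity : (0:ℝ) ≤ 4)]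
  have h1 := mul_le_mul_of_nonneg_left (X.B.ty t z y) (by positivity : 0 ≤ |t| / 4)
  have h2 := mul_le_mul_of_nonneg_left (X.D.ty t z y) (by positivity : 0 ≤ √|t| / 8)
  linarith

theorem ph_cont (X : Ctx f bb C) : Continuous (ph f bb t) := by
  have h1 := X.B.cont; have h2 := X.D.cont
  unfold ph; fun_prop
theorem gp_cont (X : Ctx f bb C) : Continuous (gp f bb t) := by
  have h1 := X.B.gcont t; have h2 := X.D.gcont t
  unfold gp; fun_prop

theorem lsdata (X : Ctx f bb C) (h : Sm bb C t) :
    LSData Jm (Kp f bb t) (gk f bb t) (√|t| * C) (√|t| * C) where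
  Jn := Jm_norm
  JJ := Jm_JJ
  Jskew := Jm_skew
  Kc := Continuous.comp (g := ph f bb t) (f := fun x : ℝ × Vq => rot x.1 x.2) (ph_cont X) rot_cont
  gc := by
    have h1 : Continuous fun x : ℝ × Vq => (-x.1, gp f bb t (rot x.1 x.2)) :=
      continuous_fst.neg.prodMk (Continuous.comp (g := gp f bb t) (f := fun x : ℝ × Vq => rot x.1 x.2) (gp_cont X) rot_cont)
    exact rot_cont.comp (f := fun x : ℝ × Vq => (-x.1, gp f bb t (rot x.1 x.2))) h1
  gper θ x := by
    have hn : ∀ z, gp f bb t (-z) = - gp f bb t z := fun z => by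
      unfold gp; rw [gz_neg X.B BQ_neg, gz_neg X.D DQ_neg]; simp only [smul_neg]; abel
    have e2 : ∀ y, rot (-(θ + 2 * π)) y = - rot (-θ) y := fun y => by
      have := rot_two_pi (-(θ + 2 * π)) y
      rw [show -(θ + 2 * π) + 2 * π = -θ by ring] at this
      rw [this, neg_neg]
    unfold gk
    rw [rot_two_pi, hn, e2]
    have : rot (-θ) (-(gp f bb t (rot θ x))) = - rot (-θ) (gp f bb t (rot θ x)) := by
      have := rot_smul (-θ) (-1) (gp f bb t (rot θ x)); simpa using this
    rw [this, neg_neg]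
  glip θ x y := by
    unfold gk
    rw [← rot_sub, rot_norm]
    refine (gp_lip X h _ _).trans_eq ?_
    rw [← rot_sub, rot_norm]
  Kt θ x y := by
    unfold gk Kp
    rw [rot_inner, rot_sub]
    refine (ph_ty X h _ _).trans_eq ?_
    rw [← rot_sub, rot_norm]
  gM θ x := by unfold gk; rw [rot_norm]; exact gp_bd X h _
  κ0 := mul_nonneg h.epos.le (by linarith [X.C1])
  κ1 := by have := h.eC X.C1; linarith

theorem DQ_zero (z : Vq) (h1 : 1 / 2 ≤ ‖z‖) (h2 : ‖z‖ ≤ 2) :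
    DQ f bb (0, z) = (‖z‖ ^ 2 - 1) ^ 2 := by
  simp [DQ, rh, ann_one h1 h2, bb_zero]

theorem bdry (X : Ctx f bb C) (h : Sm bb C t) (ζ : Vq) (hζ : ‖ζ‖ = 3 / 4 ∨ ‖ζ‖ = 5 / 4) :
    300 * (√|t| * C) ^ 2 < - ∫ θ in (0:ℝ)..(2 * π), Kp f bb t θ ζ := by
  have hC := X.C1
  have he := h.epos
  have h4 := h.eC hC
  have h5 := h.e
  have hd : ∀ θ, Kp f bb t θ ζ ≤ -(√|t| / 50) := by
    intro θ
    have hn : ‖rot θ ζ‖ = ‖ζ‖ := rot_norm _ _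
    have hz : DQ f bb (0, rot θ ζ) = (‖ζ‖ ^ 2 - 1) ^ 2 := by
      rw [DQ_zero, hn] <;> rw [hn] <;> rcases hζ with h | h <;> rw [h] <;> norm_num
    have h0 : 19 / 100 ≤ DQ f bb (0, rot θ ζ) := by
      rw [hz]; rcases hζ with h | h <;> rw [h] <;> norm_num
    have h1 := abs_le.mp (X.D.t0 t (rot θ ζ))
    have h2 := X.B.b t (rot θ ζ)
    have h3 : -(t / 4) * BQ f bb (t, rot θ ζ) ≤ |t| / 4 * C := by
      refine (le_abs_self _).trans ?_
      rw [abs_mul, abs_neg, abs_div, abs_of_nonneg (by positivity : (0:ℝ) ≤ 4)]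
      gcongr
    have ht := tabs t
    have h8 := h.e1 hC
    have hB := abs_nonneg (BQ f bb (t, rot θ ζ))
    have h6 : C * |t| ≤ 1 / 100 := by
      have : C * |t| = √|t| * (√|t| * C) := by nlinarith
      rw [this]; nlinarith
    have h7 : |t| / 4 * C ≤ √|t| * (1 / 10 ^ 4) := by
      have : |t| / 4 * C = √|t| * (√|t| * C) / 4 := by nlinarith
      rw [this]; nlinarith
    unfold Kp ph
    nlinarith
  have hi : ∫ θ in (0:ℝ)..(2 * π), Kp f bb t θ ζ ≤ ∫ θ in (0:ℝ)..(2 * π), -(√|t| / 50) := by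
    refine intervalIntegral.integral_mono_on (by positivity) ?_ (by simp) fun θ _ => hd θ
    refine Continuous.intervalIntegrable ?_ _ _
    exact Continuous.comp (g := fun x : ℝ × Vq => Kp f bb t x.1 x.2) (f := fun θ : ℝ => (θ, ζ))
      (lsdata X h).Kc (by fun_prop)
  rw [intervalIntegral.integral_const, smul_eq_mul] at hi
  have hpi := Real.pi_gt_three
  nlinarith [mul_pos he (by linarith : 0 < π - 3)]

end

noncomputable section
open scoped ContDiff

variable {f : Sph → ℝ} {bb : ContDiffBump (0:ℝ)} {C t : ℝ}

theorem fext_hasFDerivAt (hf : SmoothSph f) {x : E3} (hx : x ≠ 0) :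
    HasFDerivAt (fext f) (fderiv ℝ (fext f) x) x :=
  ((fext_contDiffAt f hf x hx).differentiableAt (by simp)).hasFDerivAt

theorem fext_curve (hf : SmoothSph f) {c : ℝ → E3} {c' : E3} {s : ℝ} (hc : HasDerivAt c c' s)
    (h0 : c s ≠ 0) : HasDerivAt (fun s => fext f (c s)) (fderiv ℝ (fext f) (c s) c') s :=
  HasFDerivAt.comp_hasDerivAt (l := fext f) (f := c) s (fext_hasFDerivAt hf h0) hc

theorem line_deriv (x v : E3) (r : ℝ) : HasDerivAt (fun s : ℝ => x + s • v) v r := by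
  simpa using ((hasDerivAt_id r).smul_const v).const_add x
theorem line_derivV (x v : Vq) (r : ℝ) : HasDerivAt (fun s : ℝ => x + s • v) v r := by
  simpa using ((hasDerivAt_id r).smul_const v).const_add x

theorem fderiv_fext_smul (hf : SmoothSph f) {x : E3} (hx : x ≠ 0) {r : ℝ} (hr : 0 < r) (v : E3) :
    r * fderiv ℝ (fext f) (r • x) v = fderiv ℝ (fext f) x v := by
  have h1 := fext_curve hf (line_deriv x v 0) (by simpa using hx)
  have h2 := fext_curve hf ((line_deriv x v 0).const_smul r) (by simpa using ⟨hr.ne', hx⟩)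
  simp only [zero_smul, add_zero, fext_smul f r hr, Pi.smul_apply] at h1 h2
  have := h2.unique h1
  simpa using this

theorem fderiv_fext_self (hf : SmoothSph f) {x : E3} (hx : x ≠ 0) : fderiv ℝ (fext f) x x = 0 := by
  have h1 := fext_curve hf (line_deriv x x 0) (by simpa using hx)
  simp only [zero_smul, add_zero] at h1
  have h2 : (fun s : ℝ => fext f (x + s • x)) =ᶠ[nhds 0] fun _ => fext f x := by
    filter_upwards [lt_mem_nhds (show (-1:ℝ) < 0 by norm_num)] with s hs
    rw [← fext_smul f (1 + s) (by linarith) x, add_smul, one_smul]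
  exact h1.unique ((hasDerivAt_const _ _).congr_of_eventuallyEq h2)

/-- gradient of the homogeneous extension -/
def gF (f : Sph → ℝ) (x : E3) : E3 := (InnerProductSpace.toDual ℝ E3).symm (fderiv ℝ (fext f) x)
theorem gF_inner (x v : E3) : ⟪gF f x, v⟫ = fderiv ℝ (fext f) x v :=
  InnerProductSpace.toDual_symm_apply

def ro (f : Sph → ℝ) (t : ℝ) (z : Vq) : ℝ := 1 + t * fext f (qm z)
def HH (f : Sph → ℝ) (t : ℝ) (z : Vq) : ℝ := ‖z‖ ^ 2 / ro f t z
def nn (f : Sph → ℝ) (t : ℝ) (z : Vq) : E3 :=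
  (1 / (‖z‖ ^ 2 * ro f t z)) • qm z - (‖z‖ ^ 2 * t / ro f t z ^ 2) • gF f (qm z)

theorem qT_inner (z : Vq) : ⟪qm z, Tm z⟫ = 0 := by
  rw [inner_E3]; simp [qm, Tm]; ring

theorem nn_qB (z v : Vq) (hz : z ≠ 0) : ⟪nn f t z, qB z v⟫ =
    2 * ⟪z, v⟫ / ro f t z - ‖z‖ ^ 2 * t / ro f t z ^ 2 * fderiv ℝ (fext f) (qm z) (qB z v) := by
  have : 0 < ‖z‖ := norm_pos_iff.mpr hz
  unfold nn
  rw [inner_sub_left, real_inner_smul_left, real_inner_smul_left, inner_qm_qB, gF_inner]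
  congr 1
  rw [one_div, mul_inv]; field_simp

theorem HH_deriv (hf : SmoothSph f) {z : ℝ → Vq} {z' : Vq} {s : ℝ} (hz : HasDerivAt z z' s)
    (h0 : z s ≠ 0) (hr : ro f t (z s) ≠ 0) :
    HasDerivAt (fun s => HH f t (z s)) ⟪nn f t (z s), qB (z s) z'⟫ s := by
  rw [nn_qB _ _ h0]
  have h1 := fext_curve hf (qm_deriv hz) (qm_ne h0)
  have h2 : HasDerivAt (fun s => ro f t (z s))
      (t * fderiv ℝ (fext f) (qm (z s)) (qB (z s) z')) s := (h1.const_mul t).const_add 1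
  have h3 := (nsq_deriv hz).div h2 hr
  refine h3.congr_deriv ?_
  field_simp

theorem ro_half (X : Ctx f bb C) (h : Sm bb C t) (z : Vq) : 1 / 2 ≤ ro f t z := by
  have := rh_half X.hb t z
  unfold rh at this; rw [h.bt, mul_one] at this; exact this

theorem ph_eq (X : Ctx f bb C) (h : Sm bb C t) {z : Vq} (h1 : 1 / 2 ≤ ‖z‖) (h2 : ‖z‖ ≤ 2) :
    ph f bb t z = 1 / 4 * (HH f t z - √|t| / 2 * (HH f t z - 1) ^ 2 - ‖z‖ ^ 2) := by
  have hr := ro_half X h z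
  have e : rh f bb t z = ro f t z := by unfold rh ro; rw [h.bt, mul_one]
  unfold ph BQ DQ HH
  simp only [ann_one h1 h2, h.bt, e, one_mul]
  have : HH f t z - ‖z‖ ^ 2 = - t * (‖z‖ ^ 2 * fext f (qm z) / ro f t z) := by
    unfold HH
    have hr' : ro f t z ≠ 0 := by linarith
    field_simp
    unfold ro; ring
  unfold HH at this
  linear_combination (-1/4) * this

theorem gp_inner (X : Ctx f bb C) (h : Sm bb C t) {z : Vq} (h1 : 1 / 2 < ‖z‖) (h2 : ‖z‖ < 2)
    (v : Vq) : ⟪gp f bb t z, v⟫ =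
      1 / 4 * ((1 - √|t| * (HH f t z - 1)) * ⟪nn f t z, qB z v⟫ - 2 * ⟪z, v⟫) := by
  have hr := ro_half X h z
  have hz : z ≠ 0 := by rw [← norm_pos_iff]; linarith
  have hc : HasDerivAt (fun s : ℝ => ph f bb t (z + s • v)) ⟪gp f bb t z, v⟫ 0 := by
    have := ((X.B.curve t z v).const_mul (-(t/4))).sub ((X.D.curve t z v).const_mul (√|t| / 8))
    refine this.congr_deriv ?_
    unfold gp; rw [inner_sub_left, real_inner_smul_left, real_inner_smul_left]
  have hl := line_derivV z v 0
  have hH := HH_deriv (t := t) X.hf hl (by simpa using hz) (by simp; linarith)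
  have hN := nsq_deriv hl
  have hd : HasDerivAt (fun s : ℝ => 1 / 4 * (HH f t (z + s • v) -
      √|t| / 2 * (HH f t (z + s • v) - 1) ^ 2 - ‖z + s • v‖ ^ 2)) _ 0 :=
    ((hH.sub (((hH.sub_const 1).pow 2).const_mul (√|t| / 2))).sub hN).const_mul (1 / 4)
  have hev : (fun s : ℝ => ph f bb t (z + s • v)) =ᶠ[nhds 0] (fun s : ℝ => 1 / 4 * (HH f t (z + s • v) -
      √|t| / 2 * (HH f t (z + s • v) - 1) ^ 2 - ‖z + s • v‖ ^ 2)) := by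
    have hcn : ContinuousAt (fun s : ℝ => ‖z + s • v‖) 0 := by fun_prop
    have e1 : ∀ᶠ s : ℝ in nhds 0, 1 / 2 < ‖z + s • v‖ :=
      continuousAt_const.eventually_lt hcn (by simpa using h1)
    have e2 : ∀ᶠ s : ℝ in nhds 0, ‖z + s • v‖ < 2 :=
      hcn.eventually_lt continuousAt_const (by simpa using h2)
    filter_upwards [e1, e2] with s a b
    exact ph_eq X h a.le b.le
  rw [hc.unique (hd.congr_of_eventuallyEq hev)]
  simp only [zero_smul, add_zero]
  ring

theorem J_gp (X : Ctx f bb C) (h : Sm bb C t) {z : Vq} (h1 : 1 / 2 < ‖z‖) (h2 : ‖z‖ < 2) :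
    Jm (gp f bb t z) + (1 / 2 : ℝ) • Jm z =
      ((1 - √|t| * (HH f t z - 1)) / 2) • Xm (nn f t z) z := by
  refine ext_inner_right ℝ fun v => ?_
  have := Xm_grad (nn f t z) z v
  rw [inner_add_left, real_inner_smul_left, real_inner_smul_left, Jm_skew, Jm_skew,
    gp_inner X h h1 h2]
  linear_combination (-1/4) * (1 - √|t| * (HH f t z - 1)) * this

end

noncomputable section
open scoped ContDiff

variable {f : Sph → ℝ} {bb : ContDiffBump (0:ℝ)} {C t : ℝ}

theorem nn_q (hf : SmoothSph f) {z : Vq} (hz : z ≠ 0) : ⟪nn f t z, qm z⟫ = HH f t z := by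
  have hp : 0 < ‖z‖ := norm_pos_iff.mpr hz
  unfold nn HH
  rw [inner_sub_left, real_inner_smul_left, real_inner_smul_left, gF_inner,
    fderiv_fext_self hf (qm_ne hz), real_inner_self_eq_norm_sq, qm_norm, mul_zero, sub_zero,
    one_div, mul_inv]
  field_simp

theorem qB_smul (z v : Vq) (r : ℝ) : qB z (r • v) = r • qB z v := by
  ext i; fin_cases i <;> simp [qB] <;> ring
theorem TB_smul (z v : Vq) (r : ℝ) : TB z (r • v) = r • TB z v := by
  ext i; fin_cases i <;> simp [TB] <;> ring
theorem nn_qB_Xm {z : Vq} (hz : z ≠ 0) (n : E3) : ⟪n, qB z (Xm n z)⟫ = 0 := by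
  have hp : 0 < ‖z‖ := norm_pos_iff.mpr hz
  have h1 : ⟪n, ‖z‖ ^ 2 • qB z (Xm n z)⟫ = 0 := by
    rw [qB_Xm, inner_sub_right, real_inner_smul_right, real_inner_smul_right]; ring
  rw [real_inner_smul_right] at h1
  exact (mul_eq_zero.mp h1).resolve_left (by positivity)

/-- A solution of the reduced ODE gives a closed geodesic. -/
theorem sys_of_z (hf : SmoothSph f) (hpos : ∀ x, 0 < 1 + t * f x) (z : ℝ → Vq)
    (hz0 : ∀ θ, z θ ≠ 0) (h o : ℝ) (hh : 0 < h) (ho : 0 < o) (ho1 : o ≤ 1)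
    (hH : ∀ θ, HH f t (z θ) = h)
    (hz : ∀ θ, HasDerivAt z ((o / 2) • Xm (nn f t (z θ)) (z θ)) θ)
    (hanti : ∀ θ, z (θ + 2 * π) = - z θ) :
    systole (confMetric fun x => (1 + t * f x) ^ 2) ≤ 2 * π := by
  have hzp : ∀ θ, 0 < ‖z θ‖ ^ 2 := fun θ => by have := norm_pos_iff.mpr (hz0 θ); positivity
  have hro : ∀ θ, 0 < ro f t (z θ) := fun θ => hpos _
  have hN : ∀ θ, ‖z θ‖ ^ 2 = h * ro f t (z θ) := fun θ => by
    rw [← hH θ]; unfold HH; rw [div_mul_cancel₀ _ (hro θ).ne']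
  have hcF : ∀ θ, fext f ((‖z θ‖ ^ 2)⁻¹ • qm (z θ)) = fext f (qm (z θ)) := fun θ =>
    fext_smul f _ (inv_pos.mpr (hzp θ)) _
  have hzc : Continuous z := continuous_iff_continuousAt.mpr fun θ => (hz θ).continuousAt
  have hq : ∀ θ, HasDerivAt (fun θ => (‖z θ‖ ^ 2)⁻¹ • qm (z θ))
      (o • (((ro f t (z θ)) ^ 2)⁻¹ • (h⁻¹ • Tm (z θ)))) θ := by
    intro θ
    have h1 := ((nsq_deriv (hz θ)).fun_inv (hzp θ).ne').fun_smul (qm_deriv (hz θ))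
    refine h1.congr_deriv ?_
    have e1 : qB (z θ) (Xm (nn f t (z θ)) (z θ)) = (‖z θ‖ ^ 2)⁻¹ •
        ((2 * h) • Tm (z θ) - (2 * ⟪nn f t (z θ), Tm (z θ)⟫) • qm (z θ)) := by
      rw [← hH θ, ← nn_q hf (hz0 θ), ← qB_Xm, smul_smul, inv_mul_cancel₀ (hzp θ).ne', one_smul]
    rw [qB_smul, real_inner_smul_right, inner_Xm, e1, real_inner_comm (nn f t (z θ)) (Tm (z θ)),
      hN θ]
    have := hro θ
    generalize ⟪nn f t (z θ), Tm (z θ)⟫ = b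
    generalize ro f t (z θ) = r at *
    match_scalars
    · field_simp
    · field_simp; ring
  have hT : ∀ θ, HasDerivAt (fun θ => h⁻¹ • Tm (z θ)) (o • (-(ro f t (z θ))) • nn f t (z θ)) θ := by
    intro θ
    refine ((Tm_deriv (hz θ)).const_smul h⁻¹).congr_deriv ?_
    rw [TB_smul, TB_Xm, hN θ]
    match_scalars
    field_simp
  have hnnc : Continuous fun θ => nn f t (z θ) := by
    have e : ∀ θ, nn f t (z θ) = (‖z θ‖ ^ 2 * ro f t (z θ))⁻¹ • qm (z θ) -
      (‖z θ‖ ^ 2 * t / ro f t (z θ) ^ 2) • gF f (qm (z θ)) := fun θ => by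
        unfold nn; rw [one_div]
    have c1 : Continuous fun θ => qm (z θ) := qm_smooth.continuous.comp hzc
    have c2 : Continuous fun θ => ro f t (z θ) := by
      refine continuous_const.add (continuous_const.mul ?_)
      refine continuous_iff_continuousAt.mpr fun θ => ?_
      exact ContinuousAt.comp (g := fext f) (f := fun θ => qm (z θ))
        (fext_contDiffAt f hf _ (qm_ne (hz0 θ))).continuousAt c1.continuousAt
    have c3 : Continuous fun θ => gF f (qm (z θ)) := by
      refine continuous_iff_continuousAt.mpr fun θ => ?_
      have : ContinuousAt (fderiv ℝ (fext f)) (qm (z θ)) :=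
        ((fext_contDiffAt f hf _ (qm_ne (hz0 θ))).fderiv_right (m := 0) (by simp)).continuousAt
      have h2 := ContinuousAt.comp (g := fderiv ℝ (fext f)) (f := fun θ => qm (z θ)) this
        c1.continuousAt
      exact (InnerProductSpace.toDual ℝ E3).symm.continuous.continuousAt.comp h2
    have c4 : Continuous fun θ => ‖z θ‖ ^ 2 := by fun_prop
    simp only [e]
    refine Continuous.sub (Continuous.smul (Continuous.inv₀ (c4.mul c2) fun θ => ?_) c1)
      (((c4.mul continuous_const).div (c2.pow 2) fun θ => ?_).smul c3)
    · exact (mul_pos (hzp θ) (hro θ)).ne'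
    · exact (pow_pos (hro θ) 2).ne'
  have hroc : Continuous fun θ => ro f t (z θ) := by
    have : ∀ θ, ro f t (z θ) = ‖z θ‖ ^ 2 / h := fun θ => by rw [hN θ]; field_simp
    simp only [this]; fun_prop
  have hdiv : ∀ s, HasDerivAt (fun s : ℝ => s / o) (1 / o) s := fun s =>
    (hasDerivAt_id s).div_const o
  refine (systole_le_of_ode f hf t hpos (fun s => (‖z (s / o)‖ ^ 2)⁻¹ • qm (z (s / o)))
    (fun s => h⁻¹ • Tm (z (s / o))) (fun s => (-(ro f t (z (s / o)))) • nn f t (z (s / o)))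
    ?_ ?_ ?_ ?_ ?_ ?_ (2 * π * o) (by positivity) ?_).trans ?_
  · intro s
    rw [norm_smul, qm_norm, norm_inv, norm_pow, norm_norm, inv_mul_cancel₀ (hzp _).ne']
  · intro s
    refine ((hq (s / o)).scomp s (hdiv s)).congr_deriv ?_
    rw [hcF, smul_smul, one_div, inv_mul_cancel₀ ho.ne', one_smul]; rfl
  · intro s
    rw [hcF, norm_smul, Tm_norm, hN, norm_inv, Real.norm_of_nonneg hh.le, inv_mul_cancel_left₀ hh.ne']
    rfl
  · intro s
    refine ((hT (s / o)).scomp s (hdiv s)).congr_deriv ?_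
    rw [smul_smul, one_div, inv_mul_cancel₀ ho.ne', one_smul]
  · have : Continuous fun s : ℝ => s / o := by fun_prop
    exact ((hroc.comp this).neg).smul (hnnc.comp this)
  · intro s v
    have hp := hzp (s / o); have hr := hro (s / o)
    have hs := fderiv_fext_smul hf (qm_ne (hz0 (s / o))) (inv_pos.mpr hp) v
    rw [hcF]
    have er : 1 + t * fext f (qm (z (s / o))) = ro f t (z (s / o)) := rfl
    rw [er]
    unfold nn
    rw [real_inner_smul_left, inner_sub_left, real_inner_smul_left, real_inner_smul_left,
      real_inner_smul_left, gF_inner, ← hs]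
    generalize fderiv ℝ (fext f) ((‖z (s / o)‖ ^ 2)⁻¹ • qm (z (s / o))) v = A
    generalize ⟪qm (z (s / o)), v⟫ = B
    generalize ro f t (z (s / o)) = r at *
    generalize ‖z (s / o)‖ ^ 2 = N at *
    field_simp
    ring
  · intro s
    have : (s + 2 * π * o) / o = s / o + 2 * π := by field_simp
    simp only [this, hanti, norm_neg, qm_neg]
  · nlinarith [Real.pi_pos]

theorem Ctx.pos (X : Ctx f bb C) (h : Sm bb C t) (x : Sph) : 0 < 1 + t * f x := by
  have h1 : |t| ≤ bb.rOut := h.r.trans bb.rIn_lt_rOut.le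
  have h2 : |t * f x| ≤ 1 / 2 := by
    rw [abs_mul]; exact (mul_le_mul_of_nonneg_right h1 (abs_nonneg _)).trans (X.hb x)
  linarith [neg_le_of_abs_le h2]

theorem M4 (X : Ctx f bb C) (h : Sm bb C t) (ζ1 : Vq) (hζ1 : ‖ζ1‖ = 1) (w1 G1 : ℝ → Vq)
    (hw1 : IsLoop Jm w1 G1) (e : ℝ)
    (he : ∀ θ, ‖G1 θ - gk f bb t θ (ζ1 + w1 θ)‖ ≤ e)
    (hneg : act (Kp f bb t) ζ1 w1 G1 + 300 * e ^ 2 ≤ 0) :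
    systole (confMetric fun x => (1 + t * f x) ^ 2) ≤ 2 * π := by
  have hpi := Real.pi_pos
  have D := lsdata X h
  have hC := X.C1
  obtain ⟨ζ, w, ha, hb, hper, hw, hwb, hact⟩ :=
    LS_main D (bdry X h) ζ1 hζ1 w1 G1 hw1 e he hneg
  have hM := h.eC hC
  have hun : ∀ θ, 1 / 2 < ‖ζ + w θ‖ ∧ ‖ζ + w θ‖ < 2 := fun θ => by
    have h1 := hwb θ
    have h2 := norm_add_le ζ (w θ)
    have h3 := norm_sub_norm_le ζ (-w θ)
    rw [sub_neg_eq_add, norm_neg] at h3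
    constructor <;> linarith
  set z : ℝ → Vq := fun θ => rot θ (ζ + w θ) with hzdef
  have hzn : ∀ θ, 1 / 2 < ‖z θ‖ ∧ ‖z θ‖ < 2 := fun θ => by rw [hzdef]; simp only [rot_norm]; exact hun θ
  have hz0 : ∀ θ, z θ ≠ 0 := fun θ => by rw [← norm_pos_iff]; linarith [(hzn θ).1]
  have hz : ∀ θ, HasDerivAt z
      (((1 - √|t| * (HH f t (z θ) - 1)) / 2) • Xm (nn f t (z θ)) (z θ)) θ := by
    intro θ
    refine (rot_deriv ((hw θ).const_add ζ)).congr_deriv ?_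
    rw [← J_gp X h (hzn θ).1 (hzn θ).2, rot_Jm]
    unfold gk
    rw [rot_neg_rot]
  have hHd : ∀ θ, HasDerivAt (fun θ => HH f t (z θ)) 0 θ := by
    intro θ
    refine (HH_deriv X.hf (hz θ) (hz0 θ) (by linarith [ro_half X h (z θ)])).congr_deriv ?_
    rw [qB_smul, real_inner_smul_right, nn_qB_Xm (hz0 θ), mul_zero]
  have hHc : ∀ θ, HH f t (z θ) = HH f t (z 0) := fun θ =>
    is_const_of_deriv_eq_zero (fun s => (hHd s).differentiableAt) (fun s => (hHd s).deriv) θ 0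
  set η := HH f t (z 0) with hη
  have hηb : 0 < η ∧ η ≤ 8 := by
    have h1 := hzn 0; have h2 := ro_half X h (z 0)
    rw [hη]; unfold HH
    constructor
    · apply div_pos <;> nlinarith
    · rw [div_le_iff₀ (by linarith)]; nlinarith
  -- the mean of g vanishes
  have hwc : Continuous w := continuous_iff_continuousAt.mpr fun θ => (hw θ).continuousAt
  have hgc : Continuous fun θ => gk f bb t θ (ζ + w θ) :=
    Continuous.comp (g := fun x : ℝ × Vq => gk f bb t x.1 x.2) (f := fun θ : ℝ => (θ, ζ + w θ))
      D.gc (by fun_prop)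
  have hg0 : ∫ θ in (0:ℝ)..(2 * π), gk f bb t θ (ζ + w θ) = 0 := by
    have h1 : ∫ θ in (0:ℝ)..(2 * π), Jm (gk f bb t θ (ζ + w θ)) = 0 := by
      rw [intervalIntegral.integral_eq_sub_of_hasDerivAt (fun θ _ => hw θ)
        ((Jm.continuous.comp hgc).intervalIntegrable _ _)]
      have := hper 0; rw [zero_add] at this; rw [this, sub_self]
    rw [Jm.intervalIntegral_comp_comm (hgc.intervalIntegrable _ _)] at h1
    rw [← norm_eq_zero, ← Jm_norm, h1, norm_zero]
  have hKc : Continuous fun θ => Kp f bb t θ (ζ + w θ) :=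
    Continuous.comp (g := fun x : ℝ × Vq => Kp f bb t x.1 x.2) (f := fun θ : ℝ => (θ, ζ + w θ))
      D.Kc (by fun_prop)
  have hactv : act (Kp f bb t) ζ w (fun θ => gk f bb t θ (ζ + w θ)) =
      2 * π * (-(√|t| / 8) * (η ^ 2 - 1)) := by
    have e1 : ∫ θ in (0:ℝ)..(2 * π), ⟪ζ, gk f bb t θ (ζ + w θ)⟫ = 0 := by
      rw [int_inner_const _ _ hgc, hg0, inner_zero_right]
    have e2 : ∀ θ, 1 / 2 * ⟪gk f bb t θ (ζ + w θ), w θ⟫ - Kp f bb t θ (ζ + w θ)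
        = -(√|t| / 8) * (η ^ 2 - 1) - 1 / 2 * ⟪ζ, gk f bb t θ (ζ + w θ)⟫ := by
      intro θ
      have a1 : ⟪gk f bb t θ (ζ + w θ), ζ + w θ⟫ = ⟪gp f bb t (z θ), z θ⟫ := by
        unfold gk; rw [rot_inner]
      rw [gp_inner X h (hzn θ).1 (hzn θ).2, qB_self, real_inner_smul_right,
        nn_q X.hf (hz0 θ), hHc θ, real_inner_self_eq_norm_sq, inner_add_right,
        real_inner_comm ζ (gk f bb t θ (ζ + w θ))] at a1
      have a2 : Kp f bb t θ (ζ + w θ) = _ := ph_eq X h (hzn θ).1.le (hzn θ).2.le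
      rw [hHc θ] at a2
      rw [a2]
      linear_combination (1/2) * a1
    unfold act
    simp only [e2]
    rw [intervalIntegral.integral_sub (by simp), intervalIntegral.integral_const_mul (1/2 : ℝ), e1]
    · rw [intervalIntegral.integral_const, smul_eq_mul]; ring
    · exact (Continuous.intervalIntegrable (by fun_prop) _ _)
  rw [hactv] at hact
  have he := h.epos
  have he1 := h.e1 hC
  have h1 : 1 ≤ η := by
    by_contra hlt
    push Not at hlt
    have : 0 < 2 * π * (-(√|t| / 8) * (η ^ 2 - 1)) := by
      have : 0 < 1 - η ^ 2 := by nlinarith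
      have : 0 < √|t| / 8 * (1 - η ^ 2) := by positivity
      have := mul_pos (by positivity : 0 < 2 * π) this
      linarith
    linarith
  refine sys_of_z X.hf (X.pos h) z hz0 η (1 - √|t| * (η - 1)) hηb.1 ?_ ?_ hHc ?_ ?_
  · nlinarith
  · nlinarith
  · intro θ
    have := hz θ
    rwa [hHc θ] at this
  · intro θ
    simp only [hzdef, hper, rot_two_pi]
end

noncomputable section
open scoped ContDiff

variable {f : Sph → ℝ} {bb : ContDiffBump (0:ℝ)} {C t : ℝ}

def gam (f : Sph → ℝ) (bb : ContDiffBump (0:ℝ)) (ζ : Vq) (θ : ℝ) : Vq :=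
  rot (-θ) ((-(1 / 4 : ℝ)) • gz (BQ f bb) 0 (rot θ ζ))
def Fc (f : Sph → ℝ) (ζ : Vq) (θ : ℝ) : ℝ := fext f (qm (rot θ ζ))

theorem gam_cont (X : Ctx f bb C) (ζ : Vq) : Continuous (gam f bb ζ) := by
  have h1 : Continuous fun θ => rot θ ζ :=
    Continuous.comp (g := fun x : ℝ × Vq => rot x.1 x.2) (f := fun θ : ℝ => (θ, ζ)) rot_cont
      (by fun_prop)
  have h2 : Continuous fun θ => (-(1 / 4 : ℝ)) • gz (BQ f bb) 0 (rot θ ζ) := by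
    have h3 : Continuous fun θ => gz (BQ f bb) 0 (rot θ ζ) := (X.B.gcont 0).comp h1
    fun_prop
  exact Continuous.comp (g := fun x : ℝ × Vq => rot x.1 x.2)
    (f := fun θ : ℝ => (-θ, (-(1 / 4 : ℝ)) • gz (BQ f bb) 0 (rot θ ζ))) rot_cont
      (continuous_neg.prodMk h2)

theorem gam_per (X : Ctx f bb C) (ζ : Vq) (θ : ℝ) : gam f bb ζ (θ + 2 * π) = gam f bb ζ θ := by
  have e2 : ∀ y, rot (-(θ + 2 * π)) y = - rot (-θ) y := fun y => by
    have := rot_two_pi (-(θ + 2 * π)) y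
    rw [show -(θ + 2 * π) + 2 * π = -θ by ring] at this
    rw [this, neg_neg]
  unfold gam
  rw [rot_two_pi, gz_neg X.B BQ_neg, e2, rot_smul, rot_smul]
  have : rot (-θ) (-(gz (BQ f bb) 0 (rot θ ζ))) = - rot (-θ) (gz (BQ f bb) 0 (rot θ ζ)) := by
    have := rot_smul (-θ) (-1) (gz (BQ f bb) 0 (rot θ ζ)); simpa using this
  rw [this]; simp

theorem rot_ne {ζ : Vq} (h : ‖ζ‖ = 1) (θ : ℝ) : rot θ ζ ≠ 0 := by
  rw [← norm_pos_iff, rot_norm, h]; norm_num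

theorem rot_cont1 (ζ : Vq) : Continuous fun θ => rot θ ζ :=
  Continuous.comp (g := fun x : ℝ × Vq => rot x.1 x.2) (f := fun θ : ℝ => (θ, ζ)) rot_cont
      (by fun_prop)

theorem Fc_cont (hf : SmoothSph f) {ζ : Vq} (h : ‖ζ‖ = 1) : Continuous (Fc f ζ) := by
  refine continuous_iff_continuousAt.mpr fun θ => ?_
  exact ContinuousAt.comp (g := fext f) (f := fun θ => qm (rot θ ζ))
        (fext_contDiffAt f hf _ (qm_ne (rot_ne h θ))).continuousAt
        (qm_smooth.continuous.comp (rot_cont1 ζ)).continuousAt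

theorem gzD_zero (X : Ctx f bb C) {z : Vq} (h : ‖z‖ = 1) : gz (DQ f bb) 0 z = 0 := by
  refine ext_inner_right ℝ fun v => ?_
  have hl := line_derivV z v 0
  have hN := ((nsq_deriv hl).sub_const 1).fun_pow 2
  have hev : (fun s : ℝ => DQ f bb (0, z + s • v)) =ᶠ[nhds 0]
      (fun s : ℝ => (‖z + s • v‖ ^ 2 - 1) ^ 2) := by
    have hcn : ContinuousAt (fun s : ℝ => ‖z + s • v‖) 0 := by fun_prop
    have e1 : ∀ᶠ s : ℝ in nhds 0, 1 / 2 < ‖z + s • v‖ :=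
      continuousAt_const.eventually_lt hcn (by rw [zero_smul, add_zero, h]; norm_num)
    have e2 : ∀ᶠ s : ℝ in nhds 0, ‖z + s • v‖ < 2 :=
      hcn.eventually_lt continuousAt_const (by rw [zero_smul, add_zero, h]; norm_num)
    filter_upwards [e1, e2] with s a b
    exact DQ_zero _ a.le b.le
  rw [(X.D.curve 0 z v).unique (hN.congr_of_eventuallyEq hev)]
  simp [h]

theorem gk_approx (X : Ctx f bb C) (h : Sm bb C t) {ζ : Vq} (hζ : ‖ζ‖ = 1) (θ : ℝ) :
    ‖t • gam f bb ζ θ - gk f bb t θ ζ‖ ≤ √|t| * |t| * C := by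
  set z := rot θ ζ with hz
  have hzn : ‖z‖ = 1 := by rw [hz, rot_norm, hζ]
  have e : t • gam f bb ζ θ - gk f bb t θ ζ = rot (-θ)
     ((t / 4) • (gz (BQ f bb) t z - gz (BQ f bb) 0 z)
      + (√|t| / 8) • (gz (DQ f bb) t z - gz (DQ f bb) 0 z)) := by
    rw [gzD_zero X hzn]
    unfold gam gk gp
    rw [← rot_smul, ← rot_sub, ← hz]
    congr 1
    module
  rw [e, rot_norm]
  refine (norm_add_le _ _).trans ?_
  rw [norm_smul, norm_smul, Real.norm_eq_abs, Real.norm_eq_abs, abs_div,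
    abs_of_nonneg (by positivity : 0 ≤ √|t| / 8), abs_of_nonneg (by positivity : (0:ℝ) ≤ 4)]
  have h1 := mul_le_mul_of_nonneg_left (X.B.g0 t z) (by positivity : 0 ≤ |t| / 4)
  have h2 := mul_le_mul_of_nonneg_left (X.D.g0 t z) (by positivity : 0 ≤ √|t| / 8)
  have h3 := comb_le h X.C1 (abs_nonneg t)
  linarith

theorem K_approx (X : Ctx f bb C) (h : Sm bb C t) {ζ : Vq} (hζ : ‖ζ‖ = 1) (θ Fm : ℝ)
    (hF : ∀ x, |f x| ≤ Fm) :
    |Kp f bb t θ ζ - (-(1/4) * (t * Fc f ζ θ) + 1/4 * t ^ 2 * (Fc f ζ θ) ^ 2)|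
      ≤ √|t| * t ^ 2 * (Fm ^ 3 + Fm ^ 2) := by
  have hzn : ‖rot θ ζ‖ = 1 := by rw [rot_norm, hζ]
  have hr := ro_half X h (rot θ ζ)
  have hK : Kp f bb t θ ζ = _ := ph_eq X h (z := rot θ ζ) (by rw [hzn]; norm_num) (by rw [hzn]; norm_num)
  rw [hK]
  unfold HH
  rw [hzn]
  have hb : |Fc f ζ θ| ≤ Fm := hF _
  have er : ro f t (rot θ ζ) = 1 + t * Fc f ζ θ := rfl
  rw [er] at hr ⊢
  set F := Fc f ζ θ
  set i := 1 / (1 + t * F) with hi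
  have hi2 : 0 < i ∧ i ≤ 2 := by
    constructor
    · rw [hi]; apply div_pos <;> linarith
    · rw [hi, div_le_iff₀ (by linarith)]; linarith
  have hir : i * (1 + t * F) = 1 := by rw [hi]; field_simp
  have e1 : i - 1 = - (t * F) * i := by linear_combination hir
  have e2 : 1 / 4 * (1 ^ 2 / (1 + t * F) - √|t| / 2 * (1 ^ 2 / (1 + t * F) - 1) ^ 2 - 1 ^ 2) -
      (-(1 / 4) * (t * F) + 1 / 4 * t ^ 2 * F ^ 2) =
      -(1/4) * (t * F) ^ 3 * i - √|t| / 8 * (t * F) ^ 2 * i ^ 2 := by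
    have : (1:ℝ) ^ 2 / (1 + t * F) = i := by rw [hi]; simp
    rw [this, e1]
    linear_combination (1/4) * (1 - t * F + (t*F)^2) * hir 
  rw [e2]
  have he := h.epos
  have he1 := h.e1 X.C1
  have ht := tabs t
  have hFm : 0 ≤ Fm := (abs_nonneg _).trans hb
  refine (abs_sub _ _).trans ?_
  rw [abs_mul, abs_mul, abs_mul, abs_mul, abs_pow, abs_pow, abs_pow, abs_mul, abs_of_pos hi2.1,
    abs_of_pos (by positivity : 0 < √|t| / 8), abs_neg, abs_of_pos (by norm_num : (0:ℝ) < 1 / 4),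
    ← sq_abs t]
  have a1 : |F| ^ 3 ≤ Fm ^ 3 := by gcongr
  have a2 : |F| ^ 2 ≤ Fm ^ 2 := by gcongr
  have b1 : 1 / 4 * (|t| * |F|) ^ 3 * i ≤ √|t| * |t| ^ 2 * Fm ^ 3 := by
    have : |t| ≤ √|t| := by nlinarith
    calc 1 / 4 * (|t| * |F|) ^ 3 * i ≤ 1 / 4 * (|t| * |F|) ^ 3 * 2 := by gcongr; exact hi2.2
      _ = 1 / 2 * (|t| * (|t| ^ 2 * |F| ^ 3)) := by ring
      _ ≤ 1 * (√|t| * (|t| ^ 2 * Fm ^ 3)) := by gcongr; norm_num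
      _ = _ := by ring
  have b2 : √|t| / 8 * (|t| * |F|) ^ 2 * i ^ 2 ≤ √|t| * |t| ^ 2 * Fm ^ 2 := by
    calc √|t| / 8 * (|t| * |F|) ^ 2 * i ^ 2 ≤ √|t| / 8 * (|t| * |F|) ^ 2 * 2 ^ 2 := by
          gcongr; exact hi2.2
      _ = 1 / 2 * (√|t| * |t| ^ 2 * |F| ^ 2) := by ring
      _ ≤ 1 * (√|t| * |t| ^ 2 * Fm ^ 2) := by gcongr; norm_num
      _ = _ := by ring
  linarith

theorem test_pt (X : Ctx f bb C) {ζ : Vq} (hζ : ‖ζ‖ = 1) (w1 : ℝ → Vq)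
    (hw1 : IsLoop Jm w1 (gam f bb ζ)) :
    ∃ A, 0 < A ∧ ∀ t, Sm bb C t →
      1 / 4 * t * (∫ θ in (0:ℝ)..(2 * π), Fc f ζ θ)
        - t ^ 2 * (∫ θ in (0:ℝ)..(2 * π), (1 / 4 * (Fc f ζ θ) ^ 2 + 1 / 2 * ⟪gam f bb ζ θ, w1 θ⟫))
        + A * √|t| * t ^ 2 ≤ 0 →
      systole (confMetric fun x => (1 + t * f x) ^ 2) ≤ 2 * π := by
  have hpi := Real.pi_pos
  have hC := X.C1
  obtain ⟨Fm, hFm⟩ : ∃ Fm, ∀ x, |f x| ≤ Fm := ⟨1 / 2 / bb.rOut, fun x => by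
    rw [le_div_iff₀ bb.rOut_pos, mul_comm]; exact X.hb x⟩
  have hwc := hw1.cont
  obtain ⟨W, hW⟩ : ∃ W, ∀ θ, ‖w1 θ‖ ≤ W := by
    have := (show Function.Periodic w1 (2 * π) from hw1.per).isBounded_of_continuous
      (by positivity) hwc
    obtain ⟨W, hW⟩ := this.exists_norm_le
    exact ⟨W, fun θ => hW _ ⟨θ, rfl⟩⟩
  have hW0 : 0 ≤ W := (norm_nonneg _).trans (hW 0)
  have hFm0 : 0 ≤ Fm := (abs_nonneg _).trans (hFm (toSph 0))
  set R := C * W ^ 2 + C * W + (Fm ^ 3 + Fm ^ 2) with hR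
  have hR0 : 0 ≤ R := by positivity
  refine ⟨2 * π * R + 300 * (C * (1 + W)) ^ 2, by positivity, fun t h hneg => ?_⟩
  have he0 := h.epos
  have he1 := h.e1 hC
  have D := lsdata X h
  have hloop : IsLoop Jm (fun θ => t • w1 θ) (fun θ => t • gam f bb ζ θ) := by
    refine ⟨fun θ => by rw [hw1.per], ?_, hw1.Gc.const_smul t, fun θ => ?_⟩
    · rw [intervalIntegral.integral_smul, hw1.mean, smul_zero]
    · refine ((hw1.deriv θ).const_smul t).congr_deriv ?_
      have : avg (fun θ => t • gam f bb ζ θ) = t • avg (gam f bb ζ) := by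
        unfold avg; rw [intervalIntegral.integral_smul, smul_comm]
      rw [this, ← smul_sub, map_smul]
  have htw : ∀ θ, ‖t • w1 θ‖ ≤ |t| * W := fun θ => by
    rw [norm_smul, Real.norm_eq_abs]; exact mul_le_mul_of_nonneg_left (hW θ) (abs_nonneg t)
  refine M4 X h ζ hζ _ _ hloop (√|t| * |t| * (C * (1 + W))) ?_ ?_
  · intro θ
    have h1 := gk_approx X h hζ θ
    have h2 := D.glip θ ζ (ζ + t • w1 θ)
    rw [sub_add_cancel_left, norm_neg] at h2
    have h3 := mul_le_mul_of_nonneg_left (htw θ) D.κ0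
    have h4 := norm_sub_le_norm_sub_add_norm_sub (t • gam f bb ζ θ) (gk f bb t θ ζ)
      (gk f bb t θ (ζ + t • w1 θ))
    linarith
  · have hpt : ∀ θ, 1 / 2 * ⟪t • gam f bb ζ θ, t • w1 θ⟫ - Kp f bb t θ (ζ + t • w1 θ) ≤
        1 / 4 * t * Fc f ζ θ - t ^ 2 * (1 / 4 * (Fc f ζ θ) ^ 2 + 1 / 2 * ⟪gam f bb ζ θ, w1 θ⟫)
          + √|t| * t ^ 2 * R := by
      intro θ
      have h1 := abs_le.mp (D.Kt θ ζ (ζ + t • w1 θ))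
      rw [add_sub_cancel_left] at h1
      have h2 := abs_le.mp (K_approx X h hζ θ Fm hFm)
      have h3 : |⟪t • gam f bb ζ θ - gk f bb t θ ζ, t • w1 θ⟫| ≤ (√|t| * |t| * C) * (|t| * W) :=
        (abs_real_inner_le_norm _ _).trans
          (mul_le_mul (gk_approx X h hζ θ) (htw θ) (norm_nonneg _) (by positivity))
      have h4 : √|t| * C * ‖t • w1 θ‖ ^ 2 ≤ √|t| * C * (|t| * W) ^ 2 := by
        gcongr; exact htw θ
      have h5 := abs_le.mp h3
      rw [inner_sub_left, real_inner_smul_left, real_inner_smul_right] at h5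
      rw [real_inner_smul_left, real_inner_smul_right]
      have ht2 := sq_abs t
      have h6 : √|t| * C * (|t| * W) ^ 2 = √|t| * t ^ 2 * (C * W ^ 2) := by
        linear_combination √|t| * C * W ^ 2 * ht2
      have h7 : (√|t| * |t| * C) * (|t| * W) = √|t| * t ^ 2 * (C * W) := by
        linear_combination √|t| * C * W * ht2
      rw [h7] at h5
      rw [h6] at h4
      rw [hR]
      linarith [h1.1, h2.1, h5.1, h5.2]
    have hFcc := Fc_cont X.hf hζ
    have hgc := hw1.Gc
    have i1 : Continuous fun θ => 1 / 2 * ⟪t • gam f bb ζ θ, t • w1 θ⟫ - Kp f bb t θ (ζ + t • w1 θ) := by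
      have : Continuous fun θ => Kp f bb t θ (ζ + t • w1 θ) :=
        Continuous.comp (g := fun x : ℝ × Vq => Kp f bb t x.1 x.2)
          (f := fun θ : ℝ => (θ, ζ + t • w1 θ)) D.Kc (by fun_prop)
      fun_prop
    have i2 : Continuous fun θ => (1 / 4 * (Fc f ζ θ) ^ 2 + 1 / 2 * ⟪gam f bb ζ θ, w1 θ⟫) := by
      fun_prop
    have hi : act (Kp f bb t) ζ (fun θ => t • w1 θ) (fun θ => t • gam f bb ζ θ) ≤ 
        ∫ θ in (0:ℝ)..(2 * π), (1 / 4 * t * Fc f ζ θ - t ^ 2 * (1 / 4 * (Fc f ζ θ) ^ 2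
          + 1 / 2 * ⟪gam f bb ζ θ, w1 θ⟫) + √|t| * t ^ 2 * R) :=
      intervalIntegral.integral_mono_on (by positivity) (i1.intervalIntegrable _ _)
        (Continuous.intervalIntegrable (by fun_prop) _ _) fun θ _ => hpt θ
    rw [intervalIntegral.integral_add (Continuous.intervalIntegrable (by fun_prop) _ _) (by simp),
      intervalIntegral.integral_sub (Continuous.intervalIntegrable (by fun_prop) _ _)
      (Continuous.intervalIntegrable (by fun_prop) _ _),
      intervalIntegral.integral_const_mul (1 / 4 * t), intervalIntegral.integral_const_mul (t ^ 2),
      intervalIntegral.integral_const, smul_eq_mul] at hi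
    have h8 : (√|t| * |t| * (C * (1 + W))) ^ 2 ≤ √|t| * t ^ 2 * (C * (1 + W)) ^ 2 := by
      have : (√|t| * |t| * (C * (1 + W))) ^ 2 = √|t| * (√|t| * t ^ 2 * (C * (1 + W)) ^ 2) := by
        rw [← sq_abs t]; ring
      rw [this]
      exact mul_le_of_le_one_left (by positivity) (by linarith) |>.trans_eq (by ring)
    linarith
end

noncomputable section
open scoped ContDiff

variable {f : Sph → ℝ} {bb : ContDiffBump (0:ℝ)} {C t : ℝ}

theorem exists_loop (X : Ctx f bb C) (ζ : Vq) : ∃ w, IsLoop Jm w (gam f bb ζ) := by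
  have hg := gam_cont X ζ
  have hc : Continuous (P0 (gam f bb ζ)) :=
    continuous_iff_continuousAt.mpr fun θ => (P0_deriv _ hg θ).continuousAt
  refine ⟨fun θ => Jm (P0 (gam f bb ζ) θ), fun θ => ?_, ?_, hg, fun θ => ?_⟩
  · rw [P0_per _ hg (gam_per X ζ)]
  · rw [Jm.intervalIntegral_comp_comm (hc.intervalIntegrable _ _), P0_mean _ hg, map_zero]
  · exact Jm.hasFDerivAt.comp_hasDerivAt θ (P0_deriv _ hg θ)

theorem case1 (X : Ctx f bb C) {ζ : Vq} (hζ : ‖ζ‖ = 1)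
    (hS : (∫ θ in (0:ℝ)..(2 * π), Fc f ζ θ) ≠ 0) :
    ∃ t0 > 0, ∀ t, Sm bb C t → |t| ≤ t0 → t * (∫ θ in (0:ℝ)..(2 * π), Fc f ζ θ) < 0 →
      systole (confMetric fun x => (1 + t * f x) ^ 2) ≤ 2 * π := by
  obtain ⟨w, hw⟩ := exists_loop X ζ
  obtain ⟨A, hA, h⟩ := test_pt X hζ w hw
  set S := ∫ θ in (0:ℝ)..(2 * π), Fc f ζ θ
  set Q := ∫ θ in (0:ℝ)..(2 * π), (1 / 4 * (Fc f ζ θ) ^ 2 + 1 / 2 * ⟪gam f bb ζ θ, w θ⟫)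
  have hS0 : 0 < |S| := abs_pos.mpr hS
  refine ⟨|S| / (4 * (|Q| + A)), by positivity, fun t ht htt hneg => h t ht ?_⟩
  rw [le_div_iff₀ (by positivity)] at htt
  have h1 : t * S = - (|t| * |S|) := by rw [← abs_mul, abs_of_neg hneg, neg_neg]
  have h2 := ht.e1 X.C1
  have h3 : A * √|t| * t ^ 2 ≤ A * t ^ 2 := by
    have : √|t| * (A * t ^ 2) ≤ 1 * (A * t ^ 2) := by gcongr; linarith
    linarith
  have h4 : - (t ^ 2 * Q) ≤ t ^ 2 * |Q| := by
    have := neg_abs_le Q; nlinarith [sq_nonneg t]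
  have h5 := mul_le_mul_of_nonneg_left htt (abs_nonneg t)
  have h6 : |t| * (|t| * (4 * (|Q| + A))) = t ^ 2 * (4 * (|Q| + A)) := by rw [← sq_abs t]; ring
  rw [h6] at h5
  linarith

theorem case2 (X : Ctx f bb C) {ζ : Vq} (hζ : ‖ζ‖ = 1) {w : ℝ → Vq} (hw : IsLoop Jm w (gam f bb ζ))
    (hS : (∫ θ in (0:ℝ)..(2 * π), Fc f ζ θ) = 0)
    (hQ : 0 < ∫ θ in (0:ℝ)..(2 * π), (1 / 4 * (Fc f ζ θ) ^ 2 + 1 / 2 * ⟪gam f bb ζ θ, w θ⟫)) :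
    ∃ t0 > 0, ∀ t, Sm bb C t → |t| ≤ t0 →
      systole (confMetric fun x => (1 + t * f x) ^ 2) ≤ 2 * π := by
  obtain ⟨A, hA, h⟩ := test_pt X hζ w hw
  set Q := ∫ θ in (0:ℝ)..(2 * π), (1 / 4 * (Fc f ζ θ) ^ 2 + 1 / 2 * ⟪gam f bb ζ θ, w θ⟫)
  refine ⟨(Q / A) ^ 2, by positivity, fun t ht htt => h t ht ?_⟩
  rw [hS]
  have h1 : √|t| ≤ Q / A := by
    rw [← Real.sqrt_sq (by positivity : 0 ≤ Q / A)]; exact Real.sqrt_le_sqrt htt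
  rw [le_div_iff₀ hA] at h1
  nlinarith [sq_nonneg t]

/-! right multiplications -/
def Ri : Vq →L[ℝ] Vq := LinearMap.toContinuousLinearMap
  { toFun := fun z => !₂[-z 1, z 0, z 3, -z 2]
    map_add' := fun x y => by ext i; fin_cases i <;> simp <;> ring
    map_smul' := fun r x => by ext i; fin_cases i <;> simp }
def Rj : Vq →L[ℝ] Vq := LinearMap.toContinuousLinearMap
  { toFun := fun z => !₂[-z 2, -z 3, z 0, z 1]
    map_add' := fun x y => by ext i; fin_cases i <;> simp <;> ring
    map_smul' := fun r x => by ext i; fin_cases i <;> simp }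
theorem Ri_apply (z : Vq) : Ri z = !₂[-z 1, z 0, z 3, -z 2] := rfl
theorem Rj_apply (z : Vq) : Rj z = !₂[-z 2, -z 3, z 0, z 1] := rfl

theorem Jm_Ri (z : Vq) : Jm (Ri z) = - Rj z := by
  ext i; fin_cases i <;> simp [Jm_apply, Ri_apply, Rj_apply]
theorem Jm_Rj (z : Vq) : Jm (Rj z) = Ri z := by
  ext i; fin_cases i <;> simp [Jm_apply, Ri_apply, Rj_apply]
theorem Ri_Jm (z : Vq) : Ri (Jm z) = Rj z := by
  ext i; fin_cases i <;> simp [Jm_apply, Ri_apply, Rj_apply]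

theorem Xm_T (z : Vq) : Xm (Tm z) z = -(‖z‖ ^ 2) • z := by
  rw [nsq_Vq]; ext i; fin_cases i <;> simp [Xm, Tm] <;> ring
theorem Xm_N (z : Vq) : Xm (Nm z) z = -(‖z‖ ^ 2) • Ri z := by
  rw [nsq_Vq]; ext i; fin_cases i <;> simp [Xm, Nm, Ri_apply] <;> ring
theorem Xm_lin (a b : ℝ) (m n : E3) (z : Vq) : Xm (a • m + b • n) z = a • Xm m z + b • Xm n z := by
  ext i; fin_cases i <;> simp [Xm] <;> ring
theorem frame (z : Vq) (m : E3) (h : ‖z‖ = 1) :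
    m = ⟪m, qm z⟫ • qm z + ⟪m, Tm z⟫ • Tm z + ⟪m, Nm z⟫ • Nm z := by
  have h2 : z 0 ^ 2 + z 1 ^ 2 + z 2 ^ 2 + z 3 ^ 2 = 1 := by rw [← nsq_Vq, h]; norm_num
  have : (z 0 ^ 2 + z 1 ^ 2 + z 2 ^ 2 + z 3 ^ 2) ^ 2 • m =
      ⟪m, qm z⟫ • qm z + ⟪m, Tm z⟫ • Tm z + ⟪m, Nm z⟫ • Nm z := by
    simp only [inner_E3]
    ext i; fin_cases i <;> simp [qm, Tm, Nm] <;> ring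
  rw [h2] at this
  simpa using this
theorem rot_Nm (θ : ℝ) (z : Vq) : Nm (rot θ z) = Nm z := by
  have := sin_sq_add_cos_sq (θ / 2)
  ext i; fin_cases i <;> simp [Nm, rot, Jm_apply]
  · linear_combination (z 0 * z 2 + z 1 * z 3) * this
  · linear_combination (z 2 * z 3 - z 0 * z 1) * this
  · linear_combination (z 0 ^ 2 - z 1 ^ 2 - z 2 ^ 2 + z 3 ^ 2) * this
theorem rot_Ri (θ : ℝ) (z : Vq) : rot (-θ) (Ri (rot θ z)) = cos θ • Ri z + sin θ • Rj z := by
  have hc : cos θ = cos (θ / 2) ^ 2 - sin (θ / 2) ^ 2 := by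
    rw [← cos_two_mul']; ring_nf
  have hs : sin θ = 2 * sin (θ / 2) * cos (θ / 2) := by
    rw [← sin_two_mul]; ring_nf
  have e : -θ / 2 = -(θ / 2) := by ring
  simp only [rot, e, cos_neg, sin_neg, map_add, map_smul, Ri_Jm, Jm_Ri, Jm_Rj]
  rw [hc, hs]
  module

theorem gz_B0 (X : Ctx f bb C) {z : Vq} (h : ‖z‖ = 1) (v : Vq) :
    ⟪gz (BQ f bb) 0 z, v⟫ = 2 * fext f (qm z) * ⟪z, v⟫ + fderiv ℝ (fext f) (qm z) (qB z v) := by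
  have hz : z ≠ 0 := by rw [← norm_pos_iff, h]; norm_num
  have hl := line_derivV z v 0
  have hN := (nsq_deriv hl).fun_mul (fext_curve X.hf (qm_deriv hl) (by simpa using qm_ne hz))
  have hev : (fun s : ℝ => BQ f bb (0, z + s • v)) =ᶠ[nhds 0]
      (fun s : ℝ => ‖z + s • v‖ ^ 2 * fext f (qm (z + s • v))) := by
    have hcn : ContinuousAt (fun s : ℝ => ‖z + s • v‖) 0 := by fun_prop
    have e1 : ∀ᶠ s : ℝ in nhds 0, 1 / 2 < ‖z + s • v‖ :=
      continuousAt_const.eventually_lt hcn (by rw [zero_smul, add_zero, h]; norm_num)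
    have e2 : ∀ᶠ s : ℝ in nhds 0, ‖z + s • v‖ < 2 :=
      hcn.eventually_lt continuousAt_const (by rw [zero_smul, add_zero, h]; norm_num)
    filter_upwards [e1, e2] with s a b
    simp [BQ, rh, bb_zero, ann_one a.le b.le]
  rw [(X.B.curve 0 z v).unique (hN.congr_of_eventuallyEq hev)]
  simp [h]; ring

theorem J_gam (X : Ctx f bb C) {ζ : Vq} (h : ‖ζ‖ = 1) (θ : ℝ) :
    Jm (gam f bb ζ θ) = (1 / 2 * fderiv ℝ (fext f) (qm (rot θ ζ)) (Tm (rot θ ζ))) • ζ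
      - (1 / 2 * Fc f ζ θ) • Jm ζ
      + (1 / 2 * fderiv ℝ (fext f) (qm (rot θ ζ)) (Nm ζ)) • (cos θ • Ri ζ + sin θ • Rj ζ) := by
  set z := rot θ ζ with hz
  have hn : ‖z‖ = 1 := by rw [hz, rot_norm, h]
  have hz0 : z ≠ 0 := by rw [← norm_pos_iff, hn]; norm_num
  have hm : gF f (qm z) = (fderiv ℝ (fext f) (qm z) (Tm z)) • Tm z
      + (fderiv ℝ (fext f) (qm z) (Nm z)) • Nm z := by
    have := frame z (gF f (qm z)) hn
    rwa [gF_inner, gF_inner, gF_inner, fderiv_fext_self X.hf (qm_ne hz0), zero_smul, zero_add] at this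
  have e1 : Jm (gz (BQ f bb) 0 z) = (2 * fext f (qm z)) • Jm z + (2:ℝ) • Xm (gF f (qm z)) z := by
    refine ext_inner_right ℝ fun v => ?_
    have := Xm_grad (gF f (qm z)) z v
    rw [gF_inner] at this
    rw [Jm_skew, gz_B0 X hn, inner_add_left, real_inner_smul_left, real_inner_smul_left, Jm_skew, this]
    ring
  rw [hm, Xm_lin, Xm_T, Xm_N, hn] at e1
  have e2 : Jm (gam f bb ζ θ) = (-(1/4 : ℝ)) • rot (-θ) (Jm (gz (BQ f bb) 0 z)) := by
    unfold gam; rw [← rot_Jm, map_smul, rot_smul]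
  have hNm : Nm z = Nm ζ := by rw [hz, rot_Nm]
  have e3 : rot (-θ) z = ζ := by
    have := rot_neg_rot (-θ) ζ; rwa [neg_neg] at this
  rw [e2, e1, rot_add, rot_smul, rot_smul, rot_add, rot_smul, rot_smul, rot_smul, rot_smul, rot_Jm,
    e3, hz, rot_Ri, ← hz, ← hNm]
  unfold Fc
  rw [← hz]
  module
end

noncomputable section
open scoped ContDiff

/-- Fourier coefficients of a real function on `[0, 2π]` -/
def fco (g : ℝ → ℝ) (n : ℤ) : ℂ :=
  fourierCoeffOn (show (0:ℝ) < 2 * π from Real.two_pi_pos) (fun x => (g x : ℂ)) n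

theorem fco_deriv {g g' : ℝ → ℝ} (hg : ∀ x, HasDerivAt g (g' x) x) (hc : Continuous g')
    (hp : g (2 * π) = g 0) {n : ℤ} (hn : n ≠ 0) : fco g' n = Complex.I * n * fco g n := by
  have := fourierCoeffOn_of_hasDerivAt (show (0:ℝ) < 2 * π from Real.two_pi_pos)
    (f := fun x => (g x : ℂ)) (f' := fun x => (g' x : ℂ)) hn
    (fun x _ => (hg x).ofReal_comp)
    ((Complex.continuous_ofReal.comp hc).intervalIntegrable _ _)
  unfold fco
  rw [this, hp]
  have hn' : (n : ℂ) ≠ 0 := by exact_mod_cast hn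
  have hpi : (π : ℂ) ≠ 0 := by exact_mod_cast Real.pi_ne_zero
  push_cast
  have hI := Complex.I_ne_zero
  field_simp
  ring

theorem fco_sum {g : ℝ → ℝ} (hg : Continuous g) :
    HasSum (fun n => ‖fco g n‖ ^ 2) ((2 * π)⁻¹ * ∫ x in (0:ℝ)..(2 * π), (g x) ^ 2) := by
  have hL : MemLp (fun x => (g x : ℂ)) 2 (volume.restrict (Set.Ioc 0 (2 * π))) := by
    have hc : Continuous (fun x => (g x : ℂ)) := Complex.continuous_ofReal.comp hg
    obtain ⟨M, hM⟩ := isCompact_Icc.exists_bound_of_continuousOn (s := Set.Icc 0 (2*π)) hc.continuousOn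
    refine MemLp.of_bound hc.aestronglyMeasurable M ?_
    filter_upwards [ae_restrict_mem measurableSet_Ioc] with x hx
    exact hM x (Set.Ioc_subset_Icc_self hx)
  have := hasSum_sq_fourierCoeffOn (show (0:ℝ) < 2 * π from Real.two_pi_pos) hL
  simpa [fco] using this

theorem fco_zero {g : ℝ → ℝ} (h : ∫ x in (0:ℝ)..(2 * π), g x = 0) : fco g 0 = 0 := by
  unfold fco
  rw [fourierCoeffOn_eq_integral]
  simp [intervalIntegral.integral_ofReal, h]

theorem fco_sub {g h : ℝ → ℝ} (hg : Continuous g) (hh : Continuous h) (n : ℤ) :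
    fco (fun x => g x - h x) n = fco g n - fco h n := by
  unfold fco
  rw [fourierCoeffOn_eq_integral, fourierCoeffOn_eq_integral, fourierCoeffOn_eq_integral, ← smul_sub,
    ← intervalIntegral.integral_sub]
  · congr 1; congr 1; ext x; push_cast; rw [smul_sub]
  · exact (Continuous.smul ((map_continuous (fourier (-n))).comp (AddCircle.continuous_mk' _))
      (Complex.continuous_ofReal.comp hg)).intervalIntegrable _ _
  · exact (Continuous.smul ((map_continuous (fourier (-n))).comp (AddCircle.continuous_mk' _))
      (Complex.continuous_ofReal.comp hh)).intervalIntegrable _ _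

theorem int_deriv_zero {g g' : ℝ → ℝ} (hg : ∀ x, HasDerivAt g (g' x) x) (hc : Continuous g')
    (hp : g (2 * π) = g 0) : ∫ x in (0:ℝ)..(2 * π), g' x = 0 := by
  rw [intervalIntegral.integral_eq_sub_of_hasDerivAt (fun x _ => hg x) (hc.intervalIntegrable _ _),
    hp, sub_self]

theorem wirt {u v φ : ℝ → ℝ} (hu : ∀ x, HasDerivAt u (v x) x) (hv : ∀ x, HasDerivAt v (φ x - u x) x)
    (hφ : Continuous φ) (pu : u (2 * π) = u 0) (pv : v (2 * π) = v 0)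
    (mφ : ∫ x in (0:ℝ)..(2 * π), φ x = 0) (h : 0 ≤ ∫ x in (0:ℝ)..(2 * π), u x * φ x) :
    ∫ x in (0:ℝ)..(2 * π), (φ x) ^ 2 = 0 := by
  have hp := Real.two_pi_pos
  have cu : Continuous u := continuous_iff_continuousAt.mpr fun τ => (hu τ).continuousAt
  have cv : Continuous v := continuous_iff_continuousAt.mpr fun τ => (hv τ).continuousAt
  have e1 := int_deriv_zero hv (hφ.sub cu) pv
  rw [intervalIntegral.integral_sub (hφ.intervalIntegrable _ _) (cu.intervalIntegrable _ _), mφ,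
    zero_sub, neg_eq_zero] at e1
  have e2 := int_deriv_zero (fun x => (hu x).fun_mul (hv x)) (by fun_prop) (by rw [pu, pv])
  have e3 : ∫ x in (0:ℝ)..(2 * π), u x * φ x =
      (∫ x in (0:ℝ)..(2 * π), (u x) ^ 2) - ∫ x in (0:ℝ)..(2 * π), (v x) ^ 2 := by
    rw [← intervalIntegral.integral_sub (Continuous.intervalIntegrable (by fun_prop) _ _) (Continuous.intervalIntegrable (by fun_prop) _ _), ← sub_eq_zero,
      ← intervalIntegral.integral_sub (Continuous.intervalIntegrable (by fun_prop) _ _)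
        (Continuous.intervalIntegrable (by fun_prop) _ _), ← e2]
    congr 1; ext x; ring
  have s1 := fco_sum cu
  have s2 := fco_sum cv
  have s3 := fco_sum hφ
  have z0 := fco_zero e1
  have z1 := fco_zero mφ
  have d1 := fun n (hn : n ≠ 0) => fco_deriv hu cv pu (n := n) hn
  have d2 := fun n (hn : n ≠ 0) => fco_deriv hv (hφ.sub cu) pv (n := n) hn
  have hle : ∀ n, ‖fco u n‖ ^ 2 ≤ ‖fco v n‖ ^ 2 := by
    intro n
    by_cases hn : n = 0
    · subst hn; rw [z0]; simp
    · rw [d1 n hn]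
      simp only [norm_mul, Complex.norm_I, one_mul, Complex.norm_intCast]
      have : (1:ℝ) ≤ |(n:ℝ)| := by exact_mod_cast Int.one_le_abs hn
      have h0 := norm_nonneg (fco u n)
      gcongr
      nlinarith
  have s4 := s2.sub s1
  have hz : (2 * π)⁻¹ * (∫ x in (0:ℝ)..(2 * π), (v x) ^ 2) -
      (2 * π)⁻¹ * (∫ x in (0:ℝ)..(2 * π), (u x) ^ 2) ≤ 0 := by
    have : 0 < (2 * π)⁻¹ := by positivity
    nlinarith
  have hz2 := le_antisymm hz (s4.nonneg fun n => sub_nonneg.mpr (hle n))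
  rw [hz2] at s4
  have hz3 := (hasSum_zero_iff_of_nonneg (fun n => sub_nonneg.mpr (hle n))).mp s4
  have hf0 : ∀ n, fco φ n = 0 := by
    intro n
    by_cases hn : n = 0
    · subst hn; exact z1
    · have a := d2 n hn
      rw [fco_sub hφ cu, d1 n hn] at a
      have b : ‖fco v n‖ ^ 2 - ‖fco u n‖ ^ 2 = 0 := congrFun hz3 n
      rw [d1 n hn] at b
      simp only [norm_mul, Complex.norm_I, one_mul, Complex.norm_intCast] at b
      have c : ‖((1:ℂ) - n ^ 2) * fco u n‖ = 0 := by
        have : (((n:ℝ)) ^ 2 - 1) * ‖fco u n‖ ^ 2 = 0 := by rw [← b, mul_pow, sq_abs]; ring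
        rcases mul_eq_zero.mp this with h | h
        · have : (1:ℂ) - n ^ 2 = 0 := by
            have : ((((n:ℝ)) ^ 2 - 1 : ℝ) : ℂ) = 0 := by rw [h]; simp
            push_cast at this; linear_combination -this
          simp [this]
        · simp at h; simp [h]
      rw [norm_eq_zero] at c
      linear_combination a + c + (n:ℂ) ^ 2 * fco u n * Complex.I_sq
  simp only [hf0, norm_zero] at s3
  have := s3.unique (a₂ := 0) (by convert (hasSum_zero : HasSum (fun _ : ℤ => (0:ℝ)) 0) using 2; norm_num)
  simpa [Real.pi_ne_zero] using this
end

noncomputable section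
open scoped ContDiff

variable {f : Sph → ℝ} {bb : ContDiffBump (0:ℝ)} {C t : ℝ}

/-- normal derivative of `f` along the great circle -/
def phi (f : Sph → ℝ) (ζ : Vq) (θ : ℝ) : ℝ := fderiv ℝ (fext f) (qm (rot θ ζ)) (Nm ζ)
/-- tangential derivative -/
def Fd (f : Sph → ℝ) (ζ : Vq) (θ : ℝ) : ℝ := fderiv ℝ (fext f) (qm (rot θ ζ)) (Tm (rot θ ζ))

theorem fderiv_fext_cont (hf : SmoothSph f) {x : E3} (hx : x ≠ 0) :
    ContinuousAt (fderiv ℝ (fext f)) x :=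
  (ContDiffAt.fderiv_right (m := 0) (n := ∞) (fext_contDiffAt f hf x hx) (by simp)).continuousAt

theorem fderiv_comp_cont {Y : Type*} [TopologicalSpace Y] (hf : SmoothSph f) {z n : Y → E3}
    (hz : Continuous z) (hn : Continuous n) (h0 : ∀ y, z y ≠ 0) :
    Continuous fun y => fderiv ℝ (fext f) (z y) (n y) := by
  have : Continuous fun y => fderiv ℝ (fext f) (z y) :=
    continuous_iff_continuousAt.mpr fun y =>
      ContinuousAt.comp (g := fderiv ℝ (fext f)) (fderiv_fext_cont hf (h0 y)) hz.continuousAt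
  exact this.clm_apply hn

theorem phi_cont (hf : SmoothSph f) {ζ : Vq} (h : ‖ζ‖ = 1) : Continuous (phi f ζ) :=
  fderiv_comp_cont hf (qm_smooth.continuous.comp (rot_cont1 ζ)) continuous_const
    fun θ => qm_ne (rot_ne h θ)
theorem Fd_cont (hf : SmoothSph f) {ζ : Vq} (h : ‖ζ‖ = 1) : Continuous (Fd f ζ) :=
  fderiv_comp_cont hf (qm_smooth.continuous.comp (rot_cont1 ζ))
    (Tm_smooth.continuous.comp (rot_cont1 ζ)) fun θ => qm_ne (rot_ne h θ)

theorem phi_per (f : Sph → ℝ) (ζ : Vq) (θ : ℝ) : phi f ζ (θ + 2 * π) = phi f ζ θ := by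
  unfold phi; rw [rot_two_pi, qm_neg]
theorem Fc_per (f : Sph → ℝ) (ζ : Vq) (θ : ℝ) : Fc f ζ (θ + 2 * π) = Fc f ζ θ := by
  unfold Fc; rw [rot_two_pi, qm_neg]

theorem qrot_deriv (ζ : Vq) (θ : ℝ) : HasDerivAt (fun θ => qm (rot θ ζ)) (Tm (rot θ ζ)) θ := by
  rw [funext fun θ => rot_qm θ ζ, rot_Tm]
  refine (((hasDerivAt_cos θ).smul_const (qm ζ)).add
    ((hasDerivAt_sin θ).smul_const (Tm ζ))).congr_deriv ?_
  module
theorem Trot_deriv (ζ : Vq) (θ : ℝ) : HasDerivAt (fun θ => Tm (rot θ ζ)) (-qm (rot θ ζ)) θ := by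
  rw [funext fun θ => rot_Tm θ ζ, rot_qm]
  refine (((hasDerivAt_cos θ).smul_const (Tm ζ)).sub
    ((hasDerivAt_sin θ).smul_const (qm ζ))).congr_deriv ?_
  module
theorem Fc_deriv (hf : SmoothSph f) {ζ : Vq} (h : ‖ζ‖ = 1) (θ : ℝ) :
    HasDerivAt (Fc f ζ) (Fd f ζ θ) θ :=
  fext_curve hf (qrot_deriv ζ θ) (qm_ne (rot_ne h θ))

theorem on1 (z : Vq) : ⟪z, Jm z⟫ = 0 := by rw [inner_Vq]; simp [Jm_apply]; ring
theorem on2 (z : Vq) : ⟪z, Ri z⟫ = 0 := by rw [inner_Vq]; simp [Ri_apply]; ring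
theorem on3 (z : Vq) : ⟪z, Rj z⟫ = 0 := by rw [inner_Vq]; simp [Rj_apply]; ring
theorem on4 (z : Vq) : ⟪Jm z, Ri z⟫ = 0 := by rw [inner_Vq]; simp [Jm_apply, Ri_apply]; ring
theorem on5 (z : Vq) : ⟪Jm z, Rj z⟫ = 0 := by rw [inner_Vq]; simp [Jm_apply, Rj_apply]; ring
theorem on6 (z : Vq) : ⟪Ri z, Rj z⟫ = 0 := by rw [inner_Vq]; simp [Ri_apply, Rj_apply]; ring
theorem on7 (z : Vq) : ⟪Ri z, Ri z⟫ = ⟪z, z⟫ := by rw [inner_Vq, inner_Vq]; simp [Ri_apply]; ring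
theorem on8 (z : Vq) : ⟪Rj z, Rj z⟫ = ⟪z, z⟫ := by rw [inner_Vq, inner_Vq]; simp [Rj_apply]; ring

theorem comb_inner {ζ : Vq} (h : ‖ζ‖ = 1) (a b c d a' b' c' d' : ℝ) :
    ⟪a • ζ + b • Jm ζ + (c • Ri ζ + d • Rj ζ), a' • ζ + b' • Jm ζ + (c' • Ri ζ + d' • Rj ζ)⟫
      = a * a' + b * b' + c * c' + d * d' := by
  have hz : ⟪ζ, ζ⟫ = 1 := by rw [real_inner_self_eq_norm_sq, h]; norm_num
  have r1 := on1 ζ; have r2 := on2 ζ; have r3 := on3 ζ; have r4 := on4 ζ; have r5 := on5 ζ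
  have r6 := on6 ζ
  have c1 := r1; have c2 := r2; have c3 := r3; have c4 := r4; have c5 := r5; have c6 := r6
  rw [real_inner_comm] at c1 c2 c3 c4 c5 c6
  simp only [inner_add_left, inner_add_right, real_inner_smul_left, real_inner_smul_right, on7, on8,
    Jm_JJ, hz, r1, r2, r3, r4, r5, r6, c1, c2, c3, c4, c5, c6]
  ring

theorem case2' (X : Ctx f bb C) {ζ : Vq} (hζ : ‖ζ‖ = 1)
    (hS : (∫ θ in (0:ℝ)..(2 * π), Fc f ζ θ) = 0)
    (hc : (∫ θ in (0:ℝ)..(2 * π), phi f ζ θ * cos θ) = 0)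
    (hs : (∫ θ in (0:ℝ)..(2 * π), phi f ζ θ * sin θ) = 0)
    (h0 : (∫ θ in (0:ℝ)..(2 * π), phi f ζ θ) = 0)
    (hne : ∃ θ, phi f ζ θ ≠ 0) :
    ∃ t0 > 0, ∀ t, Sm bb C t → |t| ≤ t0 →
      systole (confMetric fun x => (1 + t * f x) ^ 2) ≤ 2 * π := by
  have cF := Fc_cont X.hf hζ
  have cφ := phi_cont X.hf hζ
  have cFd := Fd_cont X.hf hζ
  set F := Fc f ζ with hF
  set φ := phi f ζ with hφ
  have aF : avg F = 0 := by unfold avg; rw [hS, smul_zero]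
  have ac : avg (fun θ => φ θ * cos θ) = 0 := by unfold avg; rw [hc, smul_zero]
  have as : avg (fun θ => φ θ * sin θ) = 0 := by unfold avg; rw [hs, smul_zero]
  set G := P0 F with hG
  set U := P0 (fun θ => φ θ * cos θ) with hU
  set W := P0 (fun θ => φ θ * sin θ) with hW
  have dF : ∀ θ, HasDerivAt F (Fd f ζ θ) θ := Fc_deriv X.hf hζ
  have dG : ∀ θ, HasDerivAt G (F θ) θ := fun θ => by
    have := P0_deriv F cF θ; rwa [aF, sub_zero] at this
  have dU : ∀ θ, HasDerivAt U (φ θ * cos θ) θ := fun θ => by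
    have := P0_deriv (fun θ => φ θ * cos θ) (by fun_prop) θ; rwa [ac, sub_zero] at this
  have dW : ∀ θ, HasDerivAt W (φ θ * sin θ) θ := fun θ => by
    have := P0_deriv (fun θ => φ θ * sin θ) (by fun_prop) θ; rwa [as, sub_zero] at this
  have cG : Continuous G := continuous_iff_continuousAt.mpr fun τ => (dG τ).continuousAt
  have cU : Continuous U := continuous_iff_continuousAt.mpr fun τ => (dU τ).continuousAt
  have cW : Continuous W := continuous_iff_continuousAt.mpr fun τ => (dW τ).continuousAt
  have pF : ∀ θ, F (θ + 2 * π) = F θ := Fc_per f ζ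
  have pφ : ∀ θ, φ (θ + 2 * π) = φ θ := phi_per f ζ
  have pG : ∀ θ, G (θ + 2 * π) = G θ := P0_per F cF pF
  have pU : ∀ θ, U (θ + 2 * π) = U θ := P0_per _ (by fun_prop) (fun θ => by rw [pφ, cos_add_two_pi])
  have pW : ∀ θ, W (θ + 2 * π) = W θ := P0_per _ (by fun_prop) (fun θ => by rw [pφ, sin_add_two_pi])
  have z2 : ∀ g : ℝ → ℝ, (∀ θ, g (θ + 2 * π) = g θ) → g (2 * π) = g 0 := fun g hg => by
    rw [← hg 0, zero_add]
  set w : ℝ → Vq := fun θ => (1 / 2 * F θ) • ζ + (-(1 / 2) * G θ) • Jm ζ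
    + ((1 / 2 * U θ) • Ri ζ + (1 / 2 * W θ) • Rj ζ) with hw
  have eJ : ∀ θ, Jm (gam f bb ζ θ) = (1 / 2 * Fd f ζ θ) • ζ + (-(1 / 2) * F θ) • Jm ζ
    + ((1 / 2 * (φ θ * cos θ)) • Ri ζ + (1 / 2 * (φ θ * sin θ)) • Rj ζ) := fun θ => by
    rw [J_gam X hζ, hF, hφ]; unfold Fd phi; module
  have dw : ∀ θ, HasDerivAt w (Jm (gam f bb ζ θ)) θ := fun θ => by
    rw [eJ]
    exact ((((dF θ).const_mul _).smul_const ζ).add (((dG θ).const_mul _).smul_const _)).add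
      ((((dU θ).const_mul _).smul_const _).add (((dW θ).const_mul _).smul_const _))
  have cg := gam_cont X ζ
  have pw : ∀ θ, w (θ + 2 * π) = w θ := fun θ => by simp only [hw, pF, pG, pU, pW]
  have ag : avg (gam f bb ζ) = 0 := by
    have h1 := avg_J Jm _ cg
    have h2 : avg (fun θ => Jm (gam f bb ζ θ)) = 0 := by
      unfold avg
      rw [intervalIntegral.integral_eq_sub_of_hasDerivAt (fun x _ => dw x)
        ((Jm.continuous.comp cg).intervalIntegrable _ _)]
      rw [show w (2 * π) = w 0 by rw [← pw 0, zero_add], sub_self, smul_zero]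
    rw [h2] at h1
    rw [← norm_eq_zero, ← Jm_norm, ← h1, norm_zero]
  have mw : ∫ θ in (0:ℝ)..(2 * π), w θ = 0 := by
    have ii : ∀ (g : ℝ → ℝ) (v : Vq) (r : ℝ), Continuous g → 
        IntervalIntegrable (fun θ => (r * g θ) • v) volume 0 (2 * π) := fun g v r hg =>
      Continuous.intervalIntegrable (by fun_prop) _ _
    have mG := P0_mean F cF
    have mU := P0_mean (fun θ => φ θ * cos θ) (by fun_prop)
    have mW := P0_mean (fun θ => φ θ * sin θ) (by fun_prop)
    rw [hw, intervalIntegral.integral_add ((ii F ζ _ cF).add (ii G _ _ cG))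
      ((ii U _ _ cU).add (ii W _ _ cW)), intervalIntegral.integral_add (ii F ζ _ cF) (ii G _ _ cG),
      intervalIntegral.integral_add (ii U _ _ cU) (ii W _ _ cW)]
    simp only [intervalIntegral.integral_smul_const, intervalIntegral.integral_const_mul]
    rw [hS, mG, mU, mW]; simp
  have hloop : IsLoop Jm w (gam f bb ζ) := ⟨pw, mw, cg, fun θ => by rw [ag, sub_zero]; exact dw θ⟩
  refine case2 X hζ hloop hS ?_
  have ein : ∀ θ, ⟪gam f bb ζ θ, w θ⟫ = 1 / 4 * (Fd f ζ θ * G θ - F θ ^ 2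
      + φ θ * (cos θ * W θ - sin θ * U θ)) := fun θ => by
    have eJw : Jm (w θ) = (1 / 2 * G θ) • ζ + (1 / 2 * F θ) • Jm ζ
      + ((1 / 2 * W θ) • Ri ζ + (-(1 / 2) * U θ) • Rj ζ) := by
      simp only [hw, map_add, map_smul, Jm_sq, Jm_Ri, Jm_Rj]; module
    rw [← Jm_JJ, eJ, eJw, comb_inner hζ]; ring
  have hQ : ∫ θ in (0:ℝ)..(2 * π), (1 / 4 * (F θ) ^ 2 + 1 / 2 * ⟪gam f bb ζ θ, w θ⟫)
      = - (1 / 8) * ∫ θ in (0:ℝ)..(2 * π), (sin θ * U θ - cos θ * W θ) * φ θ := by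
    have e1 := int_deriv_zero (fun x => (dF x).fun_mul (dG x)) (by fun_prop)
      (by rw [z2 F pF, z2 G pG])
    have e2 := congrArg (fun x => 1 / 8 * x) e1
    rw [← intervalIntegral.integral_const_mul, mul_zero] at e2
    rw [← intervalIntegral.integral_const_mul, ← sub_eq_zero,
      ← intervalIntegral.integral_sub (Continuous.intervalIntegrable (by
          have := hloop.cont
          fun_prop) _ _)
        (Continuous.intervalIntegrable (by fun_prop) _ _), ← e2]
    congr 1; ext θ; rw [ein]; ring
  rw [hQ]
  by_contra hneg
  have hpos : 0 ≤ ∫ θ in (0:ℝ)..(2 * π), (sin θ * U θ - cos θ * W θ) * φ θ := by linarith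
  have hz := wirt (u := fun θ => sin θ * U θ - cos θ * W θ)
    (v := fun θ => cos θ * U θ + sin θ * W θ) (φ := φ)
    (fun θ => (((hasDerivAt_sin θ).fun_mul (dU θ)).fun_sub
      ((hasDerivAt_cos θ).fun_mul (dW θ))).congr_deriv (by ring))
    (fun θ => (((hasDerivAt_cos θ).fun_mul (dU θ)).fun_add
      ((hasDerivAt_sin θ).fun_mul (dW θ))).congr_deriv (by
        linear_combination φ θ * sin_sq_add_cos_sq θ))
    cφ (by simp [z2 W pW]) (by simp [z2 U pU]) h0 hpos
  obtain ⟨θ, hθ⟩ := hne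
  obtain ⟨y, hy, hyy⟩ := (show Function.Periodic φ (2 * π) from pφ).exists_mem_Ico₀
    Real.two_pi_pos θ
  have := intervalIntegral.integral_pos Real.two_pi_pos (f := fun x => φ x ^ 2)
    (by fun_prop) (fun x _ => sq_nonneg _) ⟨y, ⟨hy.1, hy.2.le⟩, by rw [← hyy]; positivity⟩
  linarith
end

noncomputable section
open scoped ContDiff

variable {f : Sph → ℝ} {bb : ContDiffBump (0:ℝ)} {C t : ℝ}

theorem exact_case (hf : SmoothSph f) {ζ : Vq} (hζ : ‖ζ‖ = 1) (hpos : ∀ x, 0 < 1 + t * f x)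
    (hφ : ∀ θ, t * phi f ζ θ = 0) (hS : t * (∫ θ in (0:ℝ)..(2 * π), Fc f ζ θ) = 0) :
    systole (confMetric fun x => (1 + t * f x) ^ 2) ≤ 2 * π := by
  have cF := Fc_cont hf hζ
  have cFd := Fd_cont hf hζ
  have hr : ∀ θ, 0 < 1 + t * Fc f ζ θ := fun θ => hpos _
  set S : ℝ → ℝ := fun θ => θ + t * P0 (Fc f ζ) θ with hSd
  have dS : ∀ θ, HasDerivAt S (1 + t * Fc f ζ θ) θ := fun θ => by
    refine ((hasDerivAt_id θ).add ((P0_deriv _ cF θ).const_mul t)).congr_deriv ?_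
    have : t * avg (Fc f ζ) = 0 := by
      unfold avg; rw [smul_eq_mul, mul_left_comm, hS, mul_zero]
    rw [mul_sub, this, sub_zero]
  have cS : Continuous S := continuous_iff_continuousAt.mpr fun τ => (dS τ).continuousAt
  have mS : StrictMono S := strictMono_of_hasDerivAt_pos dS hr
  have pP : Function.Periodic (P0 (Fc f ζ)) (2 * π) := P0_per _ cF (Fc_per f ζ)
  have pS : ∀ θ, S (θ + 2 * π) = S θ + 2 * π := fun θ => by
    simp only [hSd]; rw [pP θ]; ring
  have sS : Function.Surjective S := by
    intro y
    have hn : ∀ n : ℤ, S (n * (2 * π)) = n * (2 * π) + t * P0 (Fc f ζ) 0 := fun n => by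
      simp only [hSd]
      rw [show (n:ℝ) * (2 * π) = 0 + n * (2 * π) by ring, pP.int_mul n 0]
    obtain ⟨n, h1⟩ := exists_int_gt ((y - t * P0 (Fc f ζ) 0) / (2 * π))
    obtain ⟨m, h2⟩ := exists_int_lt ((y - t * P0 (Fc f ζ) 0) / (2 * π))
    rw [div_lt_iff₀ Real.two_pi_pos] at h1
    rw [lt_div_iff₀ Real.two_pi_pos] at h2
    exact mem_range_of_exists_le_of_exists_ge cS ⟨m * (2 * π), by rw [hn]; linarith⟩
      ⟨n * (2 * π), by rw [hn]; linarith⟩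
  let e : ℝ ≃o ℝ := mS.orderIsoOfSurjective S sS
  set Θ : ℝ → ℝ := fun s => e.symm s with hΘ
  have eS : ∀ s, S (Θ s) = s := fun s => e.apply_symm_apply s
  have eΘ : ∀ θ, Θ (S θ) = θ := fun s => e.symm_apply_apply s
  have cΘ : Continuous Θ := e.symm.continuous
  have dΘ : ∀ s, HasDerivAt Θ (1 + t * Fc f ζ (Θ s))⁻¹ s := fun s =>
    HasDerivAt.of_local_left_inverse cΘ.continuousAt (dS (Θ s)) (hr _).ne'
      (Filter.Eventually.of_forall eS)
  have pΘ : ∀ s, Θ (s + 2 * π) = Θ s + 2 * π := fun s => by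
    rw [← eΘ (Θ s + 2 * π), pS, eS]
  have hn : ∀ θ, ‖rot θ ζ‖ = 1 := fun θ => by rw [rot_norm, hζ]
  have dT := fun s => HasDerivAt.scomp s (Trot_deriv ζ (Θ s)) (dΘ s)
  have dq := fun s => HasDerivAt.scomp s (qrot_deriv ζ (Θ s)) (dΘ s)
  have dF := fun s => HasDerivAt.comp s (Fc_deriv hf hζ (Θ s)) (dΘ s)
  refine systole_le_of_ode f hf t hpos (fun s => qm (rot (Θ s) ζ))
    (fun s => (1 + t * Fc f ζ (Θ s)) • Tm (rot (Θ s) ζ))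
    (fun s => (t / (1 + t * Fc f ζ (Θ s)) * Fd f ζ (Θ s)) • Tm (rot (Θ s) ζ) - qm (rot (Θ s) ζ))
    (fun s => by rw [qm_norm, hn]; norm_num) (fun s => ?_) (fun s => ?_) (fun s => ?_) ?_
    (fun s v => ?_) (2 * π) Real.two_pi_pos (fun s => by simp only [pΘ, rot_two_pi, qm_neg])
  · refine (dq s).congr_deriv ?_
    have := (hr (Θ s)).ne'
    change _ = ((1 + t * Fc f ζ (Θ s)) ^ 2)⁻¹ • (1 + t * Fc f ζ (Θ s)) • Tm (rot (Θ s) ζ)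
    rw [smul_smul]; congr 1; field_simp
  · rw [norm_smul, Tm_norm, hn, Real.norm_eq_abs, abs_of_pos (hr _)]; simp [Fc]
  · have := ((((dF s).const_mul t).const_add 1).smul (dT s))
    refine this.congr_deriv ?_
    have := (hr (Θ s)).ne'
    simp only [Function.comp_apply, smul_smul, smul_neg]
    rw [mul_inv_cancel₀ this, one_smul, div_eq_mul_inv]
    module
  · have c1 := rot_cont1 ζ
    have c2 : Continuous fun s => qm (rot (Θ s) ζ) := qm_smooth.continuous.comp (c1.comp cΘ)
    have c3 : Continuous fun s => Tm (rot (Θ s) ζ) := Tm_smooth.continuous.comp (c1.comp cΘ)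
    have c4 : Continuous fun s => t / (1 + t * Fc f ζ (Θ s)) :=
      continuous_const.div (by fun_prop) fun s => (hr _).ne'
    fun_prop
  · set z := rot (Θ s) ζ with hz
    have hz0 : z ≠ 0 := rot_ne hζ _
    have hm : gF f (qm z) = (fderiv ℝ (fext f) (qm z) (Tm z)) • Tm z
        + (fderiv ℝ (fext f) (qm z) (Nm z)) • Nm z := by
      have := frame z (gF f (qm z)) (hn _)
      rwa [gF_inner, gF_inner, gF_inner, fderiv_fext_self hf (qm_ne hz0), zero_smul, zero_add] at this
    rw [← gF_inner, hm, inner_sub_left, real_inner_smul_left, inner_add_left, real_inner_smul_left,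
      real_inner_smul_left]
    have h1 : t * fderiv ℝ (fext f) (qm z) (Nm z) = 0 := by
      rw [hz, rot_Nm]; exact hφ (Θ s)
    have h2 : Fd f ζ (Θ s) = fderiv ℝ (fext f) (qm z) (Tm z) := rfl
    have h3 : Fc f ζ (Θ s) = fext f (qm z) := rfl
    rw [h2, h3, div_eq_mul_inv]
    linear_combination -(1 + t * fext f (qm z))⁻¹ * ⟪Nm z, v⟫ * h1
end

noncomputable section
open scoped ContDiff

variable {f : Sph → ℝ} {bb : ContDiffBump (0:ℝ)} {C t : ℝ}

theorem par_deriv {g g' : ℝ → ℝ → ℝ} (hd : ∀ s θ, HasDerivAt (fun s => g s θ) (g' s θ) s)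
    (hc : ∀ s, Continuous (g s)) (hc' : Continuous fun x : ℝ × ℝ => g' x.1 x.2) (s : ℝ) :
    HasDerivAt (fun s => ∫ θ in (0:ℝ)..(2 * π), g s θ) (∫ θ in (0:ℝ)..(2 * π), g' s θ) s := by
  obtain ⟨M, hM⟩ := ((isCompact_Icc (a := s - 1) (b := s + 1)).prod
    (isCompact_Icc (a := (0:ℝ)) (b := 2 * π))).exists_bound_of_continuousOn hc'.continuousOn
  have hcs : Continuous (g' s) := by
    exact Continuous.comp (g := fun x : ℝ × ℝ => g' x.1 x.2) (f := fun θ : ℝ => (s, θ)) hc'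
      (by fun_prop)
  refine (intervalIntegral.hasDerivAt_integral_of_dominated_loc_of_deriv_le (μ := volume)
    (F := g) (F' := g') (s := Set.Icc (s - 1) (s + 1)) (bound := fun _ => M)
    (Icc_mem_nhds (by linarith) (by linarith))
    (Filter.Eventually.of_forall fun x => (hc x).aestronglyMeasurable)
    ((hc s).intervalIntegrable _ _) hcs.aestronglyMeasurable ?_ (by simp) ?_).2
  · refine Filter.Eventually.of_forall fun θ hθ x hx => ?_
    rw [Set.uIoc_of_le Real.two_pi_pos.le] at hθ
    exact hM (x, θ) ⟨hx, Set.Ioc_subset_Icc_self hθ⟩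
  · exact Filter.Eventually.of_forall fun θ _ x _ => hd x θ

def rI (s : ℝ) (z : Vq) : Vq := cos (s / 2) • z + sin (s / 2) • Ri z
def rJ (s : ℝ) (z : Vq) : Vq := cos (s / 2) • z + sin (s / 2) • Rj z

theorem half_c (s : ℝ) : cos s = cos (s / 2) ^ 2 - sin (s / 2) ^ 2 := by
  rw [← cos_two_mul']; ring_nf
theorem half_s (s : ℝ) : sin s = 2 * sin (s / 2) * cos (s / 2) := by
  rw [← sin_two_mul]; ring_nf

theorem rI_norm (θ : ℝ) (z : Vq) : ‖rI θ z‖ = ‖z‖ := by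
  have : ‖rI θ z‖ ^ 2 = (‖z‖) ^ 2 := by
    rw [nsq_Vq, nsq_Vq]; simp [Ri_apply, rI]
    linear_combination (z 0 ^ 2 + z 1 ^ 2 + z 2 ^ 2 + z 3 ^ 2) * (sin_sq_add_cos_sq (θ / 2))
  exact (sq_eq_sq₀ (norm_nonneg _) (by positivity)).mp this
theorem rJ_norm (θ : ℝ) (z : Vq) : ‖rJ θ z‖ = ‖z‖ := by
  have : ‖rJ θ z‖ ^ 2 = (‖z‖) ^ 2 := by
    rw [nsq_Vq, nsq_Vq]; simp [Rj_apply, rJ]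
    linear_combination (z 0 ^ 2 + z 1 ^ 2 + z 2 ^ 2 + z 3 ^ 2) * (sin_sq_add_cos_sq (θ / 2))
  exact (sq_eq_sq₀ (norm_nonneg _) (by positivity)).mp this
theorem rI_qm (s : ℝ) (z : Vq) : qm (rI s z) = qm z := by
  have := sin_sq_add_cos_sq (s / 2)
  ext i; fin_cases i <;> simp [qm, rI, Ri_apply]
  · linear_combination (z 0 ^ 2 + z 1 ^ 2 - z 2 ^ 2 - z 3 ^ 2) * this
  · linear_combination (z 1 * z 2 + z 0 * z 3) * this
  · linear_combination (z 1 * z 3 - z 0 * z 2) * this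
theorem rI_Tm (s : ℝ) (z : Vq) : Tm (rI s z) = cos s • Tm z + sin s • Nm z := by
  rw [half_c s, half_s s]
  ext i; fin_cases i <;> simp [Tm, Nm, rI, Ri_apply] <;> ring
theorem rI_Nm (s : ℝ) (z : Vq) : Nm (rI s z) = cos s • Nm z - sin s • Tm z := by
  rw [half_c s, half_s s]
  ext i; fin_cases i <;> simp [Tm, Nm, rI, Ri_apply] <;> ring
theorem rJ_Tm (s : ℝ) (z : Vq) : Tm (rJ s z) = Tm z := by
  have := sin_sq_add_cos_sq (s / 2)
  ext i; fin_cases i <;> simp [Tm, rJ, Rj_apply]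
  · linear_combination (z 1 * z 2 - z 0 * z 3) * this
  · linear_combination (z 0 ^ 2 - z 1 ^ 2 + z 2 ^ 2 - z 3 ^ 2) * this
  · linear_combination (z 0 * z 1 + z 2 * z 3) * this
theorem rJ_qm (s : ℝ) (z : Vq) : qm (rJ s z) = cos s • qm z - sin s • Nm z := by
  rw [half_c s, half_s s]
  ext i; fin_cases i <;> simp [qm, Nm, rJ, Rj_apply] <;> ring
theorem rJ_Nm (s : ℝ) (z : Vq) : Nm (rJ s z) = cos s • Nm z + sin s • qm z := by
  rw [half_c s, half_s s]
  ext i; fin_cases i <;> simp [qm, Nm, rJ, Rj_apply] <;> ring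

theorem phi_sin_zero (hf : SmoothSph f)
    (hS : ∀ ζ : Vq, ‖ζ‖ = 1 → (∫ θ in (0:ℝ)..(2 * π), Fc f ζ θ) = 0) {ζ : Vq} (h : ‖ζ‖ = 1) :
    (∫ θ in (0:ℝ)..(2 * π), phi f ζ θ * sin θ) = 0 := by
  have hn : ∀ s, ‖rI s ζ‖ = 1 := fun s => by rw [rI_norm, h]
  have hq : ∀ s θ, qm (rot θ (rI s ζ)) = cos θ • qm ζ + sin θ • (cos s • Tm ζ + sin s • Nm ζ) :=
    fun s θ => by rw [rot_qm, rI_qm, rI_Tm]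
  have hd := par_deriv (g := fun s θ => Fc f (rI s ζ) θ)
    (g' := fun s θ => fderiv ℝ (fext f) (qm (rot θ (rI s ζ))) (sin θ • (cos s • Nm ζ - sin s • Tm ζ)))
    (fun s θ => by
      refine fext_curve hf ?_ (qm_ne (rot_ne (hn s) θ))
      rw [funext fun s => hq s θ]
      refine (((((hasDerivAt_cos s).smul_const (Tm ζ)).add
        ((hasDerivAt_sin s).smul_const (Nm ζ))).const_smul (sin θ)).const_add _).congr_deriv ?_
      module)
    (fun s => Fc_cont hf (hn s))
    (fderiv_comp_cont hf (by simp only [hq]; fun_prop) (by fun_prop)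
      fun x => qm_ne (rot_ne (hn _) _)) 0
  simp only [hS _ (hn _)] at hd
  have := (hasDerivAt_const (0:ℝ) (0:ℝ)).unique hd
  refine Eq.trans ?_ this.symm
  refine intervalIntegral.integral_congr fun θ _ => ?_
  have e : rI 0 ζ = ζ := by simp [rI]
  simp [phi, e, mul_comm]

theorem phi_cos_zero (hf : SmoothSph f)
    (hS : ∀ ζ : Vq, ‖ζ‖ = 1 → (∫ θ in (0:ℝ)..(2 * π), Fc f ζ θ) = 0) {ζ : Vq} (h : ‖ζ‖ = 1) :
    (∫ θ in (0:ℝ)..(2 * π), phi f ζ θ * cos θ) = 0 := by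
  have hn : ∀ s, ‖rJ s ζ‖ = 1 := fun s => by rw [rJ_norm, h]
  have hq : ∀ s θ, qm (rot θ (rJ s ζ)) = sin θ • Tm ζ + cos θ • (cos s • qm ζ - sin s • Nm ζ) :=
    fun s θ => by rw [rot_qm, rJ_qm, rJ_Tm, add_comm]
  have hd := par_deriv (g := fun s θ => Fc f (rJ s ζ) θ)
    (g' := fun s θ => fderiv ℝ (fext f) (qm (rot θ (rJ s ζ))) (cos θ • (-cos s • Nm ζ - sin s • qm ζ)))
    (fun s θ => by
      refine fext_curve hf ?_ (qm_ne (rot_ne (hn s) θ))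
      rw [funext fun s => hq s θ]
      refine (((((hasDerivAt_cos s).smul_const (qm ζ)).sub
        ((hasDerivAt_sin s).smul_const (Nm ζ))).const_smul (cos θ)).const_add _).congr_deriv ?_
      module)
    (fun s => Fc_cont hf (hn s))
    (fderiv_comp_cont hf (by simp only [hq]; fun_prop) (by fun_prop)
      fun x => qm_ne (rot_ne (hn _) _)) 0
  simp only [hS _ (hn _)] at hd
  have := (hasDerivAt_const (0:ℝ) (0:ℝ)).unique hd
  rw [← neg_eq_zero, ← intervalIntegral.integral_neg]
  refine Eq.trans ?_ this.symm
  refine intervalIntegral.integral_congr fun θ _ => ?_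
  have e : rJ 0 ζ = ζ := by simp [rJ]
  simp [phi, e, mul_comm]

theorem exists_zeta0 (hf : SmoothSph f) :
    ∃ ζ : Vq, ‖ζ‖ = 1 ∧ (∫ θ in (0:ℝ)..(2 * π), phi f ζ θ) = 0 := by
  obtain ⟨ζ, h⟩ : ∃ ζ : Vq, ‖ζ‖ = 1 := ⟨EuclideanSpace.single 0 1, by simp⟩
  have hn : ∀ s, ‖rI s ζ‖ = 1 := fun s => by rw [rI_norm, h]
  have hq : ∀ s θ, qm (rot θ (rI s ζ)) = cos θ • qm ζ + sin θ • (cos s • Tm ζ + sin s • Nm ζ) :=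
    fun s θ => by rw [rot_qm, rI_qm, rI_Tm]
  have hc : Continuous fun s => ∫ θ in (0:ℝ)..(2 * π), phi f (rI s ζ) θ := by
    refine intervalIntegral.continuous_parametric_intervalIntegral_of_continuous' ?_ 0 (2 * π)
    refine fderiv_comp_cont hf ?_ ?_ fun x => qm_ne (rot_ne (hn _) _)
    · simp only [hq]; fun_prop
    · simp only [rI_Nm]; fun_prop
  have hpi : ∀ θ, phi f (rI π ζ) θ = - phi f (rI 0 ζ) (-θ) := fun θ => by
    unfold phi
    rw [hq, hq, rI_Nm, rI_Nm]
    simp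
  have hint : ∫ θ in (0:ℝ)..(2 * π), phi f (rI π ζ) θ = - ∫ θ in (0:ℝ)..(2 * π), phi f (rI 0 ζ) θ := by
    simp only [hpi, intervalIntegral.integral_neg]
    rw [intervalIntegral.integral_comp_neg (fun θ => phi f (rI 0 ζ) θ)]
    have := (show Function.Periodic (phi f (rI 0 ζ)) (2 * π) from phi_per f _).intervalIntegral_add_eq
      (-(2 * π)) 0
    simp at this
    simp [this]
  set A := fun s => ∫ θ in (0:ℝ)..(2 * π), phi f (rI s ζ) θ
  have : (0:ℝ) ∈ Set.range A := by
    rcases le_total (A 0) 0 with h0 | h0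
    · exact mem_range_of_exists_le_of_exists_ge hc ⟨0, h0⟩ ⟨π, by change 0 ≤ A π; linarith [show A π = - A 0 from hint]⟩
    · exact mem_range_of_exists_le_of_exists_ge hc ⟨π, by change A π ≤ 0; linarith [show A π = - A 0 from hint]⟩ ⟨0, h0⟩
  obtain ⟨s, hs⟩ := this
  exact ⟨rI s ζ, hn s, hs⟩
end

noncomputable section
open scoped ContDiff

variable {f : Sph → ℝ} {bb : ContDiffBump (0:ℝ)} {C t : ℝ}

/-- spherical coordinates -/
def spc (x : ℝ × ℝ) : Sph := ⟨!₂[sin x.1 * cos x.2, sin x.1 * sin x.2, cos x.1], by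
  rw [mem_sphere_zero_iff_norm, ← sq_eq_sq₀ (norm_nonneg _) (by norm_num), nsq_E3]
  simp
  linear_combination sin x.1 ^ 2 * sin_sq_add_cos_sq x.2 + sin_sq_add_cos_sq x.1⟩

theorem spc_lip : LipschitzWith 4 spc := by
  refine LipschitzWith.of_dist_le_mul fun x y => ?_
  rw [Subtype.dist_eq, dist_eq_norm]
  set d := dist x y
  have hd : 0 ≤ d := dist_nonneg
  have h1 : |x.1 - y.1| ≤ d := by rw [← Real.dist_eq]; exact le_max_left _ _
  have h2 : |x.2 - y.2| ≤ d := by rw [← Real.dist_eq]; exact le_max_right _ _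
  have a1 := (abs_sin_sub_sin_le x.1 y.1).trans h1
  have a2 := (abs_cos_sub_cos_le x.1 y.1).trans h1
  have a3 := (abs_sin_sub_sin_le x.2 y.2).trans h2
  have a4 := (abs_cos_sub_cos_le x.2 y.2).trans h2
  have key : ∀ p q r s : ℝ, |p - q| ≤ d → |r - s| ≤ d → |q| ≤ 1 → |r| ≤ 1 →
      (p * r - q * s) ^ 2 ≤ (2 * d) ^ 2 := fun p q r s e1 e2 e3 e4 => by
    have : |p * r - q * s| ≤ 2 * d := by
      have : p * r - q * s = (p - q) * r + q * (r - s) := by ring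
      rw [this]
      refine (abs_add_le _ _).trans ?_
      rw [abs_mul, abs_mul]
      nlinarith [abs_nonneg (p - q), abs_nonneg (r - s), abs_nonneg q, abs_nonneg r]
    rw [← sq_abs]; gcongr
  have k1 := key _ _ _ _ a1 a4 (abs_sin_le_one _) (abs_cos_le_one _)
  have k2 := key _ _ _ _ a1 a3 (abs_sin_le_one _) (abs_sin_le_one _)
  have k3 : (cos x.1 - cos y.1) ^ 2 ≤ d ^ 2 := by rw [← sq_abs]; gcongr
  have : ‖((spc x : E3) - (spc y : E3))‖ ^ 2 ≤ (4 * d) ^ 2 := by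
    rw [nsq_E3]
    simp only [spc, PiLp.sub_apply]
    simp
    nlinarith
  have := (sq_le_sq₀ (norm_nonneg _) (by positivity)).mp this
  simpa using this

theorem spc_surj (x : Sph) : ∃ p ∈ Metric.closedBall (0 : ℝ × ℝ) 4, spc p = x := by
  have hx : (x:E3) 0 ^ 2 + (x:E3) 1 ^ 2 + (x:E3) 2 ^ 2 = 1 := by
    rw [← nsq_E3, sph_norm]; norm_num
  set u := (x:E3) 0; set v := (x:E3) 1; set w := (x:E3) 2
  set a := arccos w
  set b := Complex.arg ⟨u, v⟩
  have hw1 : -1 ≤ w := by nlinarith [sq_nonneg u, sq_nonneg v]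
  have hw2 : w ≤ 1 := by nlinarith [sq_nonneg u, sq_nonneg v]
  have hn : ‖(⟨u, v⟩ : ℂ)‖ = sin a := by
    rw [Real.sin_arccos, Complex.norm_def, Complex.normSq_mk]
    congr 1; linarith
  have h1 := Complex.norm_mul_cos_arg ⟨u, v⟩
  have h2 := Complex.norm_mul_sin_arg ⟨u, v⟩
  rw [hn] at h1 h2
  refine ⟨(a, b), ?_, ?_⟩
  · rw [mem_closedBall_zero_iff, Prod.norm_def, max_le_iff, Real.norm_eq_abs, Real.norm_eq_abs]
    have := Real.pi_lt_four
    exact ⟨abs_le.mpr ⟨by linarith [arccos_nonneg w], by linarith [arccos_le_pi w]⟩,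
      (Complex.abs_arg_le_pi _).trans this.le⟩
  · apply Subtype.ext
    ext i; fin_cases i
    · simpa [spc] using h1
    · simpa [spc] using h2
    · simpa [spc] using Real.cos_arccos hw1 hw2

theorem sph_fin : (μH[2] : Measure Sph) Set.univ < ⊤ := by
  have h := spc_lip.hausdorffMeasure_image_le (d := 2) (by norm_num) (Metric.closedBall (0 : ℝ × ℝ) 4)
  have e : spc '' (Metric.closedBall (0 : ℝ × ℝ) 4) = Set.univ :=
    Set.eq_univ_of_forall fun x => by
      obtain ⟨p, hp, e⟩ := spc_surj x; exact ⟨p, hp, e⟩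
  rw [e, hausdorffMeasure_prod_real] at h
  refine h.trans_lt (ENNReal.mul_lt_top ?_ measure_closedBall_lt_top)
  exact ENNReal.rpow_lt_top_of_nonneg (by norm_num) (by simp)

instance sph_finite : IsFiniteMeasure (μH[2] : Measure Sph) := ⟨sph_fin⟩

theorem sph_pos : (μH[2] : Measure Sph) Set.univ ≠ 0 := by
  set P : Sph → ℝ × ℝ := fun x => ((x:E3) 0, (x:E3) 1)
  have hP : LipschitzWith 1 P := by
    refine LipschitzWith.of_dist_le_mul fun x y => ?_
    have hc : ∀ i, dist ((x:E3) i) ((y:E3) i) ≤ dist x y := fun i => by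
      rw [Subtype.dist_eq, dist_eq_norm, dist_eq_norm]
      exact PiLp.norm_apply_le ((x:E3) - (y:E3)) i
    simp only [NNReal.coe_one, one_mul]
    exact max_le (hc 0) (hc 1)
  have h := hP.hausdorffMeasure_image_le (d := 2) (by norm_num) Set.univ
  rw [hausdorffMeasure_prod_real] at h
  have hsub : Metric.ball (0 : ℝ × ℝ) (1 / 2) ⊆ P '' Set.univ := by
    intro p hp
    rw [mem_ball_zero_iff, Prod.norm_def, max_lt_iff, Real.norm_eq_abs, Real.norm_eq_abs,
      abs_lt, abs_lt] at hp
    have hq : 0 ≤ 1 - p.1 ^ 2 - p.2 ^ 2 := by nlinarith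
    refine ⟨⟨!₂[p.1, p.2, √(1 - p.1 ^ 2 - p.2 ^ 2)], ?_⟩, trivial, ?_⟩
    · rw [mem_sphere_zero_iff_norm, ← sq_eq_sq₀ (norm_nonneg _) (by norm_num), nsq_E3]
      simp [Real.sq_sqrt hq]
    · simp [P]
  intro h0
  rw [h0, mul_zero] at h
  have h1 := (measure_mono hsub).trans h
  have h2 : 0 < (volume : Measure (ℝ × ℝ)) (Metric.ball (0 : ℝ × ℝ) (1 / 2)) :=
    Metric.measure_ball_pos _ _ (by norm_num)
  exact absurd h1 (not_le.mpr h2)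
end

noncomputable section
open scoped ContDiff

/-- the similarity `x ↦ z x z̄` -/
def Rm (z : Vq) : E3 →ₗ[ℝ] E3 where
  toFun x := x 0 • qm z + x 1 • Tm z + x 2 • Nm z
  map_add' x y := by simp only [PiLp.add_apply]; module
  map_smul' r x := by simp only [PiLp.smul_apply, smul_eq_mul, RingHom.id_apply]; module

theorem Rm_apply (z : Vq) (x : E3) : Rm z x = x 0 • qm z + x 1 • Tm z + x 2 • Nm z := rfl

theorem Rm_norm (z : Vq) (x : E3) : ‖Rm z x‖ = ‖z‖ ^ 2 * ‖x‖ := by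
  rw [← sq_eq_sq₀ (norm_nonneg _) (by positivity), mul_pow, nsq_Vq, nsq_E3, nsq_E3, Rm_apply]
  simp [qm, Tm, Nm]
  ring

/-- right multiplication by a quaternion -/
def qmul (w : Vq) : Vq →ₗ[ℝ] Vq where
  toFun z := !₂[z 0 * w 0 - z 1 * w 1 - z 2 * w 2 - z 3 * w 3,
    z 0 * w 1 + z 1 * w 0 + z 2 * w 3 - z 3 * w 2,
    z 0 * w 2 - z 1 * w 3 + z 2 * w 0 + z 3 * w 1,
    z 0 * w 3 + z 1 * w 2 - z 2 * w 1 + z 3 * w 0]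
  map_add' x y := by ext i; fin_cases i <;> simp <;> ring
  map_smul' r x := by ext i; fin_cases i <;> simp <;> ring

theorem qmul_norm (w z : Vq) : ‖qmul w z‖ = ‖z‖ * ‖w‖ := by
  rw [← sq_eq_sq₀ (norm_nonneg _) (by positivity), mul_pow, nsq_Vq, nsq_Vq, nsq_Vq]
  simp [qmul]
  ring

theorem Rm_qm (z w : Vq) : Rm z (qm w) = qm (qmul w z) := by
  rw [Rm_apply]
  ext i; fin_cases i <;> simp [qm, Tm, Nm, qmul] <;> ring

theorem qm_surj (x : Sph) : ∃ w : Vq, ‖w‖ = 1 ∧ qm w = x := by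
  have hx : (x:E3) 0 ^ 2 + (x:E3) 1 ^ 2 + (x:E3) 2 ^ 2 = 1 := by
    rw [← nsq_E3, sph_norm]; norm_num
  have hn : ∀ w : Vq, w 0 ^ 2 + w 1 ^ 2 + w 2 ^ 2 + w 3 ^ 2 = 1 → ‖w‖ = 1 := fun w h => by
    rw [← sq_eq_sq₀ (norm_nonneg _) (by norm_num), nsq_Vq, h]; norm_num
  by_cases h : (x:E3) 0 = -1
  · have h1 : (x:E3) 1 = 0 := by rw [h] at hx; nlinarith [sq_nonneg ((x:E3) 1), sq_nonneg ((x:E3) 2)]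
    have h2 : (x:E3) 2 = 0 := by rw [h] at hx; nlinarith [sq_nonneg ((x:E3) 1), sq_nonneg ((x:E3) 2)]
    refine ⟨!₂[0, 0, 1, 0], hn _ (by simp), ?_⟩
    ext i; fin_cases i <;> simp [qm, h, h1, h2]
  · have hp : 0 < (1 + (x:E3) 0) / 2 := by
      have : -1 ≤ (x:E3) 0 := by nlinarith [sq_nonneg ((x:E3) 1), sq_nonneg ((x:E3) 2)]
      have : -1 < (x:E3) 0 := lt_of_le_of_ne this (Ne.symm h)
      linarith
    set s := √((1 + (x:E3) 0) / 2)
    have hs : s ^ 2 = (1 + (x:E3) 0) / 2 := Real.sq_sqrt hp.le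
    have hs0 : s ≠ 0 := (Real.sqrt_pos.mpr hp).ne'
    have e1 : s * ((x:E3) 1 / (2 * s)) = (x:E3) 1 / 2 := by field_simp
    have e2 : s * ((x:E3) 2 / (2 * s)) = (x:E3) 2 / 2 := by field_simp
    have e3 : ((x:E3) 1 / (2 * s)) ^ 2 + ((x:E3) 2 / (2 * s)) ^ 2 = (1 - (x:E3) 0) / 2 := by
      rw [div_pow, div_pow, mul_pow, hs, ← add_div, div_eq_iff (by positivity)]
      linear_combination hx
    refine ⟨!₂[0, s, (x:E3) 1 / (2 * s), (x:E3) 2 / (2 * s)], hn _ ?_, ?_⟩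
    · simp; linarith
    · ext i; fin_cases i
      · simp [qm]; linarith
      · simp [qm, e1]; ring
      · simp [qm, e2]; ring

/-- an isometry of the sphere induced by a linear isometry -/
def sphIso (e : E3 ≃ₗᵢ[ℝ] E3) : Sph ≃ᵢ Sph where
  toFun x := ⟨e x, by simp⟩
  invFun x := ⟨e.symm x, by simp⟩
  left_inv x := by simp
  right_inv x := by simp
  isometry_toFun := Isometry.of_dist_eq fun x y => by
    simp only [Subtype.dist_eq]; exact e.dist_map _ _

variable {f : Sph → ℝ}

theorem int_Rm (hmean : ∫ x, f x ∂(μH[2] : Measure Sph) = 0) {z : Vq} (hz : z ≠ 0) :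
    ∫ x : Sph, fext f (Rm z x) ∂(μH[2] : Measure Sph) = 0 := by
  have hp : 0 < ‖z‖ ^ 2 := by have := norm_pos_iff.mpr hz; positivity
  let L : E3 →ₗᵢ[ℝ] E3 := ⟨(‖z‖ ^ 2)⁻¹ • Rm z, fun x => by
    rw [LinearMap.smul_apply, norm_smul, Rm_norm, Real.norm_of_nonneg (by positivity),
      ← mul_assoc, inv_mul_cancel₀ hp.ne', one_mul]⟩
  let e := sphIso (L.toLinearIsometryEquiv rfl)
  have he : ∀ x : Sph, fext f (Rm z x) = f (e x) := fun x => by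
    rw [← fext_sph f (e x)]
    change _ = fext f ((‖z‖ ^ 2)⁻¹ • Rm z x)
    rw [fext_smul _ _ (by positivity)]
  simp only [he]
  rw [(e.measurePreserving_hausdorffMeasure 2).integral_comp e.toHomeomorph.measurableEmbedding f]
  exact hmean

def Qx (f : Sph → ℝ) (x : E3) : ℝ := ann x * fext f x

theorem Qx_cont (hf : SmoothSph f) : Continuous (Qx f) :=
  (ann_mul_contDiff (fun x => x) contDiff_id (fext f)
    (fun x hx => fext_contDiffAt f hf x hx)).continuous

theorem Qx_bdd (hf : SmoothSph f) : ∃ M, ∀ x, ‖Qx f x‖ ≤ M := by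
  have : HasCompactSupport (Qx f) := ann_compact.mul_right
  exact this.exists_bound_of_continuous (Qx_cont hf)

theorem Qx_eq {x : E3} (h1 : 1 / 2 ≤ ‖x‖) (h2 : ‖x‖ ≤ 2) : Qx f x = fext f x := by
  rw [Qx, ann_one h1 h2, one_mul]

def Ka : Set Vq := {z | 3 / 4 < ‖z‖ ∧ ‖z‖ < 5 / 4}

theorem Ka_open : IsOpen Ka :=
  (isOpen_lt continuous_const continuous_norm).inter (isOpen_lt continuous_norm continuous_const)

instance Ka_fin : IsFiniteMeasure ((volume : Measure Vq).restrict Ka) := by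
  refine ⟨?_⟩
  rw [Measure.restrict_apply_univ]
  refine (measure_mono (t := Metric.ball 0 (5/4)) fun z hz => ?_).trans_lt measure_ball_lt_top
  simpa using hz.2

theorem Ka_sq {z : Vq} (hz : z ∈ Ka) : 1 / 2 ≤ ‖z‖ ^ 2 ∧ ‖z‖ ^ 2 ≤ 2 := by
  obtain ⟨h1, h2⟩ := hz
  constructor <;> nlinarith

theorem Ka_iso (e : Vq ≃ₗᵢ[ℝ] Vq) (G : Vq → ℝ) : ∫ z in Ka, G (e z) = ∫ z in Ka, G z := by
  have h := e.measurePreserving.setIntegral_preimage_emb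
    e.toHomeomorph.measurableEmbedding G Ka
  have : e ⁻¹' Ka = Ka := by ext z; simp [Ka]
  rwa [this] at h

theorem int_Ka (hf : SmoothSph f) (hmean : ∫ x, f x ∂(μH[2] : Measure Sph) = 0) :
    ∫ z in Ka, Qx f (qm z) = 0 := by
  obtain ⟨M, hM⟩ := Qx_bdd hf
  have hc : Continuous fun p : Sph × Vq => Qx f (Rm p.2 p.1) := by
    refine (Qx_cont hf).comp ?_
    simp only [Rm_apply]
    have h1 := qm_smooth.continuous
    have h2 := Tm_smooth.continuous
    have h3 := Nm_smooth.continuous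
    fun_prop
  have hI : Integrable (fun p : Sph × Vq => Qx f (Rm p.2 p.1))
      ((μH[2] : Measure Sph).prod (volume.restrict Ka)) :=
    Integrable.of_bound hc.aestronglyMeasurable M (Filter.Eventually.of_forall fun p => hM _)
  have hsw := integral_integral_swap (f := fun (x : Sph) (z : Vq) => Qx f (Rm z x)) hI
  have hl : ∀ x : Sph, ∫ z in Ka, Qx f (Rm z x) = ∫ z in Ka, Qx f (qm z) := fun x => by
    obtain ⟨w, hw, hx⟩ := qm_surj x
    rw [← hx]
    simp only [Rm_qm]
    let L : Vq →ₗᵢ[ℝ] Vq := ⟨qmul w, fun z => by rw [qmul_norm, hw, mul_one]⟩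
    exact Ka_iso (L.toLinearIsometryEquiv rfl) fun z => Qx f (qm z)
  have hr : ∫ z in Ka, ∫ x : Sph, Qx f (Rm z x) ∂(μH[2] : Measure Sph) = 0 := by
    rw [← integral_zero Vq ℝ (μ := volume.restrict Ka)]
    refine setIntegral_congr_fun Ka_open.measurableSet fun z hz => ?_
    have hz2 := Ka_sq hz
    have : ∀ x : Sph, Qx f (Rm z x) = fext f (Rm z x) := fun x => by
      apply Qx_eq <;> rw [Rm_norm, sph_norm, mul_one]
      exacts [hz2.1, hz2.2]
    simp only [this]
    refine int_Rm hmean fun h => ?_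
    rw [h] at hz2; norm_num at hz2
  rw [hr] at hsw
  simp only [hl, integral_const, smul_eq_mul] at hsw
  rcases mul_eq_zero.mp hsw with h | h
  · exact absurd h (by
      rw [Measure.real, ENNReal.toReal_eq_zero_iff]
      push Not
      exact ⟨sph_pos, measure_ne_top _ _⟩)
  · exact h

def rotIso (θ : ℝ) : Vq ≃ₗᵢ[ℝ] Vq :=
  LinearIsometry.toLinearIsometryEquiv
    (⟨⟨⟨rot θ, rot_add θ⟩, fun r x => rot_smul θ r x⟩, rot_norm θ⟩ : Vq →ₗᵢ[ℝ] Vq) rfl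

theorem S_zero (hf : SmoothSph f) (hmean : ∫ x, f x ∂(μH[2] : Measure Sph) = 0)
    (hS : ∀ ζ, ‖ζ‖ = 1 → 0 ≤ ∫ θ in (0:ℝ)..(2 * π), Fc f ζ θ) :
    ∀ ζ, ‖ζ‖ = 1 → ∫ θ in (0:ℝ)..(2 * π), Fc f ζ θ = 0 := by
  obtain ⟨M, hM⟩ := Qx_bdd hf
  set SQ : Vq → ℝ := fun z => ∫ θ in (0:ℝ)..(2 * π), Qx f (qm (rot θ z)) with hSQ
  have hc : Continuous fun p : Vq × ℝ => Qx f (qm (rot p.2 p.1)) := by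
    refine (Qx_cont hf).comp (qm_smooth.continuous.comp ?_)
    exact Continuous.comp (g := fun x : ℝ × Vq => rot x.1 x.2) (f := fun p : Vq × ℝ => (p.2, p.1))
      rot_cont (by fun_prop)
  have hSc : Continuous SQ :=
    intervalIntegral.continuous_parametric_intervalIntegral_of_continuous' hc 0 (2 * π)
  have hSK : ∀ z ∈ Ka, SQ z = ∫ θ in (0:ℝ)..(2 * π), Fc f (‖z‖⁻¹ • z) θ := fun z hz => by
    refine intervalIntegral.integral_congr fun θ _ => ?_
    have hz2 := Ka_sq hz
    have hz0 : 0 < ‖z‖ := by have := hz.1; linarith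
    have hn : ‖qm (rot θ z)‖ = ‖z‖ ^ 2 := by rw [qm_norm, rot_norm]
    simp only [Fc]
    rw [Qx_eq (by rw [hn]; exact hz2.1) (by rw [hn]; exact hz2.2), rot_smul]
    have : qm (‖z‖⁻¹ • rot θ z) = (‖z‖⁻¹ ^ 2) • qm (rot θ z) := by
      ext i; fin_cases i <;> simp [qm] <;> ring
    rw [this, fext_smul _ _ (by positivity)]
  have hun : ∀ z ∈ Ka, ‖‖z‖⁻¹ • z‖ = 1 := fun z hz => by
    have hz0 : 0 < ‖z‖ := by have := hz.1; linarith
    rw [norm_smul, norm_inv, norm_norm, inv_mul_cancel₀ hz0.ne']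
  have hint : ∫ z in Ka, SQ z = 0 := by
    haveI : IsFiniteMeasure ((volume : Measure ℝ).restrict (Set.uIoc 0 (2 * π))) := by
      unfold Set.uIoc; infer_instance
    have hI : Integrable (fun p : ℝ × Vq => Qx f (qm (rot p.1 p.2)))
        ((volume.restrict (Set.uIoc 0 (2 * π))).prod (volume.restrict Ka)) :=
      Integrable.of_bound (hc.comp continuous_swap).aestronglyMeasurable M
        (Filter.Eventually.of_forall fun p => hM _)
    have := intervalIntegral_integral_swap (f := fun (θ : ℝ) (z : Vq) => Qx f (qm (rot θ z))) hI
    rw [hSQ, ← this]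
    have : ∀ θ : ℝ, ∫ z in Ka, Qx f (qm (rot θ z)) = 0 := fun θ =>
      (Ka_iso (rotIso θ) fun z => Qx f (qm z)).trans (int_Ka hf hmean)
    simp [this]
  have hSI : IntegrableOn SQ Ka := by
    refine Integrable.of_bound hSc.aestronglyMeasurable (M * |2 * π - 0|)
      (Filter.Eventually.of_forall fun z => ?_)
    exact intervalIntegral.norm_integral_le_of_norm_le_const fun θ _ => hM _
  have hae : SQ =ᵐ[volume.restrict Ka] fun _ => 0 := by
    refine (setIntegral_eq_zero_iff_of_nonneg_ae ?_ hSI).mp hint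
    filter_upwards [ae_restrict_mem Ka_open.measurableSet] with z hz
    rw [hSK z hz]
    exact hS _ (hun z hz)
  have heq := Measure.eqOn_open_of_ae_eq hae Ka_open hSc.continuousOn continuousOn_const
  intro ζ h
  have hζ : ζ ∈ Ka := by constructor <;> rw [h] <;> norm_num
  have := heq hζ
  rw [hSK ζ hζ, h] at this
  simpa using this

end

noncomputable section
open scoped ContDiff

variable {f : Sph → ℝ} {bb : ContDiffBump (0:ℝ)} {C t : ℝ}

theorem exists_pos_S (hf : SmoothSph f) (hmean : ∫ x, f x ∂(μH[2] : Measure Sph) = 0)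
    (hS : ¬ ∀ ζ, ‖ζ‖ = 1 → ∫ θ in (0:ℝ)..(2 * π), Fc f ζ θ = 0) :
    ∃ ζ, ‖ζ‖ = 1 ∧ 0 < ∫ θ in (0:ℝ)..(2 * π), Fc f ζ θ := by
  by_contra hcon
  push Not at hcon
  apply hS
  have hn : ∀ ζ, (∫ θ in (0:ℝ)..(2 * π), Fc (fun x => -f x) ζ θ)
      = - ∫ θ in (0:ℝ)..(2 * π), Fc f ζ θ := fun ζ => by
    rw [← intervalIntegral.integral_neg]; rfl
  have hneg : SmoothSph fun x => -f x := ContMDiff.neg hf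
  have := S_zero hneg (by rw [integral_neg, hmean, neg_zero]) (fun ζ h => by
    rw [hn]; have := hcon ζ h; linarith)
  intro ζ h
  have := this ζ h
  rw [hn] at this; linarith

theorem exists_neg_S (hf : SmoothSph f) (hmean : ∫ x, f x ∂(μH[2] : Measure Sph) = 0)
    (hS : ¬ ∀ ζ, ‖ζ‖ = 1 → ∫ θ in (0:ℝ)..(2 * π), Fc f ζ θ = 0) :
    ∃ ζ, ‖ζ‖ = 1 ∧ (∫ θ in (0:ℝ)..(2 * π), Fc f ζ θ) < 0 := by
  by_contra hcon
  push Not at hcon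
  exact hS (S_zero hf hmean hcon)

theorem main_core (X : Ctx f bb C) (hmean : ∫ x, f x ∂(μH[2] : Measure Sph) = 0) :
    ∃ t0 > 0, ∀ t, Sm bb C t → |t| ≤ t0 → (∀ x, 0 < 1 + t * f x) →
      systole (confMetric fun x => (1 + t * f x) ^ 2) ≤ 2 * π := by
  by_cases hS : ∀ ζ, ‖ζ‖ = 1 → ∫ θ in (0:ℝ)..(2 * π), Fc f ζ θ = 0
  · obtain ⟨ζ, h, h0⟩ := exists_zeta0 X.hf
    by_cases hne : ∃ θ, phi f ζ θ ≠ 0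
    · obtain ⟨t0, ht0, H⟩ := case2' X h (hS ζ h) (phi_cos_zero X.hf hS h) (phi_sin_zero X.hf hS h)
        h0 hne
      exact ⟨t0, ht0, fun t h1 h2 _ => H t h1 h2⟩
    · push Not at hne
      exact ⟨1, one_pos, fun t _ _ hpos => exact_case X.hf h hpos (fun θ => by rw [hne, mul_zero])
        (by rw [hS ζ h, mul_zero])⟩
  · obtain ⟨ζ, h, hp⟩ := exists_pos_S X.hf hmean hS
    obtain ⟨η, h', hp'⟩ := exists_neg_S X.hf hmean hS
    obtain ⟨t1, ht1, H1⟩ := case1 X h hp.ne'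
    obtain ⟨t2, ht2, H2⟩ := case1 X h' hp'.ne
    refine ⟨min t1 t2, lt_min ht1 ht2, fun t hs ht _ => ?_⟩
    rcases lt_or_gt_of_ne hs.t0 with hlt | hgt
    · exact H1 t hs (ht.trans (min_le_left _ _)) (mul_neg_of_neg_of_pos hlt hp)
    · exact H2 t hs (ht.trans (min_le_right _ _)) (mul_neg_of_pos_of_neg hgt hp')

theorem main_thm (f : Sph → ℝ) (hf : SmoothSph f)
    (hmean : ∫ x, f x ∂(μH[2] : Measure Sph) = 0) (a : ℝ) (ha : 0 < a)
    (hdef : ∀ t, |t| < a → ∀ x, 0 < 1 + t * f x) : ∃ α, 0 < α ∧ α < a ∧ ∀ t, |t| < α →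
      systole (confMetric fun x => (1 + t * f x) ^ 2) ≤ 2 * π := by
  obtain ⟨M, hM⟩ : ∃ M, ∀ x : Sph, ‖f x‖ ≤ M := by
    obtain ⟨M, hM⟩ := isCompact_univ.exists_bound_of_continuousOn
      (ContMDiff.continuous hf).continuousOn
    exact ⟨M, fun x => hM x (Set.mem_univ _)⟩
  have hM0 : 0 < 2 * (|M| + 1) := by positivity
  let bb : ContDiffBump (0:ℝ) := ⟨1 / (2 * (2 * (|M| + 1))), 1 / (2 * (|M| + 1)), by positivity, by
    apply one_div_lt_one_div_of_lt hM0; linarith⟩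
  have hb : ∀ x, bb.rOut * |f x| ≤ 1 / 2 := fun x => by
    have h1 : |f x| ≤ |M| + 1 := ((hM x).trans (le_abs_self M)).trans (by linarith)
    change 1 / (2 * (|M| + 1)) * |f x| ≤ 1 / 2
    rw [div_mul_eq_mul_div, one_mul, div_le_iff₀ hM0]; linarith
  obtain ⟨C, hC1, hB, hD⟩ := exists_PB2 hf hb
  obtain ⟨t0, ht0, H⟩ := main_core ⟨hf, hb, hC1, hB, hD⟩ hmean
  have hC : 0 < 10 ^ 4 * C ^ 2 := by positivity
  have hr := bb.rIn_pos
  refine ⟨min (min (a / 2) t0) (min bb.rIn ((1 / (10 ^ 4 * C ^ 2)) ^ 2)), by positivity, ?_, ?_⟩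
  · exact ((min_le_left _ _).trans (min_le_left _ _)).trans_lt (by linarith)
  · intro t ht
    rw [lt_min_iff, lt_min_iff, lt_min_iff] at ht
    obtain ⟨⟨h1, h2⟩, h3, h4⟩ := ht
    have hpos := hdef t (by linarith)
    by_cases h0 : t = 0
    · obtain ⟨ζ, h⟩ : ∃ ζ : Vq, ‖ζ‖ = 1 := ⟨EuclideanSpace.single 0 1, by simp⟩
      exact exact_case hf h hpos (fun θ => by rw [h0, zero_mul]) (by rw [h0, zero_mul])
    · refine H t ⟨h0, ?_, h3.le⟩ h2.le hpos
      have : √|t| ≤ 1 / (10 ^ 4 * C ^ 2) := Real.sqrt_le_iff.mpr ⟨by positivity, h4.le⟩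
      rwa [le_div_iff₀ hC] at this

end

/-- If `f` is a smooth nonzero function of mean zero and `g_t = (1+tf)²·g₀`
is defined for `|t| < a`, then there is `α ∈ (0, a)` with `sys(S², g_t) ≤ 2π` for `|t| < α`. -/
theorem systole_le_two_pi_of_small_t (f : Sph → ℝ) (hf : SmoothSph f) (hf0 : f ≠ 0)
    (hmean : ∫ x, f x ∂(μH[2] : Measure Sph) = 0)
    (a : ℝ) (ha : 0 < a)
    (hdef : ∀ t : ℝ, |t| < a → ∀ x, 0 < 1 + t * f x) :
    ∃ α : ℝ, 0 < α ∧ α < a ∧ ∀ t : ℝ, |t| < α →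
      systole (confMetric fun x => (1 + t * f x) ^ 2) ≤ 2 * π := by
  exact main_thm f hf hmean a ha hdef

end
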